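/- Fix ε > 0 and an integer k ≥ 1. There exists an integer Δ_ε such that for every planar simple graph G with maximum degree Δ(G) ≥ max{Δ_ε, k⁴}, we have λ^l_{k,1}(G) ≤ (3/2 + ε)·Δ(G). -/

import Mathlib

open SimpleGraph

/-- A drawing of a simple graph in the plane: vertices are mapped to distinct points,
edges to arcs (injective continuous curves parametrised on `[0,1]`) joining the images of
their endpoints, whose interiors avoid the vertex points and each other. -/
structure PlaneEmbedding {V : Type*} (G : SimpleGraph V) where
  pos : V → ℝ × ℝ
  inj : Function.Injective pos
  arc : G.edgeSet → ℝ → ℝ × ℝ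
  arc_cont : ∀ e, ContinuousOn (arc e) (Set.Icc 0 1)
  arc_inj : ∀ e, Set.InjOn (arc e) (Set.Icc 0 1)
  arc_ends : ∀ e : G.edgeSet, ∃ u v : V, (e : Sym2 V) = s(u, v) ∧
      arc e 0 = pos u ∧ arc e 1 = pos v
  arc_avoid : ∀ e : G.edgeSet, ∀ t ∈ Set.Ioo (0:ℝ) 1, arc e t ∉ Set.range pos
  arc_disjoint : ∀ e f : G.edgeSet, e ≠ f → ∀ s ∈ Set.Ioo (0:ℝ) 1, ∀ t ∈ Set.Ioo (0:ℝ) 1,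
      arc e s ≠ arc f t

/-- A graph is planar if it admits a drawing in the plane. -/
def SimpleGraph.IsPlanar {V : Type*} (G : SimpleGraph V) : Prop :=
  Nonempty (PlaneEmbedding G)

/-- An `L(p,q)`-labelling: labels of adjacent vertices differ by at least `p`, and labels
of vertices at distance exactly two differ by at least `q`. -/
def SimpleGraph.IsLpqLabelling {V : Type*} (G : SimpleGraph V) (p q : ℕ) (f : V → ℤ) : Prop :=
  (∀ u v, G.Adj u v → (p : ℤ) ≤ |f u - f v|) ∧
  (∀ u v, u ≠ v → ¬ G.Adj u v → (∃ w, G.Adj u w ∧ G.Adj w v) → (q : ℤ) ≤ |f u - f v|)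

/-- The list version `λ^l_{p,q}(G)`: the least `t` such that for every assignment of lists
of `t` integers to the vertices there is an `L(p,q)`-labelling from the lists. -/
noncomputable def SimpleGraph.lambdaListNumber {V : Type*} (G : SimpleGraph V) (p q : ℕ) : ℕ :=
  sInf {t : ℕ | ∀ L : V → Finset ℤ, (∀ v, (L v).card = t) →
    ∃ f : V → ℤ, G.IsLpqLabelling p q f ∧ ∀ v, f v ∈ L v}

/-!
A planar graph has no `K₃₃` minor: in a drawing of `K₃₃`, the increments of the arguments of the
differences between points moving along disjoint edges would cancel, while modulo `2π` they add up
to `π`. Excluding a `K₃₃` minor makes all minors sparse.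

The vertices of a set `X` are labelled by strong induction on `X`. Call a vertex big if it has at
least `D` neighbours in `X`. By sparsity, and since no `K₃₃` is a minor, nearly all vertices of `X`
are good: they have boundedly many conflicts that do not arise from a common big neighbour, and at
most two big neighbours. A good vertex whose big neighbours have together at most `3Δ/2` neighbours
in `X` can be labelled last. If there is no such vertex, then every good vertex has exactly two big
neighbours `a`, `c` and lies in the bundle of the pair `ac`. The graph of these pairs, weighted by
the sizes of the bundles, is a minor of `G`, hence sparse, hence can be cut into parts of bounded
size at the cost of a small proportion of its weight. Averaging over the parts gives a cluster `A`
of boundedly many big vertices no subset of which has many more neighbours outside the core, the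
union of the large bundles inside `A`, than in the bundles leaving the subset within `A`.

The core of such a cluster is labelled last. Discarding the colours excluded by the labels outside
the core leaves for a vertex of the bundle `ac` at least about `(3/2 + ε)Δ` minus the numbers of
labelled neighbours of `a` and of `c`. Dividing the size of the bundle by this number gives a
fractional matching of `A`, which lies in the matching polytope by the condition on the subsets of
`A`. It can therefore be realised by a random matching of `A`, drawn independently for each colour,
a colour being offered only to the bundles of matched pairs. Every vertex is then offered slightly
more colours than its bundle has vertices, so the bundles can be completed greedily one by one.
-/

universe u v

/-! ### Planar graphs have no `K₃₃` minor -/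

section ArgumentIncrement

open Complex

lemma exists_continuous_exp_eq {X : Type*} [TopologicalSpace X] [SimplyConnectedSpace X]
    [LocallyPathConnectedSpace X] {g : X → ℂ} (hg : Continuous g) (hne : ∀ x, g x ≠ 0) :
    ∃ f : X → ℂ, Continuous f ∧ ∀ x, exp (f x) = g x := by
  obtain ⟨x₀⟩ : Nonempty X := inferInstance
  let g' : C(X, {z : ℂ // z ≠ 0}) := ⟨fun x => ⟨g x, hne x⟩, hg.subtype_mk _⟩
  obtain ⟨f, ⟨-, hf⟩, -⟩ := Complex.isCoveringMap_exp.existsUnique_continuousMap_lifts g' x₀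
    (log (g x₀)) (Subtype.ext (exp_log (hne x₀)))
  exact ⟨f, f.continuous, fun x => congrArg Subtype.val (congrFun hf x)⟩

/-- `HasArgIncrement h x`: along the nowhere vanishing curve `h`, the argument increases by the
real number `x` between the times `0` and `1`, counting full turns. -/
def HasArgIncrement (h : ℝ → ℂ) (x : ℝ) : Prop :=
  ∃ F : ℝ → ℂ, Continuous F ∧ (∀ t, exp (F t) = h t) ∧ x = (F 1 - F 0).im

namespace HasArgIncrement

variable {h : ℝ → ℂ} {x y : ℝ}

protected lemma unique (hx : HasArgIncrement h x) (hy : HasArgIncrement h y) : x = y := by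
  obtain ⟨F, hF, hFh, rfl⟩ := hx
  obtain ⟨F', hF', hFh', rfl⟩ := hy
  have hexp : exp (F 0 - F' 0) = 1 := by
    rw [exp_sub, hFh, hFh', div_self]
    exact hFh 0 ▸ exp_ne_zero _
  have heq : F = fun t => F' t + (F 0 - F' 0) :=
    Complex.isCoveringMap_exp.eq_of_comp_eq hF (by fun_prop)
      (funext fun t => Subtype.ext (by simp [exp_add, hexp, hFh, hFh'])) 0 (by simp)
  rw [show F 1 = F' 1 + (F 0 - F' 0) from congrFun heq 1]
  ring_nf

protected lemma neg (hx : HasArgIncrement h x) : HasArgIncrement (fun t => -h t) x := by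
  obtain ⟨F, hF, hFh, rfl⟩ := hx
  exact ⟨fun t => F t + Real.pi * I, by fun_prop, fun t => by simp [exp_add, hFh], by simp⟩

lemma coe_angle_eq (hx : HasArgIncrement h x) :
    (x : Real.Angle) = arg (h 1) - arg (h 0) := by
  obtain ⟨F, -, hFh, rfl⟩ := hx
  rw [← hFh, ← hFh, arg_exp, arg_exp, Real.Angle.coe_toIocMod, Real.Angle.coe_toIocMod, sub_im,
    Real.Angle.coe_sub]

lemma exists_of_ne_zero (hc : Continuous h) (hne : ∀ t, h t ≠ 0) : ∃ x, HasArgIncrement h x :=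
  let ⟨F, hF, hFh⟩ := exists_continuous_exp_eq hc hne
  ⟨_, F, hF, hFh, rfl⟩

/-- The argument of `γ s - γ' t` has total increment zero around the boundary of the unit
square. -/
lemma add_eq_add_of_disjoint {γ γ' : ℝ → ℂ} (hγ : Continuous γ) (hγ' : Continuous γ')
    (hne : ∀ s t, γ s ≠ γ' t) {a b c d : ℝ} (ha : HasArgIncrement (fun s => γ s - γ' 0) a)
    (hb : HasArgIncrement (fun t => γ' t - γ 1) b) (hc : HasArgIncrement (fun s => γ s - γ' 1) c)
    (hd : HasArgIncrement (fun t => γ' t - γ 0) d) : a + b = c + d := by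
  obtain ⟨f, hf, hexp⟩ := exists_continuous_exp_eq (X := ℝ × ℝ) (g := fun z => γ z.1 - γ' z.2)
    (by fun_prop) fun z => sub_ne_zero.2 (hne z.1 z.2)
  rw [ha.unique ⟨fun s => f (s, 0), by fun_prop, fun s => hexp (s, 0), rfl⟩,
    hc.unique ⟨fun s => f (s, 1), by fun_prop, fun s => hexp (s, 1), rfl⟩,
    hb.neg.unique ⟨fun t => f (1, t), by fun_prop, fun t => by simp [hexp], rfl⟩,
    hd.neg.unique ⟨fun t => f (0, t), by fun_prop, fun t => by simp [hexp], rfl⟩]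
  simp only [sub_im]
  ring

end HasArgIncrement

lemma sum_increments_K33_eq_zero {A B : Fin 3 → Fin 3 → Fin 3 → ℝ}
    (square : ∀ (i i' j j' : Fin 3) (_ : i ≠ i' := by decide) (_ : j ≠ j' := by decide),
      A i i' j + B i' j' j = B i j j' + A i' i j') :
    ∑ j, (A 0 1 j - A 1 0 j + (A 0 2 j - A 2 0 j) + (A 1 2 j - A 2 1 j)) +
      ∑ j, (B 2 j (j + 1) - B 0 j (j + 1) + (B 2 j (j + 2) - B 0 j (j + 2))) = 0 := by
  simp only [Fin.sum_univ_three, Fin.isValue, Fin.reduceAdd]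
  linear_combination (square 0 1 0 1 + square 0 1 1 0 + square 0 1 0 2 + square 0 1 2 0 +
    square 0 1 1 2 + square 0 1 2 1 + square 0 2 0 1 + square 0 2 1 0 + square 0 2 0 2 +
    square 0 2 2 0 + square 0 2 1 2 + square 0 2 2 1 + square 1 2 0 1 + square 1 2 1 0 +
    square 1 2 0 2 + square 1 2 2 0 + square 1 2 1 2 + square 1 2 2 1) / 2

/-- Modulo `2π`, the terms of `sum_increments_K33_eq_zero` cancel except for nine copies of `π`,
one from each of the relations `arg (p i' - p i) = arg (p i - p i') + π`. -/
lemma sum_increments_K33_ne_zero {A B : Fin 3 → Fin 3 → Fin 3 → ℝ} {p q : Fin 3 → ℂ}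
    (hp : p.Injective) (hpq : ∀ i j, q j ≠ p i)
    (hA : ∀ i i' j, i ≠ i' → (A i i' j : Real.Angle) = arg (q j - p i') - arg (p i - p i'))
    (hB : ∀ i j j', j ≠ j' → (B i j j' : Real.Angle) = arg (q j - q j') - arg (p i - q j')) :
    ∑ j, (A 0 1 j - A 1 0 j + (A 0 2 j - A 2 0 j) + (A 1 2 j - A 2 1 j)) +
      ∑ j, (B 2 j (j + 1) - B 0 j (j + 1) + (B 2 j (j + 2) - B 0 j (j + 2))) ≠ 0 := by
  intro hsum
  have hA' : ∀ (i i' j : Fin 3) (_ : i ≠ i' := by decide), (A i i' j - A i' i j : Real.Angle) =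
      arg (q j - p i') - arg (q j - p i) + Real.pi := by
    intro i i' j hi
    rw [hA i i' j hi, hA i' i j hi.symm, ← neg_sub (p i) (p i'),
      arg_neg_coe_angle (sub_ne_zero.2 (hp.ne hi))]
    abel
  have hB' : ∀ (j j' : Fin 3) (_ : j ≠ j' := by decide), (B 2 j j' - B 0 j j' : Real.Angle) =
      arg (q j' - p 0) - arg (q j' - p 2) := by
    intro j j' hj
    have hneg : ∀ i, (arg (p i - q j') : Real.Angle) = arg (q j' - p i) + Real.pi := fun i => by
      rw [← neg_sub, arg_neg_coe_angle (sub_ne_zero.2 (hpq i j'))]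
    rw [hB 2 j j' hj, hB 0 j j' hj, hneg, hneg]
    abel
  have hangle := congrArg ((↑) : ℝ → Real.Angle) hsum
  simp only [Fin.sum_univ_three, Fin.isValue, Fin.reduceAdd, Real.Angle.coe_add,
    Real.Angle.coe_sub, Real.Angle.coe_zero, hA' 0 1, hA' 0 2, hA' 1 2, hB' 0 1, hB' 0 2, hB' 1 2,
    hB' 1 0, hB' 2 0, hB' 2 1] at hangle
  have hpi : (Real.pi : Real.Angle) + 4 • (2 : ℕ) • (Real.pi : Real.Angle) = 0 := by
    rw [← hangle]
    abel
  rw [Real.Angle.two_nsmul_coe_pi, nsmul_zero, add_zero] at hpi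
  exact Real.Angle.pi_ne_zero hpi

theorem not_disjoint_paths_K33 {γ : Fin 3 → Fin 3 → ℝ → ℂ} {p q : Fin 3 → ℂ}
    (hγ : ∀ i j, Continuous (γ i j)) (h0 : ∀ i j, γ i j 0 = p i) (h1 : ∀ i j, γ i j 1 = q j) :
    ¬ ∀ i i' j j', i ≠ i' → j ≠ j' → ∀ s t, γ i j s ≠ γ i' j' t := by
  intro hdisj
  have succ_ne : ∀ i : Fin 3, i ≠ i + 1 := by decide
  have hp : ∀ i i' j, i ≠ i' → ∃ x, HasArgIncrement (fun t => γ i j t - p i') x :=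
    fun i i' j hi => HasArgIncrement.exists_of_ne_zero ((hγ i j).sub continuous_const)
      fun t => sub_ne_zero.2 <| h0 i' (j + 1) ▸ hdisj i i' j (j + 1) hi (succ_ne j) t 0
  have hq : ∀ i j j', j ≠ j' → ∃ x, HasArgIncrement (fun t => γ i j t - q j') x :=
    fun i j j' hj => HasArgIncrement.exists_of_ne_zero ((hγ i j).sub continuous_const)
      fun t => sub_ne_zero.2 <| h1 (i + 1) j' ▸ hdisj i (i + 1) j j' (succ_ne i) hj t 1
  choose! A hA using hp
  choose! B hB using hq
  refine sum_increments_K33_ne_zero (A := A) (B := B) (p := p) (q := q) ?_ ?_ ?_ ?_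
    (sum_increments_K33_eq_zero fun i i' j j' hi hj => ?_)
  · refine fun i i' hpp => by_contra fun hi => hdisj i i' 0 1 hi (succ_ne 0) 0 0 ?_
    rw [h0, h0, hpp]
  · intro i j
    rw [← h1 (i + 1) j, ← h0 i (j + 1)]
    exact hdisj (i + 1) i j (j + 1) (succ_ne i).symm (succ_ne j) 1 0
  · intro i i' j hi
    rw [(hA i i' j hi).coe_angle_eq, h0, h1]
  · intro i j j' hj
    rw [(hB i j j' hj).coe_angle_eq, h0, h1]
  · exact HasArgIncrement.add_eq_add_of_disjoint (hγ i j) (hγ i' j') (hdisj i i' j j' hi hj)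
      (h0 i' j' ▸ hA i i' j hi) (h1 i j ▸ hB i' j' j hj.symm)
      (h1 i' j' ▸ hB i j j' hj) (h0 i j ▸ hA i' i j' hi.symm)

end ArgumentIncrement

section Minors

/-- `IsMinor Q G`: the graph `Q` is a minor of `G`, witnessed by a model of `Q` in `G`, i.e. by
pairwise disjoint connected branch sets. -/
def IsMinor {I V : Type*} (Q : SimpleGraph I) (G : SimpleGraph V) : Prop :=
  ∃ β : I → Set V, (∀ i, (G.induce (β i)).Connected) ∧ (∀ i j, i ≠ j → Disjoint (β i) (β j)) ∧
    ∀ i j, Q.Adj i j → ∃ u ∈ β i, ∃ v ∈ β j, G.Adj u v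

variable {I J V : Type*} {Q : SimpleGraph I} {H : SimpleGraph J} {G : SimpleGraph V}

lemma connected_induce_singleton (G : SimpleGraph V) (v : V) : (G.induce {v}).Connected :=
  .of_subsingleton

lemma connected_induce_iUnion {α : J → Set V} (hH : H.Connected)
    (hα : ∀ j, (G.induce (α j)).Connected)
    (hadj : ∀ j j', H.Adj j j' → ∃ u ∈ α j, ∃ v ∈ α j', G.Adj u v) :
    (G.induce (⋃ j, α j)).Connected := by
  have hsub : ∀ j, α j ⊆ ⋃ j, α j := Set.subset_iUnion α
  have hreach : ∀ j, ∀ (u v : α j), (G.induce (⋃ j, α j)).Reachable ⟨u, hsub j u.2⟩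
      ⟨v, hsub j v.2⟩ := fun j u v => ((hα j).preconnected u v).map (induceHomOfLE G (hsub j)).toHom
  have hpath : ∀ j j', H.Reachable j j' → ∀ (u : α j) (v : α j'),
      (G.induce (⋃ j, α j)).Reachable ⟨u, hsub j u.2⟩ ⟨v, hsub j' v.2⟩ := by
    intro j j' hjj'
    rw [reachable_iff_reflTransGen] at hjj'
    induction hjj' with
    | refl => exact hreach j
    | tail _ hbc ih =>
      intro u v
      obtain ⟨y, hy, z, hz, hyz⟩ := hadj _ _ hbc
      have hyz' : (G.induce (⋃ j, α j)).Adj ⟨y, hsub _ hy⟩ ⟨z, hsub _ hz⟩ := hyz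
      exact ((ih u ⟨y, hy⟩).trans hyz'.reachable).trans (hreach _ ⟨z, hz⟩ v)
  obtain ⟨j⟩ := hH.nonempty
  obtain ⟨v⟩ := (hα j).nonempty
  have : Nonempty (⋃ j, α j) := ⟨⟨v, hsub j v.2⟩⟩
  refine ⟨fun ⟨u, hu⟩ ⟨v, hv⟩ => ?_⟩
  obtain ⟨j, hu⟩ := Set.mem_iUnion.1 hu
  obtain ⟨j', hv⟩ := Set.mem_iUnion.1 hv
  exact hpath j j' (hH.preconnected j j') ⟨u, hu⟩ ⟨v, hv⟩

namespace IsMinor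

protected lemma trans (h₁ : IsMinor Q H) (h₂ : IsMinor H G) : IsMinor Q G := by
  obtain ⟨β, hβ, hβd, hβa⟩ := h₁
  obtain ⟨α, hα, hαd, hαa⟩ := h₂
  refine ⟨fun i => ⋃ j : β i, α j, fun i => connected_induce_iUnion (hβ i) (fun j => hα j)
    (fun j j' => hαa j j'), fun i i' hi => ?_, fun i i' hi => ?_⟩
  · simp only [Set.disjoint_iUnion_left, Set.disjoint_iUnion_right]
    exact fun j' j => hαd _ _ ((hβd i i' hi).ne_of_mem j.2 j'.2)
  · obtain ⟨j, hj, j', hj', hadj⟩ := hβa i i' hi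
    obtain ⟨u, hu, v, hv, huv⟩ := hαa j j' hadj
    exact ⟨u, Set.mem_iUnion.2 ⟨⟨j, hj⟩, hu⟩, v, Set.mem_iUnion.2 ⟨⟨j', hj'⟩, hv⟩, huv⟩

lemma of_isContained (h : Q.IsContained G) : IsMinor Q G := by
  obtain ⟨f⟩ := h
  refine ⟨fun i => {f i}, fun i => connected_induce_singleton G _, fun i j hij => ?_,
    fun i j hij => ⟨_, rfl, _, rfl, f.toHom.map_adj hij⟩⟩
  simpa using f.injective.ne hij

lemma map_of_connected {r : V → J} (hr : ∀ j, (G.induce (r ⁻¹' {j})).Connected) :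
    IsMinor (G.map r) G := by
  refine ⟨fun j => r ⁻¹' {j}, hr, fun j j' hjj' => ?_, fun j j' hadj => ?_⟩
  · exact (Set.disjoint_singleton.2 hjj').preimage r
  · obtain ⟨-, u, v, huv, hu, hv⟩ := (map_adj' ..).1 hadj
    exact ⟨u, hu, v, hv, huv⟩

end IsMinor

end Minors

section PlanarMinors

variable {V : Type*} {G : SimpleGraph V}

namespace PlaneEmbedding

/-- The part of a plane drawing spanned by a vertex set `S`: the points of `S` and the interiors of
the edges with both endpoints in `S`. -/
def region (E : PlaneEmbedding G) (S : Set V) : Set (ℝ × ℝ) :=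
  {z | (∃ u ∈ S, z = E.pos u) ∨
    ∃ e : G.edgeSet, (∀ u ∈ (e : Sym2 V), u ∈ S) ∧ ∃ t ∈ Set.Ioo (0 : ℝ) 1, z = E.arc e t}

lemma disjoint_region (E : PlaneEmbedding G) {S T : Set V} (h : Disjoint S T) :
    Disjoint (E.region S) (E.region T) := by
  rw [Set.disjoint_left] at h ⊢
  rintro z (⟨u, hu, rfl⟩ | ⟨e, he, t, ht, rfl⟩) (⟨v, hv, hz⟩ | ⟨f, hf, s, hs, hz⟩)
  · exact h hu (E.inj hz ▸ hv)
  · exact E.arc_avoid f s hs ⟨u, hz⟩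
  · exact E.arc_avoid e t ht ⟨v, hz.symm⟩
  · refine E.arc_disjoint e f (fun hef => ?_) t ht s hs hz
    have hu := (e : Sym2 V).out_fst_mem
    exact h (he _ hu) (hf _ (hef ▸ hu))

lemma joinedIn_of_adj (E : PlaneEmbedding G) {S : Set V} {u v : V} (hu : u ∈ S) (hv : v ∈ S)
    (huv : G.Adj u v) : JoinedIn (E.region S) (E.pos u) (E.pos v) := by
  obtain ⟨a, b, hab, h0, h1⟩ := E.arc_ends ⟨s(u, v), huv⟩
  have hS : ∀ x ∈ s(u, v), x ∈ S := by simp [hu, hv]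
  change s(u, v) = s(a, b) at hab
  have ha : a ∈ S := hS a (hab ▸ Sym2.mem_mk_left a b)
  have hb : b ∈ S := hS b (hab ▸ Sym2.mem_mk_right a b)
  have hjoin : JoinedIn (E.region S) (E.pos a) (E.pos b) := by
    refine JoinedIn.ofLine (E.arc_cont _) h0 h1 ?_
    rintro z ⟨t, ht, rfl⟩
    rcases ht.1.eq_or_lt with rfl | h_pos
    · exact Or.inl ⟨a, ha, h0⟩
    · rcases ht.2.eq_or_lt with rfl | h_lt
      · exact Or.inl ⟨b, hb, h1⟩
      · exact Or.inr ⟨_, hS, t, ⟨h_pos, h_lt⟩, rfl⟩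
  rcases Sym2.eq_iff.1 hab with ⟨rfl, rfl⟩ | ⟨rfl, rfl⟩
  · exact hjoin
  · exact hjoin.symm

lemma joinedIn_of_connected (E : PlaneEmbedding G) {S : Set V} (hS : (G.induce S).Connected)
    (u v : S) : JoinedIn (E.region S) (E.pos u) (E.pos v) := by
  have huv := hS.preconnected u v
  rw [reachable_iff_reflTransGen] at huv
  induction huv with
  | refl => exact JoinedIn.refl (Or.inl ⟨u, u.2, rfl⟩)
  | @tail b c _ hbc ih => exact ih.trans (E.joinedIn_of_adj b.2 c.2 hbc)

end PlaneEmbedding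

theorem not_isMinor_K33_of_isPlanar (hG : G.IsPlanar) :
    ¬ IsMinor (completeBipartiteGraph (Fin 3) (Fin 3)) G := by
  obtain ⟨E⟩ := hG
  rintro ⟨β, hβ, hβd, hβa⟩
  let x (i : Fin 3 ⊕ Fin 3) : β i := (hβ i).nonempty.some
  let R (i j : Fin 3) : Set (ℝ × ℝ) := E.region (β (.inl i) ∪ β (.inr j))
  have hR : ∀ i i' j j', i ≠ i' → j ≠ j' → Disjoint (R i j) (R i' j') := by
    intro i i' j j' hi hj
    refine E.disjoint_region ?_
    simp only [Set.disjoint_union_left, Set.disjoint_union_right]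
    exact ⟨⟨hβd _ _ (by simpa), hβd _ _ (by simp)⟩, hβd _ _ (by simp), hβd _ _ (by simpa)⟩
  have hjoin : ∀ i j, JoinedIn (R i j) (E.pos (x (.inl i))) (E.pos (x (.inr j))) := by
    intro i j
    obtain ⟨u, hu, v, hv, huv⟩ := hβa (.inl i) (.inr j) (by simp)
    exact E.joinedIn_of_connected (connected_induce_union (hβ _).preconnected (hβ _).preconnected
      hu hv huv) ⟨_, .inl (x _).2⟩ ⟨_, .inr (x _).2⟩
  let φ := Complex.equivRealProdCLM.symm
  refine not_disjoint_paths_K33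
    (γ := fun i j t => φ ((hjoin i j).somePath.extend t))
    (fun i j => φ.continuous.comp (hjoin i j).somePath.continuous_extend)
    (p := fun i => φ (E.pos (x (.inl i)))) (q := fun j => φ (E.pos (x (.inr j))))
    (by simp) (by simp) ?_
  intro i i' j j' hi hj s t hst
  exact (hR i i' j j' hi hj).ne_of_mem ((hjoin i j).somePath_mem _)
    ((hjoin i' j').somePath_mem _) (φ.injective hst)

end PlanarMinors

/-! ### Graphs without a `K₃₃` minor have sparse minors -/

section CliqueMinors

variable {I : Type u} {J V : Type*} {Q : SimpleGraph I} {G : SimpleGraph V}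

lemma sum_ncard_neighborSet [Fintype I] (Q : SimpleGraph I) :
    ∑ i, (Q.neighborSet i).ncard = 2 * Q.edgeSet.ncard := by
  classical
  rw [Set.ncard_eq_toFinset_card', ← edgeFinset, ← Q.sum_degrees_eq_twice_card_edges]
  exact Finset.sum_congr rfl fun i _ => Set.ncard_eq_toFinset_card' _

lemma mul_card_le_two_mul_ncard_edgeSet [Finite I] {d : ℕ}
    (hQ : ∀ i, d ≤ (Q.neighborSet i).ncard) : d * Nat.card I ≤ 2 * Q.edgeSet.ncard := by
  have := Fintype.ofFinite I
  rw [← sum_ncard_neighborSet, Nat.card_eq_fintype_card, mul_comm, ← smul_eq_mul]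
  exact Finset.card_nsmul_le_sum _ _ _ fun i _ => hQ i

lemma eq_or_eq_of_contraction {r : I → J} {i j : I} (hij : i ≠ j) (hr : Set.InjOn r {j}ᶜ)
    (hrj : r j = r i) {x y : I} (hxy : r x = r y) : x = y ∨ x = j ∧ y = i ∨ x = i ∧ y = j := by
  have h : ∀ x y, x ≠ j → y ≠ j → r x = r y → x = y := fun x y hx hy => hr hx hy
  have hx := h x i
  have hy := h y i
  by_cases x = j <;> by_cases y = j <;> grind

lemma IsMinor.map_contraction {r : I → J} {i j : I} (hij : Q.Adj i j) (hr : Set.InjOn r {j}ᶜ)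
    (hrj : r j = r i) (hsurj : Function.Surjective r) : IsMinor (Q.map r) Q := by
  have hfib : ∀ x, r x ≠ r i → r ⁻¹' {r x} = {x} := fun x hx => by
    ext y
    have := @eq_or_eq_of_contraction _ _ _ _ _ hij.ne hr hrj y x
    grind
  have hfib' : r ⁻¹' {r i} = {i, j} := by
    ext y
    have := @eq_or_eq_of_contraction _ _ _ _ _ hij.ne hr hrj y i
    grind
  refine .map_of_connected fun a => ?_
  obtain ⟨x, rfl⟩ := hsurj a
  by_cases hx : r x = r i
  · rw [hx, hfib']
    exact induce_pair_connected_of_adj hij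
  · rw [hfib x hx]
    exact connected_induce_singleton Q x

/-- Contracting an edge `ij` destroys that edge and identifies the edges from `i` and from `j` to
each common neighbour; nothing else is lost. -/
lemma ncard_edgeSet_le_map_contraction [Finite I] [Finite J] {r : I → J} {i j : I}
    (hij : i ≠ j) (hr : Set.InjOn r {j}ᶜ) (hrj : r j = r i) :
    Q.edgeSet.ncard ≤ (Q.map r).edgeSet.ncard + ((Q.commonNeighbors i j).ncard + 1) := by
  have hr' := @eq_or_eq_of_contraction _ _ _ _ _ hij hr hrj
  let lost : Set (Sym2 I) := insert s(i, j) ((s(j, ·)) '' Q.commonNeighbors i j)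
  have hlost : lost.ncard ≤ (Q.commonNeighbors i j).ncard + 1 :=
    (Set.ncard_insert_le _ _).trans (by grw [Set.ncard_image_le])
  have hnot : ∀ a b, Q.Adj a b → s(a, b) ∉ lost →
      ¬ (a = i ∧ b = j) ∧ (a = j → b ≠ i ∧ ¬ Q.Adj i b) ∧ (b = j → ¬ Q.Adj i a) := by
    intro a b hab h
    simp only [lost, Set.mem_insert_iff, Set.mem_image, mem_commonNeighbors, not_or, not_exists,
      not_and, Sym2.eq_iff, and_imp] at h
    refine ⟨fun hi => h.1.1 hi.1 hi.2, ?_, ?_⟩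
    · rintro rfl
      exact ⟨fun hb => h.1.2 rfl hb, fun hib => (h.2 b hib hab).1 rfl rfl⟩
    · rintro rfl hia
      exact (h.2 a hia hab.symm).2 rfl rfl
  have hkept : (Q.edgeSet \ lost).ncard ≤ (Q.map r).edgeSet.ncard := by
    refine Set.ncard_le_ncard_of_injOn (Sym2.map r) ?_ ?_
    · refine Sym2.ind fun a b ⟨hab, hkept⟩ => ?_
      refine (map_adj' ..).2 ⟨fun h => ?_, a, b, hab, rfl, rfl⟩
      have := hr' h
      have := hnot a b hab hkept
      have := Q.ne_of_adj hab
      grind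
    · refine Sym2.ind fun a b ⟨hab, hkept⟩ => Sym2.ind fun a' b' ⟨hab', hkept'⟩ heq => ?_
      have := hnot a b hab hkept
      have := hnot a' b' hab' hkept'
      have := Q.ne_of_adj hab
      have := Q.ne_of_adj hab'
      have : Q.Adj a b ∧ Q.Adj b a ∧ Q.Adj a' b' ∧ Q.Adj b' a' :=
        ⟨hab, Adj.symm hab, hab', Adj.symm hab'⟩
      clear_value lost
      simp only [Sym2.map_mk, Sym2.eq_iff] at heq ⊢
      rcases heq with ⟨h₁, h₂⟩ | ⟨h₁, h₂⟩
      · rcases hr' h₁ with h₁ | h₁ | h₁ <;> rcases hr' h₂ with h₂ | h₂ | h₂ <;> grind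
      · rcases hr' h₁ with h₁ | h₁ | h₁ <;> rcases hr' h₂ with h₂ | h₂ | h₂ <;> grind
  grw [← hlost, ← hkept]
  exact Set.ncard_le_ncard_sdiff_add_ncard _ _

theorem exists_isMinor_le_ncard_commonNeighbors {d : ℕ} [Finite I] [Nonempty I]
    (hQ : d * Nat.card I ≤ Q.edgeSet.ncard) : ∃ (J : Type u) (_ : Finite J) (_ : Nonempty J)
    (H : SimpleGraph J), IsMinor H Q ∧ d * Nat.card J ≤ H.edgeSet.ncard ∧
      ∀ i j, H.Adj i j → d ≤ (H.commonNeighbors i j).ncard := by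
  classical
  induction hn : Nat.card I using Nat.strong_induction_on generalizing I with | _ n ih =>
  by_cases hex : ∃ i j, Q.Adj i j ∧ (Q.commonNeighbors i j).ncard < d
  · obtain ⟨i, j, hij, hlt⟩ := hex
    let r (x : I) : {k // k ≠ j} := if hx : x = j then ⟨i, hij.ne⟩ else ⟨x, hx⟩
    have hrval : ∀ x : {k // k ≠ j}, r x = x := fun x => dif_neg x.2
    have hr : Set.InjOn r {j}ᶜ := fun x hx y hy h => by
      rw [hrval ⟨x, hx⟩, hrval ⟨y, hy⟩] at h
      exact congrArg Subtype.val h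
    have hrj : r j = r i := by rw [hrval ⟨i, hij.ne⟩]; exact dif_pos rfl
    have hcard : Nat.card {k // k ≠ j} + 1 = Nat.card I := by
      have := Fintype.ofFinite I
      have := Fintype.card_subtype_compl (· = j)
      have := Fintype.card_pos (α := I)
      simp_all only [Nat.card_eq_fintype_card, Fintype.card_unique, ne_eq]
      omega
    have hloss := ncard_edgeSet_le_map_contraction (Q := Q) hij.ne hr hrj
    have : Nonempty {k // k ≠ j} := ⟨⟨i, hij.ne⟩⟩
    obtain ⟨J, hJ, hJ', H, hH, hd, hc⟩ := ih _ (by omega) (Q := Q.map r)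
      (by rw [← hcard] at hQ; linarith) rfl
    exact ⟨J, hJ, hJ', H, hH.trans (.map_contraction hij hr hrj fun x => ⟨x, hrval x⟩), hd, hc⟩
  · push Not at hex
    exact ⟨I, inferInstance, inferInstance, Q, .of_isContained (.refl Q), hQ, hex⟩

lemma IsMinor.top_option {v : V} (h : IsMinor (⊤ : SimpleGraph J) (G.induce (G.neighborSet v))) :
    IsMinor (⊤ : SimpleGraph (Option J)) G := by
  obtain ⟨β, hβ, hβd, hβa⟩ := h
  have hv : ∀ i, v ∉ Subtype.val '' β i := by
    rintro i ⟨x, -, hx⟩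
    exact x.2.ne hx.symm
  have hadj : ∀ i, ∃ x ∈ Subtype.val '' β i, G.Adj v x := fun i => by
    obtain ⟨x⟩ := (hβ i).nonempty
    exact ⟨x, ⟨x, x.2, rfl⟩, x.1.2⟩
  refine ⟨fun i => i.elim {v} fun i => Subtype.val '' β i, ?_, ?_, ?_⟩
  · rintro (_ | i)
    · exact connected_induce_singleton G v
    · refine (hβ i).map ⟨fun x => ⟨x.1, x.1, x.2, rfl⟩, fun h => h⟩ ?_
      rintro ⟨_, x, hx, rfl⟩
      exact ⟨⟨x, hx⟩, rfl⟩
  · rintro (_ | i) (_ | j) hij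
    · exact absurd rfl hij
    · exact Set.disjoint_singleton_left.2 (hv j)
    · exact Set.disjoint_singleton_right.2 (hv i)
    · exact (Set.disjoint_image_iff Subtype.val_injective).2
        (hβd i j (by simpa using hij))
  · rintro (_ | i) (_ | j) hij
    · exact absurd rfl hij
    · obtain ⟨x, hx, hvx⟩ := hadj j
      exact ⟨v, rfl, x, hx, hvx⟩
    · obtain ⟨x, hx, hvx⟩ := hadj i
      exact ⟨x, hx, v, rfl, hvx.symm⟩
    · obtain ⟨x, hx, y, hy, hxy⟩ := hβa i j (by simpa using hij)
      exact ⟨x, ⟨x, hx, rfl⟩, y, ⟨y, hy, rfl⟩, hxy⟩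

/-- Contracting edges with few common neighbours preserves density; in the resulting minor the
neighbourhood of any vertex is again dense. -/
theorem exists_isMinor_top (t : ℕ) : ∃ c : ℕ, ∀ (I : Type u) [Finite I] [Nonempty I]
    (Q : SimpleGraph I), c * Nat.card I ≤ Q.edgeSet.ncard →
      IsMinor (⊤ : SimpleGraph (Fin t)) Q := by
  induction t with
  | zero => exact ⟨0, fun I _ _ Q _ => .of_isContained .of_isEmpty⟩
  | succ t ih =>
    obtain ⟨c, hc⟩ := ih
    refine ⟨2 * c + 1, fun I _ _ Q hQ => ?_⟩
    obtain ⟨J, _, _, H, hHQ, hH, hcommon⟩ := exists_isMinor_le_ncard_commonNeighbors hQ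
    have hpos : 0 < H.edgeSet.ncard := (Nat.mul_pos (by omega) Nat.card_pos).trans_le hH
    obtain ⟨e, he⟩ := (Set.ncard_pos).1 hpos
    induction e with | _ v w =>
    have : Nonempty (H.neighborSet v) := ⟨⟨w, he⟩⟩
    have hdeg : ∀ x : H.neighborSet v,
        2 * c + 1 ≤ ((H.induce (H.neighborSet v)).neighborSet x).ncard := fun x => by
      refine (hcommon v x x.2).trans_eq ?_
      rw [← Set.ncard_image_of_injective _ Subtype.val_injective]
      congr 1
      ext y
      simp [mem_commonNeighbors, and_comm]
    have hdense := mul_card_le_two_mul_ncard_edgeSet hdeg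
    have hclique := hc _ (H.induce (H.neighborSet v)) (by linarith)
    exact (IsMinor.of_isContained (Iso.completeGraph (finSuccEquiv t)).isContained).trans
      (hclique.top_option.trans hHQ)

/-- All finite minors of `G` have average degree at most `C`. -/
def MinorSparse (C : ℕ) {V : Type u} (G : SimpleGraph V) : Prop :=
  ∀ (I : Type u) [Finite I] (Q : SimpleGraph I), IsMinor Q G →
    2 * Q.edgeSet.ncard ≤ C * Nat.card I

theorem exists_minorSparse_of_not_isMinor_K33 : ∃ C : ℕ, 0 < C ∧
    ∀ (V : Type u) (G : SimpleGraph V),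
      ¬ IsMinor (completeBipartiteGraph (Fin 3) (Fin 3)) G → MinorSparse C G := by
  obtain ⟨c, hc⟩ := exists_isMinor_top 6
  refine ⟨2 * c + 1, Nat.succ_pos _, fun V G hG I _ Q hQ => ?_⟩
  by_contra! hlt
  have : Nonempty I := by
    by_contra hI
    rw [not_nonempty_iff] at hI
    simp [Set.eq_empty_of_isEmpty Q.edgeSet] at hlt
  have hK6 := (hc I Q (by linarith)).trans hQ
  have hK33 : completeBipartiteGraph (Fin 3) (Fin 3) ⊑ completeGraph (Fin 6) :=
    isContained_top_iff.2 ⟨finSumFinEquiv.toEmbedding⟩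
  exact hG ((IsMinor.of_isContained hK33).trans hK6)

end CliqueMinors

/-! ### Good vertices -/

section Degeneracy

open scoped Classical

variable {V I : Type u} {C : ℕ} {G : SimpleGraph V} {Q : SimpleGraph I}

/-- The neighbours of `w` inside `X`. -/
noncomputable def nbrIn {V : Type*} (G : SimpleGraph V) (X : Finset V) (w : V) : Finset V :=
  {x ∈ X | G.Adj w x}

lemma mem_nbrIn {V : Type*} {G : SimpleGraph V} {X : Finset V} {w x : V} :
    x ∈ nbrIn G X w ↔ x ∈ X ∧ G.Adj w x :=
  Finset.mem_filter

namespace MinorSparse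

lemma of_isMinor (hG : MinorSparse C G) (hQ : IsMinor Q G) : MinorSparse C Q :=
  fun J _ R hR => hG J R (hR.trans hQ)

lemma sum_card_nbrIn_self_le (hG : MinorSparse C G) (Y : Finset V) :
    ∑ y ∈ Y, (nbrIn G Y y).card ≤ C * Y.card := by
  have h := hG Y _ (IsMinor.of_isContained ⟨Copy.induce G Y⟩)
  rw [← sum_ncard_neighborSet, Nat.card_eq_fintype_card, Fintype.card_coe] at h
  rw [← Finset.sum_coe_sort]
  refine le_of_eq_of_le (Finset.sum_congr rfl fun y _ => ?_) h
  rw [← Set.ncard_image_of_injective _ Subtype.val_injective, ← Set.ncard_coe_finset]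
  congr 1
  ext x
  simp [mem_nbrIn, and_comm]

lemma exists_mem_card_nbrIn_le (hG : MinorSparse C G) {Y : Finset V} (hY : Y.Nonempty) :
    ∃ v ∈ Y, (nbrIn G Y v).card ≤ C := by
  refine Finset.exists_le_of_sum_le hY ?_
  simpa [mul_comm] using hG.sum_card_nbrIn_self_le Y

lemma exists_rank [Fintype I] (hQ : MinorSparse C Q) : ∃ ρ : I → ℕ, Function.Injective ρ ∧
    ∀ i, ({j | Q.Adj i j ∧ ρ j < ρ i} : Finset I).card ≤ C := by
  suffices h : ∀ Y : Finset I, ∃ ρ : I → ℕ, Set.InjOn ρ Y ∧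
      ∀ i ∈ Y, ({j ∈ nbrIn Q Y i | ρ j < ρ i}).card ≤ C by
    obtain ⟨ρ, hρ, hback⟩ := h Finset.univ
    simp only [nbrIn, Finset.filter_filter] at hback
    exact ⟨ρ, by simpa using hρ, fun i => hback i (Finset.mem_univ i)⟩
  intro Y
  induction Y using Finset.strongInduction with
  | H Y ih =>
    rcases Y.eq_empty_or_nonempty with rfl | hne
    · exact ⟨fun _ => 0, by simp⟩
    obtain ⟨v, hv, hdeg⟩ := hQ.exists_mem_card_nbrIn_le hne
    obtain ⟨ρ, hinj, hback⟩ := ih _ (Finset.erase_ssubset hv)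
    have hlt : ∀ i ∈ Y.erase v, ρ i < (Y.erase v).sup ρ + 1 :=
      fun i hi => Nat.lt_succ_of_le (Finset.le_sup hi)
    generalize (Y.erase v).sup ρ + 1 = n at hlt
    have hval : ∀ i ∈ Y.erase v, Function.update ρ v n i = ρ i := fun i hi =>
      Function.update_of_ne (Finset.ne_of_mem_erase hi) _ _
    have hv_val : Function.update ρ v n v = n := Function.update_self ..
    refine ⟨Function.update ρ v n, fun i hi j hj hij => ?_, fun i hi => ?_⟩
    · by_cases h1 : i = v <;> by_cases h2 : j = v <;> grind [Set.InjOn]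
    · rcases eq_or_ne i v with rfl | hiv
      · exact (Finset.card_filter_le _ _).trans hdeg
      · refine le_trans (Finset.card_le_card fun j hj => ?_)
          (hback i (Finset.mem_erase.2 ⟨hiv, hi⟩))
        rw [Finset.mem_filter, mem_nbrIn] at hj ⊢
        grind

lemma card_cliqueFinset_three_le [Fintype I] (hQ : MinorSparse C Q) :
    (Q.cliqueFinset 3).card ≤ C ^ 2 * Fintype.card I := by
  obtain ⟨ρ, hρ, hback⟩ := hQ.exists_rank
  let back (c : I) : Finset I := {j | Q.Adj c j ∧ ρ j < ρ c}
  have hsub : Q.cliqueFinset 3 ⊆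
      Finset.univ.biUnion fun c => ((back c).powersetCard 2).image (insert c) := by
    intro t ht
    rw [mem_cliqueFinset_iff, isNClique_iff] at ht
    obtain ⟨c, hc, hmax⟩ := t.exists_max_image ρ (Finset.card_pos.1 (by lia))
    simp only [Finset.mem_biUnion, Finset.mem_univ, true_and, Finset.mem_image]
    refine ⟨c, t.erase c, Finset.mem_powersetCard.2 ⟨fun j hj => ?_, ?_⟩, Finset.insert_erase hc⟩
    · obtain ⟨hjc, hj⟩ := Finset.mem_erase.1 hj
      simp only [back, Finset.mem_filter, Finset.mem_univ, true_and]
      exact ⟨ht.1 hc hj hjc.symm, (hmax j hj).lt_of_ne (hρ.ne hjc)⟩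
    · rw [Finset.card_erase_of_mem hc, ht.2]
  have hback2 : ∀ c, (((back c).powersetCard 2).image (insert c)).card ≤ C ^ 2 := fun c =>
    calc (((back c).powersetCard 2).image (insert c)).card
        ≤ (back c).card.choose 2 := Finset.card_image_le.trans (Finset.card_powersetCard ..).le
      _ ≤ (back c).card ^ 2 := Nat.choose_le_pow _ _
      _ ≤ C ^ 2 := Nat.pow_le_pow_left (hback c) 2
  calc (Q.cliqueFinset 3).card ≤ _ := Finset.card_le_card hsub
    _ ≤ _ := Finset.card_biUnion_le_card_mul _ _ _ fun c _ => hback2 c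
    _ = C ^ 2 * Fintype.card I := mul_comm _ _

end MinorSparse

end Degeneracy

section Subdivisions

variable {I V : Type*} {Q : SimpleGraph I} {G : SimpleGraph V} {f : I → V} {w : Sym2 I → V}

/-- `G` contains the graph obtained from `Q` by subdividing every edge once: `f` gives the branch
vertices and `w` the subdividing vertices. -/
structure SubdividesIn (Q : SimpleGraph I) (G : SimpleGraph V) (f : I → V) (w : Sym2 I → V) :
    Prop where
  injective : Function.Injective f
  injOn : Set.InjOn w Q.edgeSet
  notMem_range : ∀ e ∈ Q.edgeSet, w e ∉ Set.range f
  adj : ∀ e ∈ Q.edgeSet, ∀ i ∈ e, G.Adj (w e) (f i)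

lemma connected_induce_of_star {S : Set V} {v : V} (hv : v ∈ S)
    (hS : ∀ x ∈ S, x ≠ v → G.Adj v x) : (G.induce S).Connected := by
  refine connected_iff_exists_forall_reachable _ |>.2 ⟨⟨v, hv⟩, fun ⟨x, hx⟩ => ?_⟩
  rcases eq_or_ne x v with rfl | hxv
  · rfl
  · exact Adj.reachable (G := G.induce S) (hS x hx hxv)

namespace SubdividesIn

/-- Each subdividing vertex is contracted into one end of its edge. -/
lemma isMinor (h : SubdividesIn Q G f w) : IsMinor Q G := by
  refine ⟨fun i => insert (f i) (w '' {e ∈ Q.edgeSet | (Quot.out e).1 = i}), fun i => ?_,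
    fun i j hij => ?_, fun i j hij => ?_⟩
  · refine connected_induce_of_star (Set.mem_insert _ _) ?_
    rintro x (rfl | ⟨e, ⟨he, rfl⟩, rfl⟩) hx
    · exact absurd rfl hx
    · exact (h.adj e he _ (Sym2.out_fst_mem e)).symm
  · rw [Set.disjoint_left]
    rintro x (rfl | ⟨e, ⟨he, rfl⟩, rfl⟩) (hx' | ⟨e', ⟨he', hei'⟩, hx'⟩)
    · exact hij (h.injective hx')
    · exact h.notMem_range e' he' ⟨i, hx'.symm⟩
    · exact h.notMem_range e he ⟨j, hx'.symm⟩
    · exact hij (h.injOn he' he hx' ▸ hei')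
  · have hadj : ∀ k ∈ s(i, j), G.Adj (w s(i, j)) (f k) := h.adj _ hij
    have hmem : w s(i, j) ∈ w '' {e ∈ Q.edgeSet | (Quot.out e).1 = (Quot.out s(i, j)).1} :=
      ⟨_, ⟨hij, rfl⟩, rfl⟩
    rcases Sym2.mem_iff.1 (Sym2.out_fst_mem s(i, j)) with h1 | h1 <;> rw [h1] at hmem
    · exact ⟨_, Or.inr hmem, _, Or.inl rfl, hadj j (Sym2.mem_mk_right i j)⟩
    · exact ⟨_, Or.inl rfl, _, Or.inr hmem, (hadj i (Sym2.mem_mk_left i j)).symm⟩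

lemma sup_edge (h : SubdividesIn Q G f w) {i j : I} {x : V} (hQ : ¬ Q.Adj i j)
    (hx : x ∉ Set.range f) (hxw : x ∉ w '' Q.edgeSet) (hi : G.Adj x (f i)) (hj : G.Adj x (f j)) :
    ∃ w' : Sym2 I → V, SubdividesIn (Q ⊔ edge i j) G f w' := by
  classical
  have hval : ∀ e ∈ Q.edgeSet, Function.update w s(i, j) x e = w e :=
    fun e he => Function.update_of_ne (by rintro rfl; exact hQ he) _ _
  have hself : Function.update w s(i, j) x s(i, j) = x := Function.update_self ..
  have hmem : ∀ e ∈ (Q ⊔ edge i j).edgeSet, e ∈ Q.edgeSet ∨ e = s(i, j) := by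
    intro e he
    rw [edgeSet_sup] at he
    exact he.imp_right fun he => edgeSet_edge_subset he
  refine ⟨Function.update w s(i, j) x, h.injective, fun e he e' he' hee' => ?_, fun e he => ?_,
    fun e he k hk => ?_⟩
  · have hne : ∀ e ∈ Q.edgeSet, w e ≠ x := fun e he hex => hxw ⟨e, he, hex⟩
    rcases hmem e he with he | rfl <;> rcases hmem e' he' with he' | rfl
    · exact h.injOn he he' (by rwa [hval e he, hval e' he'] at hee')
    · exact absurd (by rwa [hval e he, hself] at hee') (hne e he)
    · exact absurd (by rwa [hval e' he', hself, eq_comm] at hee') (hne e' he')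
    · rfl
  · rcases hmem e he with he | rfl
    · rw [hval e he]; exact h.notMem_range e he
    · rwa [hself]
  · rcases hmem e he with he | rfl
    · rw [hval e he]; exact h.adj e he k hk
    · rw [hself]
      rcases Sym2.mem_iff.1 hk with rfl | rfl <;> assumption

end SubdividesIn

lemma exists_maximal_subdividesIn [Finite I] (G : SimpleGraph V) {f : I → V}
    (hf : Function.Injective f) : ∃ (Q : SimpleGraph I) (w : Sym2 I → V), SubdividesIn Q G f w ∧
      ∀ x, x ∉ Set.range f → x ∉ w '' Q.edgeSet → ∀ i j, i ≠ j → G.Adj x (f i) → G.Adj x (f j) →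
        Q.Adj i j := by
  have hbot : SubdividesIn ⊥ G f fun e => f (Quot.out e).1 := ⟨hf, by simp, by simp, by simp⟩
  obtain ⟨Q, ⟨w, hw⟩, hmax⟩ :=
    (Set.toFinite {Q : SimpleGraph I | ∃ w, SubdividesIn Q G f w}).exists_maximal ⟨⊥, _, hbot⟩
  refine ⟨Q, w, hw, fun x hx hxw i j hij hi hj => ?_⟩
  by_contra hQ
  have hle := hmax (hw.sup_edge hQ hx hxw hi hj) le_sup_left
  exact hQ (hle (Or.inr ((edge_adj ..).2 ⟨Or.inl ⟨rfl, rfl⟩, hij⟩)))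

end Subdivisions

section ThreeNeighbours

open scoped Classical

variable {V I : Type u} {C : ℕ} {G : SimpleGraph V}

lemma card_common_neighbours_le_two [Fintype V]
    (hK : ¬ IsMinor (completeBipartiteGraph (Fin 3) (Fin 3)) G) {t : Finset V} (ht : t.card = 3) :
    ({x | ∀ a ∈ t, G.Adj x a} : Finset V).card ≤ 2 := by
  by_contra! hlt
  obtain ⟨s, hs, hs3⟩ := Finset.exists_subset_card_eq (Nat.succ_le_of_lt hlt)
  refine hK (IsMinor.of_isContained (completeBipartiteGraph_isContained_iff.2
    ⟨s, t, by simpa using hs3, by simpa using ht, fun x hx a ha => ?_⟩))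
  exact (Finset.mem_filter.1 (hs hx)).2 a ha

namespace MinorSparse

/-- Take a maximal graph `Q` subdivided in `G` with branch vertices `f i`. A remaining vertex with
three neighbours completes a triangle of `Q`, at most two of them to the same triangle. -/
lemma card_three_branch_neighbours_le [Fintype I] [Fintype V] (hG : MinorSparse C G)
    (hK : ¬ IsMinor (completeBipartiteGraph (Fin 3) (Fin 3)) G) {f : I → V}
    (hf : Function.Injective f) :
    ({x | x ∉ Set.range f ∧ 3 ≤ ({i | G.Adj x (f i)} : Finset I).card} : Finset V).card ≤
      (C + 2 * C ^ 2) * Fintype.card I := by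
  obtain ⟨Q, w, hw, hmax⟩ := exists_maximal_subdividesIn G hf
  set W : Finset V := {x | x ∉ Set.range f ∧ 3 ≤ ({i | G.Adj x (f i)} : Finset I).card} with hW
  set S : Finset V := Q.edgeFinset.image w with hS
  have hS_card : S.card ≤ C * Fintype.card I := by
    have h := hG I Q hw.isMinor
    rw [Nat.card_eq_fintype_card, ← coe_edgeFinset, Set.ncard_coe_finset] at h
    exact Finset.card_image_le.trans (by lia)
  have htri : ∀ x ∈ W \ S, ∃ t ∈ Q.cliqueFinset 3, ∀ i ∈ t, G.Adj x (f i) := by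
    intro x hx
    obtain ⟨⟨hxf, hx3⟩, hxS⟩ : (x ∉ Set.range f ∧ 3 ≤ _) ∧ x ∉ S := by
      simpa only [hW, Finset.mem_sdiff, Finset.mem_filter, Finset.mem_univ, true_and] using hx
    obtain ⟨t, htx, ht3⟩ := Finset.exists_subset_card_eq hx3
    have ht : ∀ i ∈ t, G.Adj x (f i) := fun i hi => (Finset.mem_filter.1 (htx hi)).2
    refine ⟨t, (mem_cliqueFinset_iff ..).2 ⟨fun i hi j hj hij => ?_, ht3⟩, ht⟩
    exact hmax x hxf (by simpa [hS] using hxS) i j hij (ht i hi) (ht j hj)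
  choose! t ht hadj using htri
  have hfib : ∀ s ∈ Q.cliqueFinset 3, ({x ∈ W \ S | t x = s}).card ≤ 2 := by
    intro s hs
    have hs3 : (s.map ⟨f, hf⟩).card = 3 := by
      rw [Finset.card_map]; exact ((mem_cliqueFinset_iff ..).1 hs).card_eq
    refine (Finset.card_le_card fun x hx => ?_).trans (card_common_neighbours_le_two hK hs3)
    obtain ⟨hxW, rfl⟩ := Finset.mem_filter.1 hx
    simpa using hadj x hxW
  calc W.card ≤ S.card + (W \ S).card := by
        rw [add_comm]; exact Nat.sub_le_iff_le_add.1 (Finset.le_card_sdiff S W)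
    _ ≤ C * Fintype.card I + 2 * (C ^ 2 * Fintype.card I) :=
        add_le_add hS_card <| (Finset.card_le_mul_card_image_of_maps_to ht 2 hfib).trans <|
          Nat.mul_le_mul_left 2 (hG.of_isMinor hw.isMinor).card_cliqueFinset_three_le
    _ = (C + 2 * C ^ 2) * Fintype.card I := by ring

lemma card_three_neighbours_le [Fintype V] (hG : MinorSparse C G)
    (hK : ¬ IsMinor (completeBipartiteGraph (Fin 3) (Fin 3)) G) (Y : Finset V) :
    ({x | x ∉ Y ∧ 3 ≤ (nbrIn G Y x).card} : Finset V).card ≤ (C + 2 * C ^ 2) * Y.card := by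
  have h := hG.card_three_branch_neighbours_le hK (I := Y) Subtype.val_injective
  rw [Fintype.card_coe] at h
  refine le_of_eq_of_le (congrArg _ (Finset.filter_congr fun x _ => ?_)) h
  have hcard : (nbrIn G Y x).card = ({i | G.Adj x i} : Finset Y).card := by
    rw [← Finset.card_map (Function.Embedding.subtype _)]
    congr 1
    ext y
    simp [mem_nbrIn, and_comm]
  simp [hcard]

end MinorSparse

end ThreeNeighbours

section GoodVertices

open scoped Classical

variable {V : Type u} {G : SimpleGraph V} {C D : ℕ}

/-- The vertices `y` of `X` such that `{x, y}` is exactly the neighbourhood in `X` of some vertex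
outside `X`. -/
noncomputable def exactPartners (G : SimpleGraph V) (X : Finset V) (x : V) : Finset V :=
  {y ∈ X | x ≠ y ∧ ∃ w, w ∉ X ∧ nbrIn G X w = {x, y}}

lemma mem_exactPartners {X : Finset V} {x y : V} :
    y ∈ exactPartners G X x ↔ y ∈ X ∧ x ≠ y ∧ ∃ w, w ∉ X ∧ nbrIn G X w = {x, y} :=
  Finset.mem_filter

namespace MinorSparse

lemma sum_card_nbrIn_le (hG : MinorSparse C G) (X B : Finset V) :
    ∑ w ∈ B, (nbrIn G X w).card ≤ C * (B.card + X.card) :=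
  calc ∑ w ∈ B, (nbrIn G X w).card
      ≤ ∑ w ∈ B, (nbrIn G (B ∪ X) w).card :=
        Finset.sum_le_sum fun _ _ =>
          Finset.card_le_card (Finset.filter_subset_filter _ Finset.subset_union_right)
    _ ≤ ∑ w ∈ B ∪ X, (nbrIn G (B ∪ X) w).card :=
        Finset.sum_le_sum_of_subset Finset.subset_union_left
    _ ≤ C * (B ∪ X).card := hG.sum_card_nbrIn_self_le _
    _ ≤ C * (B.card + X.card) := Nat.mul_le_mul_left _ (Finset.card_union_le _ _)

lemma sum_card_exactPartners_le (hG : MinorSparse C G) (X : Finset V) :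
    ∑ x ∈ X, (exactPartners G X x).card ≤ C * X.card := by
  rcases X.eq_empty_or_nonempty with rfl | ⟨v, -⟩
  · simp
  have : Nonempty V := ⟨v⟩
  let Q : SimpleGraph X :=
    { Adj := fun x y => x ≠ y ∧ ∃ w, w ∉ X ∧ nbrIn G X w = {x.1, y.1}
      symm := ⟨fun x y h => ⟨h.1.symm, by simpa only [Finset.pair_comm y.1 x.1] using h.2⟩⟩
      loopless := ⟨fun x h => h.1 rfl⟩ }
  have hex : ∀ e : Sym2 X, e ∈ Q.edgeSet →
      ∃ w, w ∉ X ∧ ∀ y : X, y.1 ∈ nbrIn G X w ↔ y ∈ e := by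
    intro e
    induction e with
    | _ x y =>
      rintro ⟨-, w, hw, hN⟩
      exact ⟨w, hw, fun z => by simp [hN]⟩
  choose! w hwX hw using hex
  have hQ : SubdividesIn Q G Subtype.val w := by
    refine ⟨Subtype.val_injective, fun e he e' he' hee' => Sym2.ext fun y => ?_,
      fun e he => by simpa using hwX e he, fun e he y hy => (mem_nbrIn.1 ((hw e he y).2 hy)).2⟩
    rw [← hw e he, ← hw e' he', hee']
  have h := hG X Q hQ.isMinor
  rw [← sum_ncard_neighborSet, Nat.card_eq_fintype_card, Fintype.card_coe] at h
  rw [← Finset.sum_coe_sort]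
  refine le_of_eq_of_le (Finset.sum_congr rfl fun x _ => ?_) h
  rw [← Set.ncard_image_of_injective _ Subtype.val_injective, ← Set.ncard_coe_finset]
  congr 1
  ext y
  simp [mem_exactPartners, Q, and_left_comm, Subtype.ext_iff.not]

end MinorSparse

variable [Fintype V]

/-- The vertices with at least `D` neighbours in `X`, called *big*. -/
noncomputable def bigIn (G : SimpleGraph V) (X : Finset V) (D : ℕ) : Finset V :=
  {w | D ≤ (nbrIn G X w).card}

/-- The *small conflicts* of `x`: the vertices of `X` adjacent to `x` or sharing with `x` a
neighbour that is not big. -/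
noncomputable def smallConf (G : SimpleGraph V) (X : Finset V) (D : ℕ) (x : V) : Finset V :=
  {y ∈ X | y ≠ x ∧ (G.Adj x y ∨ ∃ w, w ∉ bigIn G X D ∧ G.Adj x w ∧ G.Adj w y)}

/-- A vertex of `X` is *good* if it is not big, has at most `K` small conflicts and at most two big
neighbours. -/
def IsGood (G : SimpleGraph V) (X : Finset V) (D K : ℕ) (x : V) : Prop :=
  x ∈ X ∧ x ∉ bigIn G X D ∧ (smallConf G X D x).card ≤ K ∧ (nbrIn G (bigIn G X D) x).card ≤ 2

lemma mem_bigIn {X : Finset V} {w : V} : w ∈ bigIn G X D ↔ D ≤ (nbrIn G X w).card := by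
  simp [bigIn]

lemma smallConf_subset {X : Finset V} {x : V} (hx : x ∈ X) : smallConf G X D x ⊆
    nbrIn G X x ∪ exactPartners G X x ∪
      {w ∈ (bigIn G X D)ᶜ | (w ∈ X ∨ 3 ≤ (nbrIn G X w).card) ∧ G.Adj w x}.biUnion (nbrIn G X) := by
  intro y hy
  obtain ⟨hyX, hyx, hxy | ⟨w, hwB, hxw, hwy⟩⟩ := Finset.mem_filter.1 hy
  · exact Finset.mem_union_left _ (Finset.mem_union_left _ (mem_nbrIn.2 ⟨hyX, hxy⟩))
  by_cases hw : w ∈ X ∨ 3 ≤ (nbrIn G X w).card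
  · exact Finset.mem_union_right _ (Finset.mem_biUnion.2
      ⟨w, by simp [hwB, hw, hxw.symm], mem_nbrIn.2 ⟨hyX, hwy⟩⟩)
  · rw [not_or, not_le] at hw
    refine Finset.mem_union_left _ (Finset.mem_union_right _ (mem_exactPartners.2
      ⟨hyX, hyx.symm, w, hw.1, (Finset.eq_of_subset_of_card_le (fun z hz => ?_) ?_).symm⟩))
    · rw [Finset.mem_insert, Finset.mem_singleton] at hz
      rcases hz with rfl | rfl
      exacts [mem_nbrIn.2 ⟨hx, hxw.symm⟩, mem_nbrIn.2 ⟨hyX, hwy⟩]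
    · rw [Finset.card_pair hyx.symm]
      exact Nat.le_of_lt_succ hw.2

omit [Fintype V] in
lemma sum_card_biUnion_nbrIn_le (W X : Finset V) (hW : ∀ w ∈ W, (nbrIn G X w).card ≤ D) :
    ∑ x ∈ X, ({w ∈ W | G.Adj w x}.biUnion (nbrIn G X)).card ≤ W.card * D ^ 2 :=
  calc ∑ x ∈ X, ({w ∈ W | G.Adj w x}.biUnion (nbrIn G X)).card
      ≤ ∑ x ∈ X, ∑ w ∈ W with G.Adj w x, (nbrIn G X w).card :=
        Finset.sum_le_sum fun x _ => Finset.card_biUnion_le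
    _ = ∑ w ∈ W, ∑ _x ∈ nbrIn G X w, (nbrIn G X w).card :=
        Finset.sum_comm' fun x w => by simp only [Finset.mem_filter, mem_nbrIn]; tauto
    _ ≤ ∑ _w ∈ W, D ^ 2 := Finset.sum_le_sum fun w hw => by
        rw [Finset.sum_const, smul_eq_mul, sq]
        exact Nat.mul_le_mul (hW w hw) (hW w hw)
    _ = W.card * D ^ 2 := by simp

namespace MinorSparse

lemma card_bigIn_le (hG : MinorSparse C G) (X : Finset V) (hD : 2 * C ≤ D) :
    D * (bigIn G X D).card ≤ 2 * C * X.card := by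
  have h1 := hG.sum_card_nbrIn_le X (bigIn G X D)
  have h2 : (bigIn G X D).card * D ≤ ∑ w ∈ bigIn G X D, (nbrIn G X w).card := by
    rw [← smul_eq_mul]
    exact Finset.card_nsmul_le_sum _ _ _ fun w hw => mem_bigIn.1 hw
  nlinarith [Nat.mul_le_mul_right (bigIn G X D).card hD]

lemma sum_card_smallConf_le (hG : MinorSparse C G)
    (hK : ¬ IsMinor (completeBipartiteGraph (Fin 3) (Fin 3)) G) (X : Finset V) (D : ℕ) :
    ∑ x ∈ X, (smallConf G X D x).card ≤ (2 * C + (1 + C + 2 * C ^ 2) * D ^ 2) * X.card := by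
  set W := {w ∈ (bigIn G X D)ᶜ | w ∈ X ∨ 3 ≤ (nbrIn G X w).card} with hW
  have hW_card : W.card ≤ (1 + C + 2 * C ^ 2) * X.card := by
    have hsub : W ⊆ X ∪ Finset.univ.filter fun w => w ∉ X ∧ 3 ≤ (nbrIn G X w).card := by
      intro w
      simp only [hW, Finset.mem_union, Finset.mem_filter, Finset.mem_compl,
        Finset.mem_univ, true_and]
      tauto
    have := (Finset.card_le_card hsub).trans (Finset.card_union_le _ _)
    linarith [hG.card_three_neighbours_le hK X]
  have hW_small : ∀ w ∈ W, (nbrIn G X w).card ≤ D := fun w hw => by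
    have hwB := (Finset.mem_filter.1 hw).1
    rw [Finset.mem_compl, mem_bigIn, not_le] at hwB
    exact hwB.le
  have hsum : ∑ x ∈ X, (smallConf G X D x).card ≤
      ∑ x ∈ X, ((nbrIn G X x).card + (exactPartners G X x).card +
      ({w ∈ W | G.Adj w x}.biUnion (nbrIn G X)).card) := by
    refine Finset.sum_le_sum fun x hx => (Finset.card_le_card (smallConf_subset hx)).trans ?_
    rw [hW, Finset.filter_filter]
    exact (Finset.card_union_le _ _).trans (Nat.add_le_add_right (Finset.card_union_le _ _) _)
  rw [Finset.sum_add_distrib, Finset.sum_add_distrib] at hsum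
  linarith [hG.sum_card_nbrIn_self_le X, hG.sum_card_exactPartners_le X,
    sum_card_biUnion_nbrIn_le W X hW_small, Nat.mul_le_mul_right (D ^ 2) hW_card]

lemma card_many_smallConf_le (hG : MinorSparse C G)
    (hK : ¬ IsMinor (completeBipartiteGraph (Fin 3) (Fin 3)) G) (X : Finset V) (D K : ℕ) :
    (K + 1) * ({x ∈ X | K < (smallConf G X D x).card}).card ≤
      (2 * C + (1 + C + 2 * C ^ 2) * D ^ 2) * X.card := by
  refine le_trans ?_ (hG.sum_card_smallConf_le hK X D)
  rw [mul_comm, ← smul_eq_mul]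
  exact (Finset.card_nsmul_le_sum _ _ _ fun x hx => (Finset.mem_filter.1 hx).2).trans
    (Finset.sum_le_sum_of_subset (Finset.filter_subset _ _))

lemma card_not_isGood_le (hG : MinorSparse C G)
    (hK : ¬ IsMinor (completeBipartiteGraph (Fin 3) (Fin 3)) G) (X : Finset V) (D K : ℕ) :
    ({x ∈ X | ¬ IsGood G X D K x}).card ≤ (1 + C + 2 * C ^ 2) * (bigIn G X D).card +
      ({x ∈ X | K < (smallConf G X D x).card}).card := by
  set B := bigIn G X D
  have hsub : ({x ∈ X | ¬ IsGood G X D K x}) ⊆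
      (B ∪ Finset.univ.filter fun w => w ∉ B ∧ 3 ≤ (nbrIn G B w).card) ∪
        {x ∈ X | K < (smallConf G X D x).card} := by
    intro x hx
    obtain ⟨hxX, hx⟩ := Finset.mem_filter.1 hx
    by_contra! hnot
    simp only [Finset.mem_union, not_or, Finset.mem_filter, Finset.mem_univ, true_and,
      not_and, not_le, not_lt] at hnot
    exact hx ⟨hxX, hnot.1.1, hnot.2 hxX, Nat.lt_succ_iff.1 (hnot.1.2 hnot.1.1)⟩
  have h1 := (Finset.card_le_card hsub).trans ((Finset.card_union_le _ _).trans
    (Nat.add_le_add_right (Finset.card_union_le _ _) _))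
  linarith [hG.card_three_neighbours_le hK B]

end MinorSparse

theorem exists_card_not_isGood_le (C : ℕ) {δ : ℝ} (hδ : 0 < δ) : ∃ D K : ℕ,
    ∀ (V : Type u) [Fintype V] (G : SimpleGraph V), MinorSparse C G →
      ¬ IsMinor (completeBipartiteGraph (Fin 3) (Fin 3)) G → ∀ X : Finset V,
      (({x ∈ X | ¬ IsGood G X D K x}).card : ℝ) ≤ δ * X.card := by
  set c : ℕ := 1 + C + 2 * C ^ 2
  obtain ⟨D, hD⟩ := exists_nat_ge (max (4 * C * c / δ) (2 * C + 1))
  set K₀ : ℕ := 2 * C + c * D ^ 2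
  obtain ⟨K, hK₀⟩ := exists_nat_ge (2 * K₀ / δ)
  obtain ⟨hD1, hD2⟩ := max_le_iff.1 hD
  replace hD2 : 2 * C + 1 ≤ D := by exact_mod_cast hD2
  refine ⟨D, K, fun V _ G hG hK X => ?_⟩
  have hX0 : (0 : ℝ) ≤ X.card := Nat.cast_nonneg _
  have hbig : (c : ℝ) * (bigIn G X D).card ≤ δ / 2 * X.card := by
    have hB : (D : ℝ) * (bigIn G X D).card ≤ 2 * C * X.card := by
      exact_mod_cast hG.card_bigIn_le X (by lia)
    have hDpos : (0 : ℝ) < D := by exact_mod_cast (by lia : 0 < D)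
    rw [div_le_iff₀ hδ] at hD1
    refine le_of_mul_le_mul_left ?_ hDpos
    linarith [mul_le_mul_of_nonneg_left hB (Nat.cast_nonneg (α := ℝ) c),
      mul_le_mul_of_nonneg_right hD1 hX0]
  have hconf : (({x ∈ X | K < (smallConf G X D x).card}).card : ℝ) ≤ δ / 2 * X.card := by
    have hS : ((K : ℝ) + 1) * ({x ∈ X | K < (smallConf G X D x).card}).card ≤ K₀ * X.card := by
      exact_mod_cast hG.card_many_smallConf_le hK X D K
    rw [div_le_iff₀ hδ] at hK₀
    refine le_of_mul_le_mul_left (hS.trans ?_) (by positivity : (0 : ℝ) < K + 1)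
    linarith [mul_le_mul_of_nonneg_right hK₀ hX0, mul_nonneg hδ.le hX0]
  have hbad : (({x ∈ X | ¬ IsGood G X D K x}).card : ℝ) ≤ c * (bigIn G X D).card +
      ({x ∈ X | K < (smallConf G X D x).card}).card := by
    exact_mod_cast hG.card_not_isGood_le hK X D K
  linarith

end GoodVertices

/-! ### Cutting sparse weighted graphs into bounded parts -/

section Clusters

open scoped Classical

/-- Symmetric nonnegative weights on the edges of a graph. -/
structure IsEdgeWeight {I : Type*} (F : SimpleGraph I) (μ : I → I → ℝ) : Prop where
  nonneg (i j : I) : 0 ≤ μ i j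
  symm (i j : I) : μ i j = μ j i
  eq_zero {i j : I} (h : ¬ F.Adj i j) : μ i j = 0

lemma IsEdgeWeight.diag {I : Type*} {F : SimpleGraph I} {μ : I → I → ℝ} (hμ : IsEdgeWeight F μ)
    (i : I) : μ i i = 0 :=
  hμ.eq_zero F.irrefl

section Weights

variable {I J K : Type*} [Fintype I] {F : SimpleGraph I} {μ : I → I → ℝ}

/-- The total weight of the ordered pairs separated by a labelling. -/
noncomputable def cutWeight (μ : I → I → ℝ) (l : I → J) : ℝ :=
  ∑ i, ∑ j, if l i = l j then 0 else μ i j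

/-- The weight induced on the classes of a labelling. -/
noncomputable def quotWeight (μ : I → I → ℝ) (l : I → J) (a b : J) : ℝ :=
  if a = b then 0 else ∑ i with l i = a, ∑ j with l j = b, μ i j

lemma IsEdgeWeight.quotWeight (hμ : IsEdgeWeight F μ) (l : I → J) :
    IsEdgeWeight (F.map l) (quotWeight μ l) where
  nonneg a b := by
    unfold _root_.quotWeight
    split_ifs
    exacts [le_rfl, Finset.sum_nonneg fun i _ => Finset.sum_nonneg fun j _ => hμ.nonneg i j]
  symm a b := by
    unfold _root_.quotWeight
    rw [Finset.sum_comm]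
    simp only [eq_comm (a := a), hμ.symm]
  eq_zero {a b} h := by
    refine ite_eq_left_iff.2 fun hab => Finset.sum_eq_zero fun i hi => Finset.sum_eq_zero
      fun j hj => hμ.eq_zero fun hij => h ?_
    rw [Finset.mem_filter_univ] at hi hj
    subst hi hj
    exact ⟨hab, i, j, hij, rfl, rfl⟩

lemma IsEdgeWeight.cutWeight_add_sum_le (hμ : IsEdgeWeight F μ) {r : I → J} {p : I → I}
    {s : Finset I} (hp : ∀ i ∈ s, r i = r (p i)) :
    cutWeight μ r + ∑ i ∈ s, μ i (p i) ≤ ∑ i, ∑ j, μ i j := by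
  have hs : ∑ i ∈ s, μ i (p i) = ∑ i, if i ∈ s then μ i (p i) else 0 := by simp
  rw [cutWeight, hs, ← Finset.sum_add_distrib]
  refine Finset.sum_le_sum fun i _ => ?_
  by_cases hi : i ∈ s
  · rw [if_pos hi, ← Finset.sum_erase_add _ _ (Finset.mem_univ (p i)),
      ← Finset.sum_erase_add _ (μ i) (Finset.mem_univ (p i)), if_pos (hp i hi), add_zero]
    gcongr with j
    split_ifs
    exacts [hμ.nonneg i j, le_rfl]
  · rw [if_neg hi, add_zero]
    gcongr with j
    split_ifs
    exacts [hμ.nonneg i j, le_rfl]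

lemma cutWeight_quotWeight [Fintype J] (μ : I → I → ℝ) (l : I → J) (r : J → K) :
    cutWeight (quotWeight μ l) r = cutWeight μ (r ∘ l) := by
  have hfib : ∀ a b, (if r a = r b then 0 else quotWeight μ l a b) =
      ∑ i with l i = a, ∑ j with l j = b, if r (l i) = r (l j) then 0 else μ i j := by
    intro a b
    by_cases hr : r a = r b
    · rw [if_pos hr, eq_comm]
      refine Finset.sum_eq_zero fun i hi => Finset.sum_eq_zero fun j hj => if_pos ?_
      rw [(Finset.mem_filter.1 hi).2, (Finset.mem_filter.1 hj).2, hr]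
    · rw [if_neg hr, quotWeight, if_neg (mt (congrArg r) hr)]
      refine Finset.sum_congr rfl fun i hi => Finset.sum_congr rfl fun j hj => (if_neg ?_).symm
      rwa [(Finset.mem_filter.1 hi).2, (Finset.mem_filter.1 hj).2]
  calc cutWeight (quotWeight μ l) r
      = ∑ a, ∑ i with l i = a, ∑ b, ∑ j with l j = b,
          if r (l i) = r (l j) then 0 else μ i j := by
        simp only [cutWeight, hfib]
        exact Finset.sum_congr rfl fun a _ => Finset.sum_comm
    _ = cutWeight μ (r ∘ l) :=
        (Finset.sum_fiberwise ..).trans (Finset.sum_congr rfl fun i _ => Finset.sum_fiberwise ..)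

lemma sum_quotWeight [Fintype J] (μ : I → I → ℝ) (l : I → J) :
    ∑ a, ∑ b, quotWeight μ l a b = cutWeight μ l := by
  refine Eq.trans ?_ (cutWeight_quotWeight μ l id)
  refine Finset.sum_congr rfl fun a _ => Finset.sum_congr rfl fun b _ => ?_
  by_cases hab : a = b <;> simp [quotWeight, hab]

lemma card_map_adj_le {d s : ℕ} {l : I → J} [Fintype J]
    (hd : ∀ i, ({j | F.Adj i j} : Finset I).card ≤ d)
    (hs : ∀ a, ({i | l i = a} : Finset I).card ≤ s) (a : J) :
    ({b | (F.map l).Adj a b} : Finset J).card ≤ s * d := by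
  calc ({b | (F.map l).Adj a b} : Finset J).card
      ≤ ((({i | l i = a} : Finset I).biUnion fun i => {j | F.Adj i j}).image l).card := by
        refine Finset.card_le_card fun b hb => ?_
        obtain ⟨-, i, j, hij, rfl, rfl⟩ := (Finset.mem_filter.1 hb).2
        exact Finset.mem_image_of_mem _ (Finset.mem_biUnion.2 ⟨i, by simp, by simpa using hij⟩)
    _ ≤ ({i | l i = a} : Finset I).card * d :=
        Finset.card_image_le.trans (Finset.card_biUnion_le_card_mul _ _ _ fun i _ => hd i)
    _ ≤ s * d := Nat.mul_le_mul_right _ (hs a)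

end Weights

lemma exists_parity_colouring {I : Type*} {ρ : I → ℕ} {p : I → I}
    (hp : ∀ i, p i ≠ i → ρ (p i) < ρ i) : ∃ col : I → Bool, ∀ i, p i ≠ i → col (p i) ≠ col i := by
  let col : I → Bool := WellFounded.fix (measure ρ).wf
    fun i rec => if h : p i ≠ i then !(rec (p i) (hp i h)) else true
  refine ⟨col, fun i hi => ?_⟩
  have hcol : col i = !(col (p i)) := by
    simp only [col]
    rw [WellFounded.fix_eq, dif_pos hi]
  simp [hcol]

variable {I : Type u} [Fintype I] {C d : ℕ} {F : SimpleGraph I} {μ : I → I → ℝ}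

lemma MinorSparse.exists_parent (hF : MinorSparse C F) (hμ : IsEdgeWeight F μ) :
    ∃ (ρ : I → ℕ) (p : I → I), (∀ i, p i ≠ i → F.Adj i (p i) ∧ ρ (p i) < ρ i) ∧
      ∑ i, ∑ j, μ i j ≤ 2 * C * ∑ i, μ i (p i) := by
  obtain ⟨ρ, hρ, hback⟩ := hF.exists_rank
  let low : I → Finset I := fun i => {j | F.Adj i j ∧ ρ j < ρ i}
  have hlow : ∑ i, ∑ j, μ i j = 2 * ∑ i, ∑ j ∈ low i, μ i j := by
    have hswap : ∑ i, ∑ j ∈ low i, μ i j =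
        ∑ i, ∑ j, if F.Adj i j ∧ ρ i < ρ j then μ i j else 0 := by
      simp only [low, Finset.sum_filter]
      rw [Finset.sum_comm]
      simp only [F.adj_comm, hμ.symm]
    rw [two_mul]
    nth_rewrite 2 [hswap]
    simp only [low, Finset.sum_filter, ← Finset.sum_add_distrib]
    refine Finset.sum_congr rfl fun i _ => Finset.sum_congr rfl fun j _ => ?_
    by_cases hij : F.Adj i j
    · rcases lt_or_gt_of_ne (hρ.ne hij.ne) with h | h <;> simp [hij, h, h.not_gt]
    · simp [hij, hμ.eq_zero hij]
  have hparent : ∀ i, ∃ q, (q ≠ i → F.Adj i q ∧ ρ q < ρ i) ∧ ∑ j ∈ low i, μ i j ≤ C * μ i q := by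
    intro i
    rcases (low i).eq_empty_or_nonempty with hempty | hne
    · exact ⟨i, fun h => absurd rfl h, by simp [hempty, hμ.diag i]⟩
    · obtain ⟨q, hq, hmax⟩ := Finset.exists_max_image _ (μ i) hne
      refine ⟨q, fun _ => (Finset.mem_filter.1 hq).2, ?_⟩
      refine (Finset.sum_le_card_nsmul _ _ _ hmax).trans ?_
      rw [nsmul_eq_mul]
      exact mul_le_mul_of_nonneg_right (mod_cast hback i) (hμ.nonneg i q)
  choose p hp hpμ using hparent
  refine ⟨ρ, p, hp, ?_⟩
  rw [hlow, mul_assoc, Finset.mul_sum (a := (C : ℝ))]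
  exact mul_le_mul_of_nonneg_left (Finset.sum_le_sum fun i _ => hpμ i) zero_le_two

/-- A labelling whose classes are stars of `F`. -/
def IsStarLabelling {I J : Type*} (F : SimpleGraph I) (r : I → J) : Prop :=
  ∀ a, ∃ i, r i = a ∧ ∀ j, r j = a → j ≠ i → F.Adj i j

lemma IsStarLabelling.connected {I J : Type*} {F : SimpleGraph I} {r : I → J}
    (hr : IsStarLabelling F r) (a : J) : (F.induce (r ⁻¹' {a})).Connected := by
  obtain ⟨i, hi, hstar⟩ := hr a
  exact connected_induce_of_star hi hstar

lemma IsStarLabelling.card_fiber_le {J : Type*} {r : I → J} (hr : IsStarLabelling F r)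
    (hd : ∀ i, ({j | F.Adj i j} : Finset I).card ≤ d) (a : J) :
    ({i | r i = a} : Finset I).card ≤ d + 1 := by
  obtain ⟨i, -, hstar⟩ := hr a
  calc ({i | r i = a} : Finset I).card
      ≤ (insert i ({j | F.Adj i j} : Finset I)).card :=
        Finset.card_le_card fun j hj => by
          have := hstar j (Finset.mem_filter.1 hj).2
          simp only [Finset.mem_insert, Finset.mem_filter_univ]
          tauto
    _ ≤ d + 1 := (Finset.card_insert_le _ _).trans (Nat.succ_le_succ (hd i))

lemma exists_isStarLabelling {p : I → I} {ρ : I → ℕ} (hμ : IsEdgeWeight F μ)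
    (hp : ∀ i, p i ≠ i → F.Adj i (p i) ∧ ρ (p i) < ρ i) :
    ∃ (J : Type u) (_ : Fintype J) (r : I → J), IsStarLabelling F r ∧
      2 * cutWeight μ r + ∑ i, μ i (p i) ≤ 2 * ∑ i, ∑ j, μ i j := by
  obtain ⟨col, hcol⟩ := exists_parity_colouring fun i hi => (hp i hi).2
  obtain ⟨c, hc⟩ : ∃ c : Bool, ∑ i, μ i (p i) ≤ 2 * ∑ i with col i = c, μ i (p i) := by
    have hsplit := Finset.sum_fiberwise Finset.univ col fun i => μ i (p i)
    rw [Fintype.sum_bool] at hsplit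
    by_contra! hlt
    linarith [hlt true, hlt false]
  let r : I → I := fun i => if col i = c then p i else i
  have hrp : ∀ i, col i = c → r (p i) = p i := by
    intro i hi
    by_cases hpi : p i = i
    · simp [r, hpi]
    · exact if_neg fun h => hcol i hpi (h.trans hi.symm)
  have hrr : ∀ i, r (r i) = r i := by
    intro i
    by_cases hi : col i = c
    · simpa [show r i = p i from if_pos hi] using hrp i hi
    · simp [r, hi]
  refine ⟨Set.range r, inferInstance, Set.rangeFactorization r, ?_, ?_⟩
  · rintro ⟨_, i, rfl⟩
    refine ⟨r i, Subtype.ext (hrr i), fun j hj hji => ?_⟩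
    have hj' : r j = r i := congrArg Subtype.val hj
    have hcj : col j = c := by
      by_contra h
      exact hji ((if_neg h).symm.trans hj')
    have hrj : r j = p j := if_pos hcj
    rw [← hj', hrj] at hji ⊢
    exact (hp j hji.symm).1.symm
  · have hcut := hμ.cutWeight_add_sum_le (r := Set.rangeFactorization r) (p := p)
      (s := {i | col i = c}) fun i hi => Subtype.ext <|
        have hi : col i = c := (Finset.mem_filter.1 hi).2
        (if_pos hi).trans (hrp i hi).symm
    linarith

lemma MinorSparse.exists_isStarLabelling (hF : MinorSparse C F) (hC : 0 < C)
    (hμ : IsEdgeWeight F μ) :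
    ∃ (J : Type u) (_ : Fintype J) (r : I → J), IsStarLabelling F r ∧
      cutWeight μ r ≤ (1 - 1 / (4 * C)) * ∑ i, ∑ j, μ i j := by
  obtain ⟨ρ, p, hp, hle⟩ := hF.exists_parent hμ
  obtain ⟨J, inst, r, hr, hcut⟩ := _root_.exists_isStarLabelling hμ hp
  refine ⟨J, inst, r, hr, ?_⟩
  rw [← div_le_iff₀' (by positivity)] at hle
  have : (∑ i, ∑ j, μ i j) / (2 * C) = 2 * (1 / (4 * C) * ∑ i, ∑ j, μ i j) := by ring
  linarith

lemma exists_iterated_clusters (C m : ℕ) (hC : 0 < C) (d : ℕ) :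
    ∃ S : ℕ, ∀ (I : Type u) [Fintype I] (F : SimpleGraph I), MinorSparse C F →
      (∀ i, ({j | F.Adj i j} : Finset I).card ≤ d) → ∀ μ, IsEdgeWeight F μ →
      ∃ (J : Type u) (_ : Fintype J) (l : I → J),
        (∀ a, ({i | l i = a} : Finset I).card ≤ S) ∧
        cutWeight μ l ≤ (1 - 1 / (4 * C)) ^ m * ∑ i, ∑ j, μ i j := by
  induction m generalizing d with
  | zero =>
    refine ⟨1, fun I _ F _ _ μ hμ => ⟨I, inferInstance, id, fun a => ?_, ?_⟩⟩
    · exact Finset.card_le_one.2 (by simp)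
    rw [pow_zero, one_mul]
    refine Finset.sum_le_sum fun i _ => Finset.sum_le_sum fun j _ => ?_
    split_ifs
    exacts [hμ.nonneg i j, le_rfl]
  | succ m ih =>
    obtain ⟨S, hS⟩ := ih ((d + 1) * d)
    refine ⟨S * (d + 1), fun I _ F hF hd μ hμ => ?_⟩
    obtain ⟨J, _, r, hr, hcut⟩ := hF.exists_isStarLabelling hC hμ
    obtain ⟨K, instK, l, hl, hcut'⟩ := hS J (F.map r)
      (hF.of_isMinor (IsMinor.map_of_connected hr.connected))
      (fun a => by convert card_map_adj_le hd (hr.card_fiber_le hd) a) _ (hμ.quotWeight r)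
    refine ⟨K, instK, l ∘ r, fun a => ?_, ?_⟩
    · refine (Finset.card_le_mul_card_image_of_maps_to (f := r) (t := {b | l b = a})
        (by simp) (d + 1) fun b _ => ?_).trans ?_
      · exact (Finset.card_le_card (by grind)).trans (hr.card_fiber_le hd b)
      · rw [mul_comm]
        exact Nat.mul_le_mul_right _ (hl a)
    · have h0 : (0 : ℝ) ≤ 1 - 1 / (4 * C) := by
        rw [sub_nonneg, div_le_one (by positivity)]
        exact_mod_cast show 1 ≤ 4 * C by omega
      rw [cutWeight_quotWeight, sum_quotWeight] at hcut'
      rw [pow_succ, mul_assoc]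
      exact hcut'.trans (by gcongr)

theorem exists_bounded_clusters (C d : ℕ) (hC : 0 < C) {η : ℝ} (hη : 0 < η) :
    ∃ S : ℕ, ∀ (I : Type u) [Fintype I] (F : SimpleGraph I), MinorSparse C F →
      (∀ i, ({j | F.Adj i j} : Finset I).card ≤ d) → ∀ μ, IsEdgeWeight F μ →
      ∃ (J : Type u) (_ : Fintype J) (l : I → J),
        (∀ a, ({i | l i = a} : Finset I).card ≤ S) ∧
        cutWeight μ l ≤ η * ∑ i, ∑ j, μ i j := by
  have hlt : (1 : ℝ) - 1 / (4 * C) < 1 := sub_lt_self _ (by positivity)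
  obtain ⟨m, hm⟩ := exists_pow_lt_of_lt_one hη hlt
  obtain ⟨S, hS⟩ := exists_iterated_clusters C m hC d
  refine ⟨S, fun I _ F hF hd μ hμ => ?_⟩
  obtain ⟨J, inst, l, hl, hcut⟩ := hS I F hF hd μ hμ
  have h0 : 0 ≤ ∑ i, ∑ j, μ i j :=
    Finset.sum_nonneg fun i _ => Finset.sum_nonneg fun j _ => hμ.nonneg i j
  exact ⟨J, inst, l, hl, hcut.trans (by gcongr)⟩

end Clusters

/-! ### Matchings as involutions -/

section OptimalInvolutions

open scoped Classical

variable {A : Type*} {w : A → A → ℝ} {σ τ : Equiv.Perm A}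

lemma exists_involutive_piecewise (hσ : Function.Involutive σ) (hτ : Function.Involutive τ)
    {P : A → Prop} (hPσ : ∀ a, P a → P (σ a)) (hPτ : ∀ a, P a → P (τ a)) :
    ∃ π : Equiv.Perm A, Function.Involutive π ∧ ∀ a, π a = if P a then τ a else σ a := by
  have hinv : Function.Involutive fun a => if P a then τ a else σ a := by
    intro a
    by_cases h : P a
    · simp [h, hPτ a h, hτ a]
    · have h' : ¬ P (σ a) := fun h' => h (by simpa [hσ a] using hPσ _ h')
      simp [h, h', hσ a]
  exact ⟨hinv.toPerm, hinv, fun a => rfl⟩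

lemma apply_zpow_mul_of_involutive (hσ : Function.Involutive σ) (hτ : Function.Involutive τ)
    {x : A} (hx : τ x = x) (i : ℤ) :
    σ (((τ * σ) ^ i) x) = ((τ * σ) ^ (-i - 1)) x ∧ τ (((τ * σ) ^ i) x) = ((τ * σ) ^ (-i)) x := by
  have hinv : (τ * σ)⁻¹ = σ * τ := by
    rw [mul_inv_rev, inv_eq_of_mul_eq_one_left (Equiv.ext hσ : σ * σ = 1),
      inv_eq_of_mul_eq_one_left (Equiv.ext hτ : τ * τ = 1)]
  have hsemσ : SemiconjBy σ (τ * σ) (τ * σ)⁻¹ := by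
    rw [SemiconjBy, hinv, mul_assoc]
  have hsemτ : SemiconjBy τ (τ * σ) (τ * σ)⁻¹ := by
    rw [SemiconjBy, hinv]
    ext a
    simp [hτ _]
  have hσx : σ x = (τ * σ)⁻¹ x := by rw [hinv, Equiv.Perm.mul_apply, hx]
  have hσi := congrArg (· x) (hsemσ.zpow_right i).eq
  have hτi := congrArg (· x) (hsemτ.zpow_right i).eq
  simp only [Equiv.Perm.mul_apply, inv_zpow', hx, hσx] at hσi hτi
  refine ⟨hσi.trans ?_, hτi⟩
  rw [← Equiv.Perm.mul_apply, ← zpow_sub_one]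

lemma eq_of_sameCycle_mul_of_apply_eq (hσ : Function.Involutive σ) (hτ : Function.Involutive τ)
    {x u v : A} (hx : τ x = x) (hu : (τ * σ).SameCycle x u) (hv : (τ * σ).SameCycle x v)
    (hσu : σ u = u) (hσv : σ v = v) : u = v := by
  have hperiod : ∀ i : ℤ, ((τ * σ) ^ i) x = x ↔ (MulAction.period (τ * σ) x : ℤ) ∣ i :=
    fun _ => MulAction.zpow_smul_eq_iff_period_dvd (g := τ * σ) (a := x)
  have hodd : ∀ i : ℤ, σ (((τ * σ) ^ i) x) = ((τ * σ) ^ i) x →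
      (MulAction.period (τ * σ) x : ℤ) ∣ 2 * i + 1 := by
    intro i hi
    rw [(apply_zpow_mul_of_involutive hσ hτ hx i).1] at hi
    rw [← hperiod, show 2 * i + 1 = i + 1 + i by ring, zpow_add, Equiv.Perm.mul_apply, ← hi,
      ← Equiv.Perm.mul_apply, ← zpow_add, show i + 1 + (-i - 1) = 0 by ring, zpow_zero,
      Equiv.Perm.one_apply]
  obtain ⟨i, rfl⟩ := hu
  obtain ⟨j, rfl⟩ := hv
  have hdvd : (MulAction.period (τ * σ) x : ℤ) ∣ i - j := by
    rw [show i - j = (2 * j + 1) * i - (2 * i + 1) * j by ring]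
    exact dvd_sub ((hodd j hσv).mul_right i) ((hodd i hσu).mul_right j)
  rw [show i = j + (i - j) by ring, zpow_add, Equiv.Perm.mul_apply, (hperiod _).2 hdvd]

variable [Fintype A]

/-- An involution, viewed as a matching together with its unmatched points, of maximal weight. -/
def IsOptimal (w : A → A → ℝ) (σ : Equiv.Perm A) : Prop :=
  Function.Involutive σ ∧
    ∀ τ : Equiv.Perm A, Function.Involutive τ → ∑ a, w a (τ a) ≤ ∑ a, w a (σ a)

lemma exists_isOptimal (w : A → A → ℝ) : ∃ σ, IsOptimal w σ := by
  obtain ⟨σ, hσ, hmax⟩ := Finset.exists_max_image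
    (Finset.univ.filter fun σ : Equiv.Perm A => Function.Involutive σ)
    (fun σ => ∑ a, w a (σ a))
    ⟨1, Finset.mem_filter.2 ⟨Finset.mem_univ _, fun _ => rfl⟩⟩
  exact ⟨σ, (Finset.mem_filter.1 hσ).2, fun τ hτ => hmax τ (by simpa using hτ)⟩

/-- Linked points: no optimal involution fixes both, unless they coincide. -/
def Linked (w : A → A → ℝ) (u v : A) : Prop :=
  ∀ σ, IsOptimal w σ → σ u = u → σ v = v → u = v

lemma linked_of_pos (hw : IsEdgeWeight ⊤ w) {u v : A} (h : 0 < w u v) : Linked w u v := by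
  intro σ hσ hu hv
  by_contra huv
  obtain ⟨π, hπ, hπa⟩ := exists_involutive_piecewise hσ.1 (Equiv.swap_apply_self u v)
    (P := fun a => a = u ∨ a = v) (by grind) (by grind)
  refine absurd (hσ.2 π hπ)
    (not_le.2 (Finset.sum_lt_sum (fun a _ => ?_) ⟨u, Finset.mem_univ _, ?_⟩))
  · rw [hπa]
    split_ifs with ha
    · have hσa : σ a = a := by grind
      rw [hσa, hw.diag]
      exact hw.nonneg _ _
    · exact le_rfl
  · rw [hπa, hu, hw.diag]
    simpa using h

lemma Linked.symm {u v : A} (h : Linked w u v) : Linked w v u :=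
  fun σ hσ hv hu => (h σ hσ hu hv).symm

/-- Gallai's argument: swap `σ` and `τ` on the cycle of `x` under `τ * σ`. -/
lemma Linked.trans (hfix : ∀ v, ∃ σ, IsOptimal w σ ∧ σ v = v) {u x v : A}
    (hux : Linked w u x) (hxv : Linked w x v) : Linked w u v := by
  intro σ hσ hu hv
  obtain ⟨τ, hτ, hx⟩ := hfix x
  let P : A → Prop := (τ * σ).SameCycle x
  have hPσ : ∀ a, P a → P (σ a) := by
    rintro _ ⟨i, rfl⟩
    exact ⟨-i - 1, (apply_zpow_mul_of_involutive hσ.1 hτ.1 hx i).1.symm⟩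
  have hPτ : ∀ a, P a → P (τ a) := by
    rintro _ ⟨i, rfl⟩
    exact ⟨-i, (apply_zpow_mul_of_involutive hσ.1 hτ.1 hx i).2.symm⟩
  obtain ⟨π, hπ, hπa⟩ := exists_involutive_piecewise hσ.1 hτ.1 hPσ hPτ
  obtain ⟨π', hπ', hπa'⟩ := exists_involutive_piecewise hτ.1 hσ.1 hPτ hPσ
  have hsum : ∑ a, w a (π a) + ∑ a, w a (π' a) = ∑ a, w a (σ a) + ∑ a, w a (τ a) := by
    simp only [← Finset.sum_add_distrib, hπa, hπa']
    refine Finset.sum_congr rfl fun a _ => ?_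
    split_ifs <;> ring
  have hopt : IsOptimal w π :=
    ⟨hπ, fun ρ hρ => (hσ.2 ρ hρ).trans (by linarith [hτ.2 π' hπ'])⟩
  have hxP : P x := Equiv.Perm.SameCycle.refl _ _
  have hπx : π x = x := by rw [hπa, if_pos hxP, hx]
  by_cases huP : P u
  · by_cases hvP : P v
    · exact eq_of_sameCycle_mul_of_apply_eq hσ.1 hτ.1 hx huP hvP hu hv
    · have hxv' : x = v := hxv π hopt hπx (by rw [hπa, if_neg hvP, hv])
      exact absurd (hxv' ▸ hxP) hvP
  · have hux' : u = x := hux π hopt (by rw [hπa, if_neg huP, hu]) hπx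
    exact absurd (hux' ▸ hxP) huP

lemma IsOptimal.exists_forall_pos (hw : IsEdgeWeight ⊤ w) (hσ : IsOptimal w σ) :
    ∃ π, IsOptimal w π ∧ ∀ a, π a = if 0 < w a (σ a) then σ a else a := by
  obtain ⟨π, hπ, hπa⟩ := exists_involutive_piecewise (τ := σ) (σ := 1) (fun _ => rfl) hσ.1
    (P := fun a => 0 < w a (σ a)) (fun a ha => ha) (fun a ha => by rwa [hσ.1, hw.symm])
  refine ⟨π, ⟨hπ, fun ρ hρ => (hσ.2 ρ hρ).trans (Finset.sum_le_sum fun a _ => ?_)⟩, hπa⟩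
  rw [hπa]
  split_ifs with h
  · exact le_rfl
  · exact (not_lt.1 h).trans (hw.nonneg _ _)

lemma odd_card_linked (hw : IsEdgeWeight ⊤ w) (hfix : ∀ v, ∃ σ, IsOptimal w σ ∧ σ v = v) (u : A) :
    Odd ({a | Linked w u a} : Finset A).card := by
  let K : Finset A := {a | Linked w u a}
  have hK : ∀ a, a ∈ K ↔ Linked w u a := fun a => by simp [K]
  have huK : u ∈ K := (hK u).2 fun _ _ _ _ => rfl
  obtain ⟨σ, hσ, hσu⟩ := hfix u
  obtain ⟨π, hπ, hπa⟩ := hσ.exists_forall_pos hw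
  have hπu : π u = u := by simp [hπa, hσu]
  have hmem : ∀ a ∈ K.erase u, π a ∈ K.erase u := by
    intro a ha
    rw [Finset.mem_erase] at ha ⊢
    refine ⟨fun h => ha.1 (by rw [← hπ.1 a, h, hπu]), ?_⟩
    rw [hπa]
    split_ifs with hpos
    exacts [(hK _).2 (((hK a).1 ha.2).trans hfix (linked_of_pos hw hpos)), ha.2]
  have hzero : ∑ _a ∈ K.erase u, (1 : ZMod 2) = 0 := by
    refine Finset.sum_involution (fun b _ => π b) (fun _ _ => by decide) (fun a ha _ hfixa => ?_)
      hmem (fun b _ => hπ.1 b)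
    rw [Finset.mem_erase] at ha
    exact ha.1 ((hK a).1 ha.2 π hπ hπu hfixa).symm
  rw [Finset.sum_const, nsmul_eq_mul, mul_one, ZMod.natCast_eq_zero_iff_even] at hzero
  change Odd K.card
  rw [← Finset.card_erase_add_one huK]
  exact hzero.add_one

end OptimalInvolutions

section Domination

open scoped Classical

variable {A : Type*} [Fintype A] {w z : A → A → ℝ}

/-- A symmetric set of pairs of positive `w`-weight of which every `w`-optimal involution uses at
least as much as the fractional matching `z` does. -/
structure IsTight (w z : A → A → ℝ) (D : A → A → Prop) : Prop where
  pos : ∀ a b, D a b → 0 < w a b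
  symm : ∀ a b, D a b → D b a
  sum_le : ∀ σ, IsOptimal w σ →
    ∑ a, ∑ b, (if D a b then z a b else 0) ≤ ({a | D a (σ a)} : Finset A).card

lemma isTight_star (hw : IsEdgeWeight ⊤ w) (hz : IsEdgeWeight ⊤ z) {v : A}
    (hdeg : ∑ b, z v b ≤ 1) (hv : ∀ σ, IsOptimal w σ → 0 < w v (σ v)) :
    IsTight w z fun a b => 0 < w a b ∧ (a = v ∨ b = v) := by
  refine ⟨fun a b h => h.1, fun a b h => ⟨hw.symm a b ▸ h.1, h.2.symm⟩, fun σ hσ => ?_⟩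
  have hle : ∑ a, ∑ b, (if 0 < w a b ∧ (a = v ∨ b = v) then z a b else 0) ≤ 2 := by
    calc ∑ a, ∑ b, (if 0 < w a b ∧ (a = v ∨ b = v) then z a b else 0)
        ≤ ∑ a, ∑ b, ((if a = v then z a b else 0) + if b = v then z a b else 0) := by
          refine Finset.sum_le_sum fun a _ => Finset.sum_le_sum fun b _ => ?_
          have := hz.nonneg a b
          split_ifs <;> first | linarith | (exfalso; tauto)
      _ = ∑ b, z v b + ∑ a, z v a := by
          simp only [Finset.sum_add_distrib, Finset.sum_ite_eq', Finset.mem_univ, if_true,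
            hz.symm v]
          rw [Finset.sum_comm]
          simp [hz.symm v]
      _ ≤ 2 := by linarith
  have hpos := hv σ hσ
  have hne : v ≠ σ v := fun h => hpos.ne' (by rw [← h, hw.diag])
  have hsub : ({v, σ v} : Finset A) ⊆
      ({a | 0 < w a (σ a) ∧ (a = v ∨ σ a = v)} : Finset A) := by
    simp [Finset.insert_subset_iff, hσ.1 v, hpos, hw.symm (σ v) v]
  have hcard := Finset.card_le_card hsub
  rw [Finset.card_pair hne] at hcard
  have hcard' : (2 : ℝ) ≤ ({a | 0 < w a (σ a) ∧ (a = v ∨ σ a = v)} : Finset A).card :=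
    mod_cast hcard
  calc _ ≤ (2 : ℝ) := by convert hle
    _ ≤ _ := by convert hcard'

lemma isTight_linked (hw : IsEdgeWeight ⊤ w) (hz : IsEdgeWeight ⊤ z)
    (hodd : ∀ U : Finset A, Odd U.card → ∑ a ∈ U, ∑ b ∈ U, z a b + 1 ≤ U.card)
    (hfix : ∀ v, ∃ σ, IsOptimal w σ ∧ σ v = v) (u : A) :
    IsTight w z fun a b => 0 < w a b ∧ Linked w u a ∧ Linked w u b := by
  refine ⟨fun a b h => h.1, fun a b h => ⟨hw.symm a b ▸ h.1, h.2.symm⟩, fun σ hσ => ?_⟩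
  let K : Finset A := {a | Linked w u a}
  have hK : ∀ a, a ∈ K ↔ Linked w u a := fun a => by simp [K]
  have hle : ∑ a, ∑ b, (if 0 < w a b ∧ Linked w u a ∧ Linked w u b then z a b else 0) ≤
      (K.card : ℝ) - 1 := by
    refine le_trans ?_ (le_sub_iff_add_le.2 (hodd K (odd_card_linked hw hfix u)))
    simp only [K, Finset.sum_filter]
    refine Finset.sum_le_sum fun a _ => ?_
    by_cases ha : Linked w u a
    · simp only [ha, true_and, if_true]
      refine Finset.sum_le_sum fun b _ => ?_
      have := hz.nonneg a b
      split_ifs <;> first | linarith | (exfalso; tauto)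
    · simp [ha]
  obtain ⟨π, hπ, hπa⟩ := hσ.exists_forall_pos hw
  have hfixed : ({a ∈ K | π a = a}).card ≤ 1 := by
    refine Finset.card_le_one.2 fun a ha b hb => ?_
    simp only [Finset.mem_filter, hK] at ha hb
    exact (ha.1.symm.trans hfix hb.1) π hπ ha.2 hb.2
  have hsub : K ⊆ ({a | 0 < w a (σ a) ∧ Linked w u a ∧ Linked w u (σ a)} : Finset A) ∪
      {a ∈ K | π a = a} := by
    intro a ha
    simp only [Finset.mem_union, Finset.mem_filter, hπa, Finset.mem_univ, true_and]
    by_cases hpos : 0 < w a (σ a)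
    · have ha' := (hK a).1 ha
      exact Or.inl ⟨hpos, ha', ha'.trans hfix (linked_of_pos hw hpos)⟩
    · exact Or.inr ⟨ha, if_neg hpos⟩
  have hcard := (Finset.card_le_card hsub).trans (Finset.card_union_le _ _)
  have hcard' : (K.card : ℝ) ≤
      ({a | 0 < w a (σ a) ∧ Linked w u a ∧ Linked w u (σ a)} : Finset A).card + 1 :=
    mod_cast hcard.trans (Nat.add_le_add_left hfixed _)
  calc _ ≤ (K.card : ℝ) - 1 := by convert hle
    _ ≤ _ := by convert sub_le_iff_le_add.2 hcard'

lemma exists_isTight (hw : IsEdgeWeight ⊤ w) (hz : IsEdgeWeight ⊤ z)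
    (hdeg : ∀ a, ∑ b, z a b ≤ 1)
    (hodd : ∀ U : Finset A, Odd U.card → ∑ a ∈ U, ∑ b ∈ U, z a b + 1 ≤ U.card)
    {u v : A} (huv : 0 < w u v) : ∃ D, IsTight w z D ∧ ∃ a b, D a b := by
  by_cases hcov : ∃ v, ∀ σ, IsOptimal w σ → 0 < w v (σ v)
  · obtain ⟨v, hv⟩ := hcov
    obtain ⟨σ, hσ⟩ := exists_isOptimal w
    exact ⟨_, isTight_star hw hz (hdeg v) hv, v, σ v, hv σ hσ, Or.inl rfl⟩
  · push Not at hcov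
    have hfix : ∀ v, ∃ σ, IsOptimal w σ ∧ σ v = v := by
      intro v
      obtain ⟨σ, hσ, hσv⟩ := hcov v
      obtain ⟨π, hπ, hπa⟩ := hσ.exists_forall_pos hw
      exact ⟨π, hπ, by rw [hπa, if_neg (not_lt.2 hσv)]⟩
    exact ⟨_, isTight_linked hw hz hodd hfix u, u, v, huv, fun _ _ _ _ => rfl,
      linked_of_pos hw huv⟩

/-- The amount by which the weight of a fractional matching exceeds that of an involution. -/
noncomputable def excess (z : A → A → ℝ) (σ : Equiv.Perm A) (w : A → A → ℝ) : ℝ :=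
  ∑ a, ∑ b, w a b * z a b - ∑ a, w a (σ a)

lemma isCompact_setOf_isEdgeWeight_sum_le (F : SimpleGraph A) (s : ℝ) :
    IsCompact {w : A → A → ℝ | IsEdgeWeight F w ∧ ∑ a, ∑ b, w a b ≤ s} := by
  refine (isCompact_Icc (a := (0 : A → A → ℝ)) (b := fun _ _ => s)).of_isClosed_subset ?_ ?_
  · have heq : {w : A → A → ℝ | IsEdgeWeight F w ∧ ∑ a, ∑ b, w a b ≤ s} =
        (⋂ a, ⋂ b, {w | 0 ≤ w a b ∧ w a b = w b a} ∩ ⋂ _ : ¬ F.Adj a b, {w | w a b = 0}) ∩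
          {w | ∑ a, ∑ b, w a b ≤ s} := by
      ext w
      simp only [Set.mem_inter_iff, Set.mem_iInter, Set.mem_ofPred_eq]
      exact ⟨fun h => ⟨fun a b => ⟨⟨h.1.1 a b, h.1.2 a b⟩, h.1.3⟩, h.2⟩,
        fun h => ⟨⟨fun a b => (h.1 a b).1.1, fun a b => (h.1 a b).1.2, fun {a b} => (h.1 a b).2⟩,
          h.2⟩⟩
    rw [heq]
    refine (isClosed_iInter fun a => isClosed_iInter fun b => ?_).inter
      (isClosed_le (by fun_prop) continuous_const)
    have hcont : ∀ a b, Continuous fun w : A → A → ℝ => w a b := fun a b => by fun_prop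
    exact ((isClosed_le continuous_const (hcont a b)).inter
      (isClosed_eq (hcont a b) (hcont b a))).inter
        (isClosed_iInter fun _ => isClosed_eq (hcont a b) continuous_const)
  · rintro w ⟨hw, hs⟩
    refine ⟨hw.nonneg, fun a b => ?_⟩
    calc w a b ≤ ∑ b, w a b :=
          Finset.single_le_sum (fun b _ => hw.nonneg a b) (Finset.mem_univ b)
      _ ≤ ∑ a, ∑ b, w a b := Finset.single_le_sum (f := fun a => ∑ b, w a b)
          (fun a _ => Finset.sum_nonneg fun b _ => hw.nonneg a b) (Finset.mem_univ a)
      _ ≤ s := hs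

lemma exists_minimal_one_le_excess (hw : IsEdgeWeight ⊤ w)
    (hpos : ∀ σ : Equiv.Perm A, Function.Involutive σ → 0 < excess z σ w) :
    ∃ w', IsEdgeWeight ⊤ w' ∧
      (∀ σ : Equiv.Perm A, Function.Involutive σ → 1 ≤ excess z σ w') ∧
      ∀ w'', IsEdgeWeight ⊤ w'' →
        (∀ σ : Equiv.Perm A, Function.Involutive σ → 1 ≤ excess z σ w'') →
        ∑ a, ∑ b, w' a b ≤ ∑ a, ∑ b, w'' a b := by
  obtain ⟨c, hc0, hc⟩ : ∃ c : ℝ, 0 ≤ c ∧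
      ∀ σ : Equiv.Perm A, Function.Involutive σ → 1 ≤ c * excess z σ w := by
    refine ⟨∑ σ : Equiv.Perm A, |(excess z σ w)⁻¹|, by positivity, fun σ hσ => ?_⟩
    rw [← div_le_iff₀ (hpos σ hσ), one_div]
    exact (le_abs_self _).trans (Finset.single_le_sum (f := fun σ => |(excess z σ w)⁻¹|)
      (fun _ _ => abs_nonneg _) (Finset.mem_univ σ))
  have hcw : IsEdgeWeight ⊤ fun a b => c * w a b :=
    ⟨fun a b => mul_nonneg hc0 (hw.nonneg a b), fun a b => by rw [hw.symm],
      fun h => by rw [hw.eq_zero h, mul_zero]⟩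
  have hcex : ∀ σ : Equiv.Perm A, Function.Involutive σ → 1 ≤ excess z σ fun a b => c * w a b := by
    simpa only [excess, mul_sub, Finset.mul_sum, ← mul_assoc] using hc
  have hclosed : IsClosed {w | ∀ σ : Equiv.Perm A, Function.Involutive σ → 1 ≤ excess z σ w} := by
    simp only [Set.ofPred_forall]
    refine isClosed_iInter fun σ => isClosed_iInter fun _ => isClosed_le continuous_const ?_
    unfold excess
    fun_prop
  obtain ⟨w', ⟨⟨hw', hs'⟩, hex'⟩, hmin⟩ :=
    ((isCompact_setOf_isEdgeWeight_sum_le ⊤ (∑ a, ∑ b, c * w a b)).inter_right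
      hclosed).exists_isMinOn ⟨_, ⟨hcw, le_rfl⟩, hcex⟩
      (f := fun w => ∑ a, ∑ b, w a b) (by fun_prop)
  refine ⟨w', hw', hex', fun w'' hw'' hex'' => ?_⟩
  rcases le_total (∑ a, ∑ b, w'' a b) (∑ a, ∑ b, c * w a b) with h | h
  · exact hmin ⟨⟨hw'', h⟩, hex''⟩
  · exact hs'.trans h

lemma eventually_mul_le (c : ℝ) {δ : ℝ} (hδ : 0 < δ) :
    ∀ᶠ t : ℝ in nhdsWithin 0 (Set.Ioi 0), t * c ≤ δ := by
  have hlim : Filter.Tendsto (fun t : ℝ => t * c) (nhds 0) (nhds 0) :=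
    (continuous_mul_const c).tendsto' 0 0 (zero_mul c)
  exact nhdsWithin_le_nhds (hlim.eventually (eventually_le_nhds hδ))

lemma excess_sub_ite (D : A → A → Prop) (σ : Equiv.Perm A) (t : ℝ) :
    excess z σ (fun a b => w a b - if D a b then t else 0) =
      excess z σ w - t * (∑ a, ∑ b, if D a b then z a b else 0) +
        t * ({a | D a (σ a)} : Finset A).card := by
  rw [← Finset.sum_boole]
  simp only [excess, sub_mul, Finset.sum_sub_distrib, Finset.mul_sum, mul_ite,
    mul_zero, ite_mul, zero_mul, mul_one]
  ring

/-- Lowering `w` on `D` by a small amount keeps every excess at least `1`. -/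
lemma IsTight.exists_sum_lt {D : A → A → Prop} (hD : IsTight w z D) (hw : IsEdgeWeight ⊤ w)
    (hex : ∀ σ : Equiv.Perm A, Function.Involutive σ → 1 ≤ excess z σ w) {a₀ b₀ : A}
    (hD₀ : D a₀ b₀) :
    ∃ w', IsEdgeWeight ⊤ w' ∧
      (∀ σ : Equiv.Perm A, Function.Involutive σ → 1 ≤ excess z σ w') ∧
      ∑ a, ∑ b, w' a b < ∑ a, ∑ b, w a b := by
  set zD : ℝ := ∑ a, ∑ b, if D a b then z a b else 0
  have htw : ∀ᶠ t : ℝ in nhdsWithin 0 (Set.Ioi 0), ∀ a b, D a b → t * 1 ≤ w a b := by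
    simp only [Filter.eventually_all]
    exact fun a b hab => eventually_mul_le 1 (hD.pos a b hab)
  have htσ : ∀ᶠ t : ℝ in nhdsWithin 0 (Set.Ioi 0), ∀ σ, 1 < excess z σ w →
      t * zD ≤ excess z σ w - 1 := by
    simp only [Filter.eventually_all]
    exact fun σ hσ => eventually_mul_le zD (sub_pos.2 hσ)
  obtain ⟨t, htw, htσ, ht : 0 < t⟩ := (htw.and (htσ.and self_mem_nhdsWithin)).exists
  simp only [mul_one] at htw
  let w' : A → A → ℝ := fun a b => w a b - if D a b then t else 0
  refine ⟨w', ⟨fun a b => ?_, fun a b => ?_, fun {a b} hab => ?_⟩, fun σ hσ => ?_, ?_⟩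
  · by_cases h : D a b
    · simpa [w', h] using htw a b h
    · simpa [w', h] using hw.nonneg a b
  · simp only [w', hw.symm a b, show D a b ↔ D b a from ⟨hD.symm a b, hD.symm b a⟩]
  · have hnD : ¬ D a b := fun h => (hD.pos a b h).ne' (hw.eq_zero hab)
    simp [w', hnD, hw.eq_zero hab]
  · rw [excess_sub_ite]
    rcases (hex σ hσ).lt_or_eq with hlt | heq1
    · have hnn : 0 ≤ t * ({a | D a (σ a)} : Finset A).card := by positivity
      linarith [htσ σ hlt]
    · have hopt : IsOptimal w σ := by
        refine ⟨hσ, fun τ hτ => ?_⟩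
        have := hex τ hτ
        unfold excess at this heq1
        linarith
      linarith [mul_le_mul_of_nonneg_left (hD.sum_le σ hopt) ht.le]
  · have hle : ∀ a b, w' a b ≤ w a b := fun a b => by
      simp only [w']
      split_ifs <;> linarith
    refine Finset.sum_lt_sum (fun a _ => Finset.sum_le_sum fun b _ => hle a b)
      ⟨a₀, Finset.mem_univ _, Finset.sum_lt_sum (fun b _ => hle a₀ b) ⟨b₀, Finset.mem_univ _, ?_⟩⟩
    simp [w', hD₀, ht]

/-- The inequality form of Edmonds' description of the matching polytope. -/
theorem exists_involutive_ge (hw : IsEdgeWeight ⊤ w) (hz : IsEdgeWeight ⊤ z)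
    (hdeg : ∀ a, ∑ b, z a b ≤ 1)
    (hodd : ∀ U : Finset A, Odd U.card → ∑ a ∈ U, ∑ b ∈ U, z a b + 1 ≤ U.card) :
    ∃ σ : Equiv.Perm A, Function.Involutive σ ∧ ∑ a, ∑ b, w a b * z a b ≤ ∑ a, w a (σ a) := by
  by_contra! hcon
  obtain ⟨w', hw', hex, hmin⟩ :=
    exists_minimal_one_le_excess hw fun σ hσ => sub_pos.2 (hcon σ hσ)
  obtain ⟨u, v, huv⟩ : ∃ u v, 0 < w' u v := by
    by_contra! hle
    have hzero : ∀ a b, w' a b = 0 := fun a b => le_antisymm (hle a b) (hw'.nonneg a b)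
    have h1 := hex 1 fun _ => rfl
    simp [excess, hzero] at h1
    linarith
  obtain ⟨D, hD, a, b, hab⟩ := exists_isTight hw' hz hdeg hodd huv
  obtain ⟨w'', hw'', hex'', hlt⟩ := hD.exists_sum_lt hw' hex hab
  exact (hmin w'' hw'' hex'').not_gt hlt

end Domination

section ColourMatchings

open scoped Classical

lemma pow_card_filter_insert {α M : Type*} [DecidableEq α] [Monoid M] {c : α} {T : Finset α}
    (hc : c ∉ T) (P : α → Prop) [DecidablePred P] (y : M) :
    y ^ ((insert c T).filter P).card = y ^ (T.filter P).card * if P c then y else 1 := by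
  rw [Finset.filter_insert]
  split_ifs
  · rw [Finset.card_insert_of_notMem fun h => hc (Finset.mem_filter.1 h).1, pow_succ]
  · rw [mul_one]

variable {A ι : Type*} {z : A → A → ℝ}

/-- The weight of a pair of points: the total weight `p` of the indices in `R` whose pair
`(u x, v x)` is that pair, in either order. -/
noncomputable def pairWeight (R : Finset ι) (u v : ι → A) (p : ι → ℝ) (a b : A) : ℝ :=
  ∑ x ∈ R, if s(u x, v x) = s(a, b) then p x else 0

lemma isEdgeWeight_pairWeight {R : Finset ι} {u v : ι → A} (huv : ∀ x ∈ R, u x ≠ v x) {p : ι → ℝ}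
    (hp : ∀ x ∈ R, 0 ≤ p x) : IsEdgeWeight ⊤ (pairWeight R u v p) where
  nonneg a b := Finset.sum_nonneg fun x hx => by
    split_ifs
    exacts [hp x hx, le_rfl]
  symm a b := by simp only [pairWeight, Sym2.eq_swap (a := a)]
  eq_zero {a b} hab := Finset.sum_eq_zero fun x hx => if_neg fun h => by
    have := huv x hx
    grind [Sym2.eq_iff, top_adj]

variable [Fintype A]

lemma sum_pairWeight_mul {R : Finset ι} {u v : ι → A} (huv : ∀ x ∈ R, u x ≠ v x) (p : ι → ℝ)
    (f : A → A → ℝ) :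
    ∑ a, ∑ b, pairWeight R u v p a b * f a b =
      ∑ x ∈ R, p x * (f (u x) (v x) + f (v x) (u x)) := by
  have hsplit : ∀ x ∈ R, ∀ a b, (if s(u x, v x) = s(a, b) then p x else 0) * f a b =
      (if u x = a then if v x = b then p x * f a b else 0 else 0) +
        if v x = a then if u x = b then p x * f a b else 0 else 0 := by
    intro x hx a b
    have := huv x hx
    simp only [Sym2.eq_iff]
    split_ifs <;> grind
  calc ∑ a, ∑ b, pairWeight R u v p a b * f a b
      = ∑ x ∈ R, ∑ a, ∑ b, (if s(u x, v x) = s(a, b) then p x else 0) * f a b := by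
        simp only [pairWeight, Finset.sum_mul]
        rw [Finset.sum_comm (s := R)]
        exact Finset.sum_congr rfl fun a _ => Finset.sum_comm
    _ = ∑ x ∈ R, p x * (f (u x) (v x) + f (v x) (u x)) := by
        refine Finset.sum_congr rfl fun x hx => ?_
        simp only [hsplit x hx]
        simp [Finset.sum_add_distrib, mul_add]

lemma exists_involutive_hits (hz : IsEdgeWeight ⊤ z) (hdeg : ∀ a, ∑ b, z a b ≤ 1)
    (hodd : ∀ U : Finset A, Odd U.card → ∑ a ∈ U, ∑ b ∈ U, z a b + 1 ≤ U.card)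
    (R : Finset ι) (u v : ι → A) (huv : ∀ x ∈ R, u x ≠ v x) (p : ι → ℝ) (hp : ∀ x ∈ R, 0 ≤ p x) :
    ∃ σ : Equiv.Perm A, Function.Involutive σ ∧
      ∑ x ∈ R, p x * z (u x) (v x) ≤ ∑ x ∈ R, p x * if σ (u x) = v x then 1 else 0 := by
  obtain ⟨σ, hσ, hle⟩ := exists_involutive_ge (isEdgeWeight_pairWeight huv hp) hz hdeg hodd
  refine ⟨σ, hσ, ?_⟩
  have hσw : ∑ a, pairWeight R u v p a (σ a) =
      ∑ a, ∑ b, pairWeight R u v p a b * if σ a = b then 1 else 0 := by simp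
  have hswap : ∀ x, σ (v x) = u x ↔ σ (u x) = v x := fun x =>
    ⟨fun h => by rw [← h, hσ], fun h => by rw [← h, hσ]⟩
  rw [hσw, sum_pairWeight_mul huv, sum_pairWeight_mul huv] at hle
  simp only [hz.symm (v _), hswap, ← two_mul, mul_left_comm _ (2 : ℝ), ← Finset.mul_sum] at hle
  linarith

/-- The method of conditional expectations, as if each colour drew a random matching in which the
pair `(u x, v x)` occurs with probability `z (u x) (v x)`. -/
lemma exists_involutive_potential_le (hz : IsEdgeWeight ⊤ z) (hdeg : ∀ a, ∑ b, z a b ≤ 1)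
    (hodd : ∀ U : Finset A, Odd U.card → ∑ a ∈ U, ∑ b ∈ U, z a b + 1 ≤ U.card)
    (R : Finset ι) (u v : ι → A) (huv : ∀ x ∈ R, u x ≠ v x) (L : ι → Finset ℤ) {q : ℝ}
    (hq0 : 0 ≤ q) (hq1 : q ≤ 1) (T : Finset ℤ) (p : ι → ℝ) (hp : ∀ x ∈ R, 0 ≤ p x) :
    ∃ σ : ℤ → Equiv.Perm A, (∀ c, Function.Involutive (σ c)) ∧
      ∑ x ∈ R, p x * q ^ (T.filter fun c => c ∈ L x ∧ σ c (u x) = v x).card ≤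
        ∑ x ∈ R, p x * (1 - (1 - q) * z (u x) (v x)) ^ (T.filter fun c => c ∈ L x).card := by
  have hbase : ∀ x, 0 ≤ 1 - (1 - q) * z (u x) (v x) := fun x => by
    have hz1 : z (u x) (v x) ≤ 1 :=
      (Finset.single_le_sum (fun b _ => hz.nonneg (u x) b) (Finset.mem_univ _)).trans (hdeg _)
    nlinarith [hz.nonneg (u x) (v x)]
  induction T using Finset.induction_on generalizing p with
  | empty =>
    exact ⟨fun _ => 1, fun _ _ => rfl,
      le_of_eq (by simp only [Finset.filter_empty, Finset.card_empty, pow_zero])⟩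
  | insert c T hc ih =>
    obtain ⟨σ, hσ, hle⟩ := ih
      (fun x => p x * if c ∈ L x then 1 - (1 - q) * z (u x) (v x) else 1)
      fun x hx => mul_nonneg (hp x hx) (by split_ifs; exacts [hbase x, zero_le_one])
    let P : ι → ℝ := fun x => p x * q ^ (T.filter fun c => c ∈ L x ∧ σ c (u x) = v x).card
    obtain ⟨τ, hτ, hτle⟩ := exists_involutive_hits hz hdeg hodd (R.filter fun x => c ∈ L x) u v
      (fun x hx => huv x (Finset.mem_filter.1 hx).1) P
      (fun x hx => mul_nonneg (hp x (Finset.mem_filter.1 hx).1) (pow_nonneg hq0 _))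
    refine ⟨Function.update σ c τ, fun c' => ?_, ?_⟩
    · by_cases h : c' = c
      · subst h
        simpa using hτ
      · simpa [h] using hσ c'
    have hT : ∀ x, (T.filter fun c' => c' ∈ L x ∧ Function.update σ c τ c' (u x) = v x) =
        T.filter fun c => c ∈ L x ∧ σ c (u x) = v x := fun x =>
      Finset.filter_congr fun c' hc' => by
        rw [Function.update_of_ne (ne_of_mem_of_not_mem hc' hc)]
    simp only [pow_card_filter_insert hc, hT, Function.update_self]
    calc ∑ x ∈ R, p x * (_ * if c ∈ L x ∧ τ (u x) = v x then q else 1)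
        = ∑ x ∈ R, P x -
          (1 - q) * ∑ x ∈ R with c ∈ L x, P x * if τ (u x) = v x then 1 else 0 := by
          rw [Finset.sum_filter, Finset.mul_sum, ← Finset.sum_sub_distrib]
          refine Finset.sum_congr rfl fun x _ => ?_
          by_cases h1 : c ∈ L x <;> by_cases h2 : τ (u x) = v x <;> simp [h1, h2, P]
          ring
      _ ≤ ∑ x ∈ R, P x - (1 - q) * ∑ x ∈ R with c ∈ L x, P x * z (u x) (v x) :=
          sub_le_sub_left (mul_le_mul_of_nonneg_left hτle (sub_nonneg.2 hq1)) _
      _ = _ := by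
          rw [Finset.sum_filter, Finset.mul_sum, ← Finset.sum_sub_distrib]
          refine Finset.sum_congr rfl fun x _ => ?_
          by_cases h1 : c ∈ L x <;> simp only [h1, if_true, if_false, P] <;> ring
      _ ≤ _ := hle
      _ = _ := Finset.sum_congr rfl fun x _ => by ring

lemma exists_involutive_many_hits (hz : IsEdgeWeight ⊤ z) (hdeg : ∀ a, ∑ b, z a b ≤ 1)
    (hodd : ∀ U : Finset A, Odd U.card → ∑ a ∈ U, ∑ b ∈ U, z a b + 1 ≤ U.card)
    (R : Finset ι) (u v : ι → A) (huv : ∀ x ∈ R, u x ≠ v x) (L : ι → Finset ℤ) {q : ℝ}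
    (hq0 : 0 < q) (hq1 : q ≤ 1) (h : ι → ℕ)
    (hsum : ∑ x ∈ R, (1 - (1 - q) * z (u x) (v x)) ^ (L x).card / q ^ h x < 1) :
    ∃ σ : ℤ → Equiv.Perm A, (∀ c, Function.Involutive (σ c)) ∧
      ∀ x ∈ R, h x ≤ ((L x).filter fun c => σ c (u x) = v x).card := by
  obtain ⟨σ, hσ, hle⟩ := exists_involutive_potential_le hz hdeg hodd R u v huv L hq0.le hq1
    (R.biUnion L) (fun x => 1 / q ^ h x) fun x _ => by positivity
  refine ⟨σ, hσ, fun x hx => ?_⟩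
  by_contra! hlt
  have hT : ∀ x ∈ R, (R.biUnion L).filter (fun c => c ∈ L x) = L x := fun x hx => by
    rw [Finset.filter_mem_eq_inter, Finset.inter_eq_right.2 (Finset.subset_biUnion_of_mem L hx)]
  have hlow : (1 : ℝ) ≤ 1 / q ^ h x *
      q ^ ((R.biUnion L).filter fun c => c ∈ L x ∧ σ c (u x) = v x).card := by
    rw [← Finset.filter_filter, hT x hx, one_div_mul_eq_div, one_le_div (by positivity)]
    exact pow_le_pow_of_le_one hq0.le hq1 hlt.le
  refine hsum.not_ge ((hlow.trans (Finset.single_le_sum (f := fun x => 1 / q ^ h x *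
    q ^ ((R.biUnion L).filter fun c => c ∈ L x ∧ σ c (u x) = v x).card)
    (fun x _ => by positivity) hx)).trans (hle.trans_eq (Finset.sum_congr rfl fun x hx => ?_)))
  rw [hT x hx, one_div_mul_eq_div]

lemma one_sub_mul_pow_le_exp {s y t : ℝ} {N : ℕ} (hs : 0 ≤ s) (hsy : s * y ≤ 1) (ht : t ≤ y * N) :
    (1 - s * y) ^ N ≤ Real.exp (-(s * t)) := by
  calc (1 - s * y) ^ N ≤ Real.exp (-(s * y)) ^ N :=
        pow_le_pow_left₀ (sub_nonneg.2 hsy) (Real.one_sub_le_exp_neg _) N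
    _ = Real.exp (-(s * (y * N))) := by rw [← Real.exp_nat_mul]; ring_nf
    _ ≤ Real.exp (-(s * t)) :=
        Real.exp_le_exp.2 (neg_le_neg (mul_le_mul_of_nonneg_left ht hs))

lemma inv_one_sub_pow_le_exp {s t : ℝ} {h : ℕ} (hs0 : 0 ≤ s) (hs1 : s < 1) (ht : h ≤ t) :
    ((1 - s) ^ h)⁻¹ ≤ Real.exp (t * (s / (1 - s))) := by
  have hpos : 0 < 1 - s := sub_pos.2 hs1
  have hinv : (1 - s)⁻¹ = s / (1 - s) + 1 := by field_simp; ring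
  calc ((1 - s) ^ h)⁻¹ = (s / (1 - s) + 1) ^ h := by rw [← inv_pow, hinv]
    _ ≤ Real.exp (s / (1 - s)) ^ h :=
        pow_le_pow_left₀ (by positivity) (Real.add_one_le_exp _) h
    _ = Real.exp (h * (s / (1 - s))) := by rw [← Real.exp_nat_mul]
    _ ≤ Real.exp (t * (s / (1 - s))) :=
        Real.exp_le_exp.2 (mul_le_mul_of_nonneg_right ht (by positivity))

lemma exists_chernoff_bound {ζ : ℝ} (hζ0 : 0 < ζ) (hζ1 : ζ ≤ 1) :
    ∃ q c : ℝ, 0 < q ∧ q ≤ 1 ∧ 0 < c ∧ ∀ (y m : ℝ) (N h : ℕ), y ≤ 1 → 0 ≤ m →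
      (1 + ζ) * m ≤ y * N → (h : ℝ) ≤ (1 + ζ / 2) * m →
      (1 - (1 - q) * y) ^ N / q ^ h ≤ Real.exp (-(c * m)) := by
  obtain ⟨s, rfl⟩ : ∃ s, ζ = 8 * s := ⟨ζ / 8, by ring⟩
  refine ⟨1 - s, 2 * s ^ 2, by linarith, by linarith, by nlinarith, ?_⟩
  intro y m N h hy1 hm hN hh
  have hs0 : 0 < s := by linarith
  have hs1 : 0 < 1 - s := by linarith
  have hfrac : (1 + 4 * s) * (s / (1 - s)) ≤ s * (1 + 6 * s) := by
    rw [← mul_div_assoc, div_le_iff₀ hs1]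
    nlinarith [mul_nonneg (sq_nonneg s) (sub_nonneg.2 hζ1)]
  rw [sub_sub_cancel, div_eq_mul_inv]
  calc (1 - s * y) ^ N * ((1 - s) ^ h)⁻¹
      ≤ Real.exp (-(s * ((1 + 8 * s) * m))) * Real.exp ((1 + 8 * s / 2) * m * (s / (1 - s))) :=
        mul_le_mul (one_sub_mul_pow_le_exp hs0.le (by nlinarith) hN)
          (inv_one_sub_pow_le_exp hs0.le (by linarith) hh) (by positivity) (Real.exp_nonneg _)
    _ ≤ Real.exp (-(2 * s ^ 2 * m)) := by
        rw [← Real.exp_add]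
        refine Real.exp_le_exp.2 ?_
        nlinarith [mul_le_mul_of_nonneg_left hfrac hm]

lemma exists_forall_involutive_many_hits {ζ : ℝ} (hζ0 : 0 < ζ) (hζ1 : ζ ≤ 1) :
    ∃ c : ℝ, 0 < c ∧ ∀ (A : Type*) (ι : Type*) [Fintype A] (z : A → A → ℝ), IsEdgeWeight ⊤ z →
      (∀ a, ∑ b, z a b ≤ 1) →
      (∀ U : Finset A, Odd U.card → ∑ a ∈ U, ∑ b ∈ U, z a b + 1 ≤ U.card) →
      ∀ (R : Finset ι) (u v : ι → A) (L : ι → Finset ℤ) (m : ι → ℝ) (h : ι → ℕ),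
      (∀ x ∈ R, u x ≠ v x) → (∀ x ∈ R, 0 ≤ m x) →
      (∀ x ∈ R, (1 + ζ) * m x ≤ z (u x) (v x) * (L x).card) →
      (∀ x ∈ R, (h x : ℝ) ≤ (1 + ζ / 2) * m x) → ∑ x ∈ R, Real.exp (-(c * m x)) < 1 →
      ∃ σ : ℤ → Equiv.Perm A, (∀ i, Function.Involutive (σ i)) ∧
        ∀ x ∈ R, h x ≤ ((L x).filter fun i => σ i (u x) = v x).card := by
  obtain ⟨q, c, hq0, hq1, hc, htail⟩ := exists_chernoff_bound hζ0 hζ1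
  refine ⟨c, hc, fun A ι _ z hz hdeg hodd R u v L m h huv hm hL hh hsum => ?_⟩
  refine exists_involutive_many_hits hz hdeg hodd R u v huv L hq0 hq1 h (hsum.trans_le' ?_)
  refine Finset.sum_le_sum fun x hx => htail _ _ _ _ ?_ (hm x hx) (hL x hx) (hh x hx)
  exact (Finset.single_le_sum (fun b _ => hz.nonneg (u x) b) (Finset.mem_univ _)).trans (hdeg _)

end ColourMatchings

/-! ### A fractional matching from a cluster -/

section FractionalMatching

variable {A : Type*}

lemma sum_div_le_div {ν o : A → ℝ} {r : ℝ} {s : Finset A} (hν : ∀ c ∈ s, 0 ≤ ν c) (hr : r ≤ 1 / 2)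
    (ho : ∀ c ∈ s, o c ≤ 1 / 2) :
    ∑ c ∈ s, ν c / (3 / 2 - r - o c) ≤ (∑ c ∈ s, ν c) / (1 - r) := by
  rw [Finset.sum_div]
  refine Finset.sum_le_sum fun c hc => ?_
  exact div_le_div_of_nonneg_left (hν c hc) (by linarith) (by linarith [ho c hc])

lemma sum_div_le_sub_sum {ν o : A → ℝ} {r : ℝ} {s : Finset A} (hν : ∀ c ∈ s, 0 ≤ ν c) (hr₀ : 0 ≤ r)
    (hr : r ≤ 1 / 2) (ho₀ : ∀ c ∈ s, 0 ≤ o c) (ho : ∀ c ∈ s, o c ≤ 1 / 2)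
    (hsum : ∑ c ∈ s, ν c + r ≤ 1) :
    ∑ c ∈ s, ν c / (3 / 2 - r - o c) ≤
      ∑ c ∈ s, ν c + r - 2 / 3 * ∑ c ∈ s, ν c * (1 / 2 - o c) := by
  have hr' : 0 < 1 - r := by linarith
  have hterm : ∀ c ∈ s, ν c / (3 / 2 - r - o c) ≤
      (ν c - 2 / 3 * (ν c * (1 / 2 - o c))) / (1 - r) := by
    intro c hc
    have hc₀ := ho₀ c hc
    have hc₁ := ho c hc
    rw [div_le_div_iff₀ (by linarith) hr']
    have hprod : 0 ≤ ν c * (1 / 2 - o c) * (3 / 2 - (3 / 2 - r - o c)) :=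
      mul_nonneg (mul_nonneg (hν c hc) (by linarith)) (by linarith)
    nlinarith
  have hT : 0 ≤ ∑ c ∈ s, ν c * (1 / 2 - o c) :=
    Finset.sum_nonneg fun c hc => mul_nonneg (hν c hc) (by linarith [ho c hc])
  refine (Finset.sum_le_sum hterm).trans ?_
  rw [← Finset.sum_div, Finset.sum_sub_distrib, ← Finset.mul_sum, div_le_iff₀ hr']
  nlinarith [mul_nonneg (sub_nonneg.2 hsum) hr₀, mul_nonneg hT hr₀]

variable {μ : A → A → ℝ} {o b : A → ℝ} {Y : Finset A}

lemma odd_set_of_one_le (hμ : IsEdgeWeight ⊤ μ) (ho₀ : ∀ a ∈ Y, 0 ≤ o a) (hb₀ : ∀ a ∈ Y, 0 ≤ b a)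
    (hsum : ∀ a ∈ Y, ∑ c ∈ Y, μ a c + b a + o a ≤ 1) (ho : ∀ a ∈ Y, o a ≤ 1 / 2)
    (hb : 1 ≤ ∑ a ∈ Y, b a) :
    ∑ a ∈ Y, ∑ c ∈ Y, μ a c / (3 / 2 - o a - o c) + 1 ≤ Y.card := by
  have hvertex : ∀ a ∈ Y, ∑ c ∈ Y, μ a c / (3 / 2 - o a - o c) ≤ 1 - b a := by
    intro a ha
    refine (sum_div_le_div (fun c _ => hμ.nonneg a c) (ho a ha) ho).trans ?_
    rw [div_le_iff₀ (by linarith [ho a ha])]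
    nlinarith [hsum a ha, mul_nonneg (hb₀ a ha) (ho₀ a ha)]
  have htot := Finset.sum_le_sum hvertex
  rw [Finset.sum_sub_distrib, Finset.sum_const, nsmul_eq_mul, mul_one] at htot
  linarith

lemma odd_set_of_card_eq_three (hμ : IsEdgeWeight ⊤ μ) (ho₀ : ∀ a ∈ Y, 0 ≤ o a)
    (hsum : ∀ a ∈ Y, ∑ c ∈ Y, μ a c + b a + o a ≤ 1) (hob : ∑ a ∈ Y, o a ≤ ∑ a ∈ Y, b a)
    (hlt : ∑ a ∈ Y, o a < 1) (hY : Y.card = 3) :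
    ∑ a ∈ Y, ∑ c ∈ Y, μ a c / (3 / 2 - o a - o c) + 1 ≤ Y.card := by
  classical
  have hpos : 0 < 3 / 2 - ∑ a ∈ Y, o a := by linarith
  have hterm : ∀ a ∈ Y, ∀ c ∈ Y,
      μ a c / (3 / 2 - o a - o c) ≤ μ a c / (3 / 2 - ∑ a ∈ Y, o a) := by
    intro a ha c hc
    obtain rfl | hac := eq_or_ne a c
    · simp [hμ.diag]
    · have hpair : ∑ x ∈ {a, c}, o x ≤ ∑ a ∈ Y, o a :=
        Finset.sum_le_sum_of_subset_of_nonneg (by simp [Finset.insert_subset_iff, ha, hc])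
          fun x hx _ => ho₀ x hx
      rw [Finset.sum_pair hac] at hpair
      exact div_le_div_of_nonneg_left (hμ.nonneg a c) hpos (by linarith)
  have htot : ∑ a ∈ Y, ∑ c ∈ Y, μ a c ≤ 3 - 2 * ∑ a ∈ Y, o a := by
    have hle := Finset.sum_le_sum hsum
    rw [Finset.sum_add_distrib, Finset.sum_add_distrib, Finset.sum_const, hY] at hle
    norm_num at hle
    linarith
  have hle := Finset.sum_le_sum fun a ha => Finset.sum_le_sum (hterm a ha)
  simp_rw [← Finset.sum_div] at hle
  have htwo : (∑ a ∈ Y, ∑ c ∈ Y, μ a c) / (3 / 2 - ∑ a ∈ Y, o a) ≤ 2 := by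
    rw [div_le_iff₀ hpos]
    linarith
  rw [hY]
  push_cast
  linarith

lemma odd_set_of_five_le_card (hμ : IsEdgeWeight ⊤ μ) (ho₀ : ∀ a ∈ Y, 0 ≤ o a)
    (hb₀ : ∀ a ∈ Y, 0 ≤ b a) (hsum : ∀ a ∈ Y, ∑ c ∈ Y, μ a c + b a + o a ≤ 1)
    (ho : ∀ a ∈ Y, o a ≤ 1 / 2) (hob : ∑ a ∈ Y, o a ≤ ∑ a ∈ Y, b a) (hlt : ∑ a ∈ Y, o a < 1)
    (hY : 5 ≤ Y.card) :
    ∑ a ∈ Y, ∑ c ∈ Y, μ a c / (3 / 2 - o a - o c) + 1 ≤ Y.card := by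
  have hvertex : ∀ a ∈ Y, ∑ c ∈ Y, μ a c / (3 / 2 - o a - o c) ≤
      ∑ c ∈ Y, μ a c + o a - 2 / 3 * ∑ c ∈ Y, μ a c * (1 / 2 - o c) := fun a ha =>
    sum_div_le_sub_sum (fun c _ => hμ.nonneg a c) (ho₀ a ha) (ho a ha) ho₀ ho
      (by linarith [hsum a ha, hb₀ a ha])
  have hswap : ∑ a ∈ Y, ∑ c ∈ Y, μ a c * (1 / 2 - o c) =
      ∑ c ∈ Y, (∑ a ∈ Y, μ c a) * (1 / 2 - o c) := by
    rw [Finset.sum_comm]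
    simp only [Finset.sum_mul, hμ.symm]
  have hlow : ∀ c ∈ Y, ∑ a ∈ Y, μ c a / 2 - o c ≤ (∑ a ∈ Y, μ c a) * (1 / 2 - o c) := by
    intro c hc
    rw [← Finset.sum_div]
    nlinarith [mul_nonneg (ho₀ c hc) (by linarith [hsum c hc, hb₀ c hc, ho₀ c hc] :
      0 ≤ 1 - ∑ a ∈ Y, μ c a)]
  have htot := Finset.sum_le_sum hvertex
  have hlow' := Finset.sum_le_sum hlow
  have hmass := Finset.sum_le_sum hsum
  simp only [Finset.sum_sub_distrib, Finset.sum_add_distrib, ← Finset.mul_sum, hswap,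
    ← Finset.sum_div, Finset.sum_const, nsmul_eq_mul, mul_one] at htot hlow' hmass
  have hY' : (5 : ℝ) ≤ Y.card := by exact_mod_cast hY
  linarith

lemma odd_set_inequality (hμ : IsEdgeWeight ⊤ μ) (ho₀ : ∀ a ∈ Y, 0 ≤ o a)
    (hb₀ : ∀ a ∈ Y, 0 ≤ b a) (hsum : ∀ a ∈ Y, ∑ c ∈ Y, μ a c + b a + o a ≤ 1)
    (ho : ∀ a ∈ Y, o a ≤ 1 / 2) (hob : ∑ a ∈ Y, o a ≤ ∑ a ∈ Y, b a) (hY : Odd Y.card) :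
    ∑ a ∈ Y, ∑ c ∈ Y, μ a c / (3 / 2 - o a - o c) + 1 ≤ Y.card := by
  by_cases hlt : ∑ a ∈ Y, o a < 1
  · obtain ⟨m, hm⟩ := hY
    obtain hone | hthree | hfive : Y.card = 1 ∨ Y.card = 3 ∨ 5 ≤ Y.card := by omega
    · obtain ⟨a, rfl⟩ := Finset.card_eq_one.1 hone
      simp [hμ.diag]
    · exact odd_set_of_card_eq_three hμ ho₀ hsum hob hlt hthree
    · exact odd_set_of_five_le_card hμ ho₀ hb₀ hsum ho hob hlt hfive
  · exact odd_set_of_one_le hμ ho₀ hb₀ hsum ho ((not_lt.1 hlt).trans hob)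

/-- The fractional matching assigned to the normalised bundle sizes `μ` and outer loads `o` of a
cluster. -/
noncomputable def bundleShare (ε : ℝ) (μ : A → A → ℝ) (o : A → ℝ) (a c : A) : ℝ :=
  (1 + ε / 4) * μ a c / (3 / 2 + ε - o a - o c)

open scoped Classical in
/-- Normalised bundle sizes `μ` and outer loads `o` of a cluster in which the outer load of every
set of vertices is, up to `ε`, at most the size of the bundles leaving the set. -/
structure IsBalancedLoad [Fintype A] (ε : ℝ) (μ : A → A → ℝ) (o : A → ℝ) : Prop where
  weight : IsEdgeWeight ⊤ μ
  outer_nonneg (a : A) : 0 ≤ o a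
  sum_add_le_one (a : A) : ∑ c, μ a c + o a ≤ 1
  outer_le_cut (Y : Finset A) : ∑ a ∈ Y, o a ≤ ∑ a ∈ Y, ∑ c ∈ Yᶜ, μ a c + ε / 3 * Y.card

namespace IsBalancedLoad

variable [Fintype A] {ε : ℝ}

lemma outer_le_half (h : IsBalancedLoad ε μ o) (a : A) : o a ≤ 1 / 2 + ε / 6 := by
  classical
  have hcut := h.outer_le_cut {a}
  have hsub : ∑ c ∈ ({a} : Finset A)ᶜ, μ a c ≤ ∑ c, μ a c :=
    Finset.sum_le_sum_of_subset_of_nonneg (Finset.subset_univ _) fun c _ _ => h.weight.nonneg a c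
  have hsum := h.sum_add_le_one a
  simp only [Finset.sum_singleton, Finset.card_singleton, Nat.cast_one, mul_one] at hcut
  have : ∑ c ∈ ({a} : Finset A)ᶜ, μ a c + o a ≤ 1 := by linarith
  linarith

lemma bundleShare_denom_pos (h : IsBalancedLoad ε μ o) (hε : 0 < ε) (a c : A) :
    0 < 3 / 2 + ε - o a - o c := by
  linarith [h.outer_le_half a, h.outer_le_half c]

lemma isEdgeWeight_bundleShare (h : IsBalancedLoad ε μ o) (hε : 0 < ε) :
    IsEdgeWeight ⊤ (bundleShare ε μ o) where
  nonneg a c := div_nonneg (mul_nonneg (by positivity) (h.weight.nonneg a c))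
    (h.bundleShare_denom_pos hε a c).le
  symm a c := by
    rw [bundleShare, bundleShare, h.weight.symm a c]
    congr 1
    ring
  eq_zero hac := by simp [bundleShare, h.weight.eq_zero hac]

lemma isEdgeWeight_div (h : IsBalancedLoad ε μ o) (hε : 0 < ε) :
    IsEdgeWeight ⊤ fun a c => μ a c / (1 + ε / 3) where
  nonneg a c := div_nonneg (h.weight.nonneg a c) (by positivity)
  symm a c := by rw [h.weight.symm a c]
  eq_zero hac := by rw [h.weight.eq_zero hac, zero_div]

lemma outer_div_le_half (h : IsBalancedLoad ε μ o) (hε : 0 < ε) (a : A) :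
    o a / (1 + ε / 3) ≤ 1 / 2 := by
  rw [div_le_iff₀ (by positivity)]
  linarith [h.outer_le_half a]

/- Dividing all sizes by `1 + ε / 3` absorbs the error term of the cut inequality. -/
lemma bundleShare_le (h : IsBalancedLoad ε μ o) (hε : 0 < ε) (hε₁ : ε ≤ 1) (a c : A) :
    bundleShare ε μ o a c ≤
      μ a c / (1 + ε / 3) / (3 / 2 - o a / (1 + ε / 3) - o c / (1 + ε / 3)) := by
  have hden : 0 < 3 / 2 * (1 + ε / 3) - o a - o c := by
    linarith [h.outer_le_half a, h.outer_le_half c]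
  have hscale : (1 + ε / 3) * (3 / 2 - o a / (1 + ε / 3) - o c / (1 + ε / 3)) =
      3 / 2 * (1 + ε / 3) - o a - o c := by
    field_simp
  rw [div_div, hscale, bundleShare, div_le_div_iff₀ (h.bundleShare_denom_pos hε a c) hden,
    mul_comm (1 + ε / 4), mul_assoc]
  refine mul_le_mul_of_nonneg_left ?_ (h.weight.nonneg a c)
  nlinarith [mul_nonneg hε.le (add_nonneg (h.outer_nonneg a) (h.outer_nonneg c))]

lemma sum_bundleShare_le_one (h : IsBalancedLoad ε μ o) (hε : 0 < ε) (hε₁ : ε ≤ 1) (a : A) :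
    ∑ c, bundleShare ε μ o a c ≤ 1 := by
  refine (Finset.sum_le_sum fun c _ => h.bundleShare_le hε hε₁ a c).trans ?_
  refine (sum_div_le_div (fun c _ => (h.isEdgeWeight_div hε).nonneg a c)
    (h.outer_div_le_half hε a) fun c _ => h.outer_div_le_half hε c).trans ?_
  rw [div_le_one (by linarith [h.outer_div_le_half hε a]), ← Finset.sum_div, le_sub_iff_add_le,
    ← add_div, div_le_one (by positivity)]
  linarith [h.sum_add_le_one a]

lemma bundleShare_odd_set (h : IsBalancedLoad ε μ o) (hε : 0 < ε) (hε₁ : ε ≤ 1) {Y : Finset A}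
    (hY : Odd Y.card) : ∑ a ∈ Y, ∑ c ∈ Y, bundleShare ε μ o a c + 1 ≤ Y.card := by
  classical
  have hl : 0 < 1 + ε / 3 := by positivity
  have hle : ∑ a ∈ Y, ∑ c ∈ Y, bundleShare ε μ o a c ≤ _ :=
    Finset.sum_le_sum fun a _ => Finset.sum_le_sum fun c _ => h.bundleShare_le hε hε₁ a c
  refine (add_le_add_left hle 1).trans <| odd_set_inequality
    (o := fun a => o a / (1 + ε / 3)) (b := fun a => (∑ c ∈ Yᶜ, μ a c + ε / 3) / (1 + ε / 3))
    (h.isEdgeWeight_div hε) (fun a _ => div_nonneg (h.outer_nonneg a) hl.le)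
    (fun a _ => ?_) (fun a _ => ?_) (fun a _ => h.outer_div_le_half hε a) ?_ hY
  · exact div_nonneg (add_nonneg (Finset.sum_nonneg fun c _ => h.weight.nonneg a c)
      (by positivity)) hl.le
  · have hsum := h.sum_add_le_one a
    rw [← Finset.sum_add_sum_compl Y] at hsum
    rw [← Finset.sum_div, ← add_div, ← add_div, div_le_one hl]
    linarith
  · rw [← Finset.sum_div, ← Finset.sum_div, Finset.sum_add_distrib, Finset.sum_const,
      nsmul_eq_mul]
    refine div_le_div_of_nonneg_right ?_ hl.le
    linarith [h.outer_le_cut Y]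

end IsBalancedLoad

end FractionalMatching

/-! ### Extending a partial labelling -/

section Extension

open scoped Classical

lemma exists_pairwise_of_forall_insert {V β : Type*} [Nonempty β] {r : V → V → β → β → Prop}
    (hr : ∀ {x y c d}, r x y c d → r y x d c) (C : V → Finset β) (R : Finset V)
    (h : ∀ S ⊆ R, ∀ x ∈ R, x ∉ S → ∀ g : V → β, (∀ y ∈ S, g y ∈ C y) →
      ∃ c ∈ C x, ∀ y ∈ S, r x y c (g y)) :
    ∃ g : V → β, (∀ x ∈ R, g x ∈ C x) ∧ (R : Set V).Pairwise fun x y => r x y (g x) (g y) := by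
  induction R using Finset.induction_on with
  | empty => exact ⟨fun _ => Classical.arbitrary β, by simp, by simp⟩
  | insert a R ha ih =>
    obtain ⟨g, hg, hgr⟩ := ih fun S hS x hx =>
      h S (hS.trans (Finset.subset_insert a R)) x (Finset.mem_insert_of_mem hx)
    obtain ⟨c, hc, hcr⟩ := h R (Finset.subset_insert a R) a (Finset.mem_insert_self a R) ha g hg
    have hval : ∀ x ∈ R, Function.update g a c x = g x := fun x hx =>
      Function.update_of_ne (ne_of_mem_of_not_mem hx ha) c g
    refine ⟨Function.update g a c, fun x hx => ?_, ?_⟩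
    · obtain rfl | hx := Finset.mem_insert.1 hx
      · simpa using hc
      · rw [hval x hx]
        exact hg x hx
    · rw [Finset.coe_insert, Set.pairwise_insert]
      refine ⟨fun x hx y hy hxy => ?_, fun y hy _ => ?_⟩
      · simpa only [hval x hx, hval y hy] using hgr hx hy hxy
      · simpa only [hval y hy, Function.update_self] using ⟨hcr y hy, hr (hcr y hy)⟩

lemma card_le_card_filter_compatible_add {V : Type*} (Y : Finset V) (f : V → ℤ) (S N : V → Prop)
    [DecidablePred S] [DecidablePred N] (k : ℕ) (L : Finset ℤ) :
    L.card ≤ {c ∈ L | ∀ y ∈ Y, (S y → c ≠ f y) ∧ (N y → (k : ℤ) ≤ |c - f y|)}.card +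
      ((Y.filter S).card + 2 * k * (Y.filter N).card) := by
  have hsub : {c ∈ L | ¬ ∀ y ∈ Y, (S y → c ≠ f y) ∧ (N y → (k : ℤ) ≤ |c - f y|)} ⊆
      (Y.filter S).image f ∪ (Y.filter N).biUnion fun y => Finset.Ioo (f y - k) (f y + k) := by
    intro c hc
    obtain ⟨-, hc⟩ := Finset.mem_filter.1 hc
    push Not at hc
    obtain ⟨y, hy, hc⟩ := hc
    by_cases hS : S y ∧ c = f y
    · exact Finset.mem_union_left _
        (Finset.mem_image.2 ⟨y, Finset.mem_filter.2 ⟨hy, hS.1⟩, hS.2.symm⟩)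
    · obtain ⟨hN, hlt⟩ := hc fun h h' => hS ⟨h, h'⟩
      refine Finset.mem_union_right _ (Finset.mem_biUnion.2 ⟨y, Finset.mem_filter.2 ⟨hy, hN⟩, ?_⟩)
      rw [abs_lt] at hlt
      rw [Finset.mem_Ioo]
      constructor <;> linarith [hlt.1, hlt.2]
  have hball : ((Y.filter N).biUnion fun y => Finset.Ioo (f y - k) (f y + k)).card ≤
      (Y.filter N).card * (2 * k) := Finset.card_biUnion_le_card_mul _ _ _ fun y _ => by
    rw [Int.card_Ioo]
    omega
  have hcard := (Finset.card_le_card hsub).trans (Finset.card_union_le _ _)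
  have himage : ((Y.filter S).image f).card ≤ (Y.filter S).card := Finset.card_image_le
  rw [← Finset.card_filter_add_card_filter_not (s := L)
    (fun c => ∀ y ∈ Y, (S y → c ≠ f y) ∧ (N y → (k : ℤ) ≤ |c - f y|)), mul_comm (2 * k)]
  omega

lemma exists_mem_compatible {V : Type*} {Y : Finset V} {S N : V → Prop} [DecidablePred S]
    [DecidablePred N] {k : ℕ} {L : Finset ℤ}
    (h : (Y.filter S).card + 2 * k * (Y.filter N).card < L.card) (f : V → ℤ) :
    ∃ c ∈ L, ∀ y ∈ Y, (S y → c ≠ f y) ∧ (N y → (k : ℤ) ≤ |c - f y|) := by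
  obtain ⟨c, hc⟩ := Finset.card_pos.1 <| Nat.pos_of_lt_add_left <|
    h.trans_le (card_le_card_filter_compatible_add Y f S N k L)
  exact ⟨c, Finset.mem_filter.1 hc⟩

variable {V : Type*} {G : SimpleGraph V} {k : ℕ} {f : V → ℤ} {X R : Finset V}

/-- Assigning the labels `c` and `d` to the vertices `x` and `y` is consistent with the constraints
of an `L(k,1)`-labelling. -/
def LabelsCompatible (G : SimpleGraph V) (k : ℕ) (x y : V) (c d : ℤ) : Prop :=
  (G.Adj x y → (k : ℤ) ≤ |c - d|) ∧ ((∃ w, G.Adj x w ∧ G.Adj w y) → c ≠ d)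

lemma LabelsCompatible.symm {x y : V} {c d : ℤ} (h : LabelsCompatible G k x y c d) :
    LabelsCompatible G k y x d c := by
  refine ⟨fun hyx => ?_, fun ⟨w, hyw, hwx⟩ => (h.2 ⟨w, hwx.symm, hyw.symm⟩).symm⟩
  rw [abs_sub_comm]
  exact h.1 hyx.symm

/-- The constraints of an `L(k,1)`-labelling of `G` hold between the vertices of `X`. Paths of
length two between them may leave `X`. -/
def ValidOn (G : SimpleGraph V) (k : ℕ) (f : V → ℤ) (X : Finset V) : Prop :=
  (X : Set V).Pairwise fun x y => LabelsCompatible G k x y (f x) (f y)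

lemma ValidOn.piecewise {g : V → ℤ} (hf : ValidOn G k f (X \ R)) (hg : ValidOn G k g R)
    (hgf : ∀ x ∈ R, ∀ y ∈ X \ R, LabelsCompatible G k x y (g x) (f y)) :
    ValidOn G k (R.piecewise g f) X := by
  intro x hx y hy hxy
  by_cases hxR : x ∈ R <;> by_cases hyR : y ∈ R <;>
    simp only [hxR, hyR, not_false_eq_true, Finset.piecewise_eq_of_mem,
      Finset.piecewise_eq_of_notMem]
  · exact hg hxR hyR hxy
  · exact hgf x hxR y (Finset.mem_sdiff.2 ⟨hy, hyR⟩)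
  · exact (hgf y hyR x (Finset.mem_sdiff.2 ⟨hx, hxR⟩)).symm
  · exact hf (Finset.mem_coe.2 <| Finset.mem_sdiff.2 ⟨hx, hxR⟩)
      (Finset.mem_coe.2 <| Finset.mem_sdiff.2 ⟨hy, hyR⟩) hxy

variable [Fintype V] {D K : ℕ} {L : V → Finset ℤ}

lemma labelsCompatible_of_bigIn_of_smallConf (hk : 1 ≤ k) {x y : V} {c d : ℤ} (hy : y ∈ X)
    (hyx : y ≠ x) (hbig : (∃ w ∈ bigIn G X D, G.Adj x w ∧ G.Adj w y) → c ≠ d)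
    (hsmall : y ∈ smallConf G X D x → (k : ℤ) ≤ |c - d|) : LabelsCompatible G k x y c d := by
  refine ⟨fun hxy => hsmall (Finset.mem_filter.2 ⟨hy, hyx, Or.inl hxy⟩), fun ⟨w, hxw, hwy⟩ => ?_⟩
  by_cases hw : w ∈ bigIn G X D
  · exact hbig ⟨w, hw, hxw, hwy⟩
  · rintro rfl
    have hle := hsmall (Finset.mem_filter.2 ⟨hy, hyx, Or.inr ⟨w, hw, hxw, hwy⟩⟩)
    rw [sub_self, abs_zero] at hle
    omega

/-- The colours of `L x` that are compatible with the labels `f` of `X \ R`. -/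
noncomputable def residualList (G : SimpleGraph V) (k : ℕ) (f : V → ℤ) (X R : Finset V) (D : ℕ)
    (L : V → Finset ℤ) (x : V) : Finset ℤ :=
  {c ∈ L x | ∀ y ∈ X \ R, ((∃ w ∈ bigIn G X D, G.Adj x w ∧ G.Adj w y) → c ≠ f y) ∧
    (y ∈ smallConf G X D x → (k : ℤ) ≤ |c - f y|)}

lemma card_le_card_residualList_add (x : V) (hK : (smallConf G X D x).card ≤ K) :
    (L x).card ≤ (residualList G k f X R D L x).card +
      (∑ w ∈ nbrIn G (bigIn G X D) x, (nbrIn G (X \ R) w).card + 2 * k * K) := by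
  have hforbidden := card_le_card_filter_compatible_add (X \ R) f
    (fun y => ∃ w ∈ bigIn G X D, G.Adj x w ∧ G.Adj w y) (· ∈ smallConf G X D x) k (L x)
  refine hforbidden.trans (Nat.add_le_add (le_of_eq (by rw [residualList]; congr))
    (Nat.add_le_add ?_ (Nat.mul_le_mul_left _ ?_)))
  · refine (Finset.card_le_card fun y hy => ?_).trans Finset.card_biUnion_le
    obtain ⟨hy, w, hw, hxw, hwy⟩ := Finset.mem_filter.1 hy
    exact Finset.mem_biUnion.2 ⟨w, mem_nbrIn.2 ⟨hw, hxw⟩, mem_nbrIn.2 ⟨hy, hwy⟩⟩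
  · exact (Finset.card_le_card fun y hy => (Finset.mem_filter.1 hy).2).trans hK

lemma exists_compatible_of_card_lt (hk : 1 ≤ k) (hR : R ⊆ X) {C : V → Finset ℤ}
    (hdisj : ∀ x ∈ R, ∀ y ∈ R, nbrIn G (bigIn G X D) x ≠ nbrIn G (bigIn G X D) y →
      (∃ w ∈ bigIn G X D, G.Adj x w ∧ G.Adj w y) → Disjoint (C x) (C y))
    {x : V} (hx : x ∈ R) (hK : (smallConf G X D x).card ≤ K)
    (hcard : {y ∈ R | nbrIn G (bigIn G X D) y = nbrIn G (bigIn G X D) x}.card + 2 * k * K <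
      (C x).card) {S : Finset V} (hS : S ⊆ R) (hxS : x ∉ S) {g : V → ℤ} (hg : ∀ y ∈ S, g y ∈ C y) :
    ∃ c ∈ C x, ∀ y ∈ S, LabelsCompatible G k x y c (g y) := by
  have hsame := Finset.card_le_card (Finset.filter_subset_filter
    (fun y => nbrIn G (bigIn G X D) y = nbrIn G (bigIn G X D) x) hS)
  have hnear : {y ∈ S | y ∈ smallConf G X D x}.card ≤ K :=
    (Finset.card_le_card fun y hy => (Finset.mem_filter.1 hy).2).trans hK
  obtain ⟨c, hcC, hc⟩ := exists_mem_compatible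
    ((Nat.add_le_add hsame (Nat.mul_le_mul_left (2 * k) hnear)).trans_lt hcard) g
  refine ⟨c, hcC, fun y hy => labelsCompatible_of_bigIn_of_smallConf hk (hR (hS hy))
    (ne_of_mem_of_not_mem hy hxS) (fun hw => ?_) (hc y hy).2⟩
  by_cases hxy : nbrIn G (bigIn G X D) y = nbrIn G (bigIn G X D) x
  · exact (hc y hy).1 hxy
  · exact fun hcy => Finset.disjoint_left.1 (hdisj x hx y (hS hy) (Ne.symm hxy) hw) hcC
      (hcy ▸ hg y hy)

lemma exists_validOn_extension (hk : 1 ≤ k) (hR : R ⊆ X) (hf : ValidOn G k f (X \ R))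
    (hfL : ∀ x ∈ X \ R, f x ∈ L x) (C : V → Finset ℤ)
    (hC : ∀ x ∈ R, C x ⊆ residualList G k f X R D L x)
    (hdisj : ∀ x ∈ R, ∀ y ∈ R, nbrIn G (bigIn G X D) x ≠ nbrIn G (bigIn G X D) y →
      (∃ w ∈ bigIn G X D, G.Adj x w ∧ G.Adj w y) → Disjoint (C x) (C y))
    (hK : ∀ x ∈ R, (smallConf G X D x).card ≤ K)
    (hcard : ∀ x ∈ R, {y ∈ R | nbrIn G (bigIn G X D) y = nbrIn G (bigIn G X D) x}.card +
      2 * k * K < (C x).card) :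
    ∃ F : V → ℤ, ValidOn G k F X ∧ ∀ x ∈ X, F x ∈ L x := by
  obtain ⟨g, hgC, hg⟩ := exists_pairwise_of_forall_insert (r := LabelsCompatible G k)
    LabelsCompatible.symm C R fun S hS x hx hxS g hgC =>
      exists_compatible_of_card_lt hk hR hdisj hx (hK x hx) (hcard x hx) hS hxS hgC
  have hres : ∀ x ∈ R, g x ∈ residualList G k f X R D L x := fun x hx => hC x hx (hgC x hx)
  refine ⟨R.piecewise g f, hf.piecewise hg fun x hx y hy => ?_, fun x hx => ?_⟩
  · have hxy := (Finset.mem_filter.1 (hres x hx)).2 y hy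
    obtain ⟨hyX, hyR⟩ := Finset.mem_sdiff.1 hy
    exact labelsCompatible_of_bigIn_of_smallConf hk hyX (ne_of_mem_of_not_mem hx hyR).symm hxy.1
      hxy.2
  · by_cases hxR : x ∈ R
    · rw [Finset.piecewise_eq_of_mem _ _ _ hxR]
      exact (Finset.mem_filter.1 (hres x hxR)).1
    · rw [Finset.piecewise_eq_of_notMem _ _ _ hxR]
      exact hfL x (Finset.mem_sdiff.2 ⟨hx, hxR⟩)

lemma exists_validOn_extension_singleton (hk : 1 ≤ k) {x : V} (hx : x ∈ X)
    (hf : ValidOn G k f (X \ {x})) (hfL : ∀ y ∈ X \ {x}, f y ∈ L y)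
    (hK : (smallConf G X D x).card ≤ K)
    (hL : ∑ w ∈ nbrIn G (bigIn G X D) x, (nbrIn G X w).card + 4 * k * K + 1 < (L x).card) :
    ∃ F : V → ℤ, ValidOn G k F X ∧ ∀ y ∈ X, F y ∈ L y := by
  refine exists_validOn_extension (D := D) (K := K) hk (Finset.singleton_subset_iff.2 hx) hf hfL
    (residualList G k f X {x} D L) (fun y _ => subset_rfl) ?_ (by simpa using hK) ?_
  · intro y hy z hz hyz
    rw [Finset.mem_singleton] at hy hz
    exact absurd (by rw [hy, hz]) hyz
  · intro y hy
    obtain rfl := Finset.mem_singleton.1 hy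
    have hsame : (({y} : Finset V).filter fun z =>
        nbrIn G (bigIn G X D) z = nbrIn G (bigIn G X D) y).card ≤ 1 :=
      (Finset.card_filter_le _ _).trans (by simp)
    have hres := card_le_card_residualList_add (k := k) (f := f) (R := {y}) (L := L) y hK
    have hmono : ∑ w ∈ nbrIn G (bigIn G X D) y, (nbrIn G (X \ {y}) w).card ≤
        ∑ w ∈ nbrIn G (bigIn G X D) y, (nbrIn G X w).card :=
      Finset.sum_le_sum fun w _ => Finset.card_le_card
        (Finset.filter_subset_filter _ Finset.sdiff_subset)
    have hmul : 4 * k * K = 2 * k * K + 2 * k * K := by ring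
    omega

end Extension

/-! ### Extending a labelling to a cluster -/

section Bundles

open scoped Classical

variable {V : Type*} {G : SimpleGraph V} {X R A : Finset V}

lemma eq_of_pair_eq_pair_left {a c d : V} (hac : a ≠ c) (h : ({a, c} : Finset V) = {a, d}) :
    c = d := by
  have hc : c ∈ ({a, d} : Finset V) := by rw [← h]; simp
  simpa [hac.symm] using hc

lemma card_nbrIn_add_card_nbrIn_sdiff (hR : R ⊆ X) (a : V) :
    (nbrIn G R a).card + (nbrIn G (X \ R) a).card = (nbrIn G X a).card := by
  rw [nbrIn, nbrIn, nbrIn, ← Finset.card_union_of_disjoint, ← Finset.filter_union,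
    Finset.union_sdiff_of_subset hR]
  exact Finset.disjoint_filter_filter Finset.disjoint_sdiff

lemma card_le_sum_card_nbrIn (hR : R ⊆ X) (hA : ∀ x ∈ R, ∃ a ∈ A, G.Adj a x) :
    R.card ≤ ∑ a ∈ A, (nbrIn G X a).card := by
  refine (Finset.card_le_card fun x hx => ?_).trans Finset.card_biUnion_le
  obtain ⟨a, ha, hax⟩ := hA x hx
  exact Finset.mem_biUnion.2 ⟨a, ha, mem_nbrIn.2 ⟨hR hx, hax⟩⟩

lemma map_subtype_compl (Y : Finset A) :
    Yᶜ.map (Function.Embedding.subtype _) = A \ Y.map (Function.Embedding.subtype _) := by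
  ext a
  simp only [Finset.mem_sdiff, Finset.mem_map, Finset.mem_compl, Function.Embedding.coe_subtype]
  constructor
  · rintro ⟨b, hb, rfl⟩
    exact ⟨b.2, fun ⟨c, hc, hcb⟩ => hb (Subtype.ext hcb ▸ hc)⟩
  · rintro ⟨ha, haY⟩
    exact ⟨⟨a, ha⟩, fun hY => haY ⟨_, hY, rfl⟩, rfl⟩

variable [Fintype V] {D : ℕ}

/-- The *bundle* between `a` and `c`: the vertices of `R` whose big neighbours are exactly `a` and
`c`. -/
noncomputable def bundle (G : SimpleGraph V) (X : Finset V) (D : ℕ) (R : Finset V) (a c : V) :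
    Finset V :=
  {x ∈ R | nbrIn G (bigIn G X D) x = {a, c}}

lemma mem_bundle {a c x : V} :
    x ∈ bundle G X D R a c ↔ x ∈ R ∧ nbrIn G (bigIn G X D) x = {a, c} := Finset.mem_filter

lemma bundle_comm (a c : V) : bundle G X D R a c = bundle G X D R c a := by
  rw [bundle, Finset.pair_comm, ← bundle]

lemma ne_of_mem_bundle (hcard : ∀ x ∈ R, (nbrIn G (bigIn G X D) x).card = 2) {a c x : V}
    (hx : x ∈ bundle G X D R a c) : a ≠ c := by
  obtain ⟨hxR, hxac⟩ := mem_bundle.1 hx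
  rintro rfl
  simpa [hxac] using hcard x hxR

lemma bundle_self_eq_empty (hcard : ∀ x ∈ R, (nbrIn G (bigIn G X D) x).card = 2) (a : V) :
    bundle G X D R a a = ∅ :=
  Finset.eq_empty_of_forall_notMem fun _ hx => ne_of_mem_bundle hcard hx rfl

lemma sum_card_bundle_le (hcard : ∀ x ∈ R, (nbrIn G (bigIn G X D) x).card = 2) (a : V)
    (Y : Finset V) : ∑ c ∈ Y, (bundle G X D R a c).card ≤ (nbrIn G R a).card := by
  rw [← Finset.card_biUnion]
  · refine Finset.card_le_card fun x hx => ?_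
    obtain ⟨c, -, hx⟩ := Finset.mem_biUnion.1 hx
    obtain ⟨hx, hxac⟩ := mem_bundle.1 hx
    have ha : a ∈ nbrIn G (bigIn G X D) x := by rw [hxac]; simp
    exact mem_nbrIn.2 ⟨hx, (mem_nbrIn.1 ha).2.symm⟩
  · refine fun c _ d _ hcd => Finset.disjoint_left.2 fun x hxc hxd => hcd ?_
    exact eq_of_pair_eq_pair_left (ne_of_mem_bundle hcard hxc)
      ((mem_bundle.1 hxc).2.symm.trans (mem_bundle.1 hxd).2)

end Bundles

section ClusterExtension

open scoped Classical

variable {V : Type*} [Fintype V] {G : SimpleGraph V} {X A R : Finset V} {D K k Δ : ℕ}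
  {τ δ ε κ : ℝ} {f : V → ℤ} {L : V → Finset ℤ}

/-- `A` is a *reducible cluster* with core `R`: each vertex of `R` has few small conflicts and
exactly two big neighbours, both in `A`; the nonempty bundles of `R` have at least `τ` vertices; and
no subset of `A` has, up to `δ` per vertex, more neighbours outside the core than in the bundles
joining it to the rest of `A`. -/
structure IsReducibleCluster (G : SimpleGraph V) (X A R : Finset V) (D K : ℕ) (τ δ : ℝ) :
    Prop where
  core_subset : R ⊆ X
  nbrIn_subset {x : V} (hx : x ∈ R) : nbrIn G (bigIn G X D) x ⊆ A
  card_nbrIn {x : V} (hx : x ∈ R) : (nbrIn G (bigIn G X D) x).card = 2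
  card_smallConf_le {x : V} (hx : x ∈ R) : (smallConf G X D x).card ≤ K
  le_card_bundle {a c : V} (hac : (bundle G X D R a c).Nonempty) : τ ≤ (bundle G X D R a c).card
  outer_le_cut {Y : Finset V} (hY : Y ⊆ A) : ∑ a ∈ Y, ((nbrIn G (X \ R) a).card : ℝ) ≤
    ∑ a ∈ Y, ∑ c ∈ A \ Y, ((bundle G X D R a c).card : ℝ) + δ * Y.card

/-- The bundle sizes of a cluster with core `R`, as a proportion of `Δ`. -/
noncomputable def bundleLoad (G : SimpleGraph V) (X A R : Finset V) (D Δ : ℕ) (a c : A) : ℝ :=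
  ((bundle G X D R a c).card : ℝ) / Δ

/-- The numbers of neighbours of the vertices of a cluster outside its core `R`, as a proportion of
`Δ`. -/
noncomputable def outerLoad (G : SimpleGraph V) (X A R : Finset V) (Δ : ℕ) (a : A) : ℝ :=
  ((nbrIn G (X \ R) a).card : ℝ) / Δ

/-- The fractional matching of `A` given by the loads of a cluster with core `R`. -/
noncomputable def clusterShare (G : SimpleGraph V) (X A R : Finset V) (D Δ : ℕ) (ε : ℝ) (a c : A) :
    ℝ :=
  bundleShare ε (bundleLoad G X A R D Δ) (outerLoad G X A R Δ) a c

namespace IsReducibleCluster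

lemma isEdgeWeight_bundleLoad (h : IsReducibleCluster G X A R D K τ δ) :
    IsEdgeWeight ⊤ (bundleLoad G X A R D Δ) where
  nonneg a c := by unfold bundleLoad; positivity
  symm a c := by rw [bundleLoad, bundle_comm, ← bundleLoad]
  eq_zero {a c} hac := by
    obtain rfl : a = c := by simpa using hac
    simp [bundleLoad, bundle_self_eq_empty fun _ => h.card_nbrIn]

lemma isBalancedLoad (h : IsReducibleCluster G X A R D K τ (ε / 3 * Δ)) (hΔ : 0 < Δ)
    (hdeg : ∀ a ∈ A, (nbrIn G X a).card ≤ Δ) :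
    IsBalancedLoad ε (bundleLoad G X A R D Δ) (outerLoad G X A R Δ) := by
  have hΔ' : (0 : ℝ) < Δ := by exact_mod_cast hΔ
  refine ⟨h.isEdgeWeight_bundleLoad, fun a => by unfold outerLoad; positivity, fun a => ?_,
    fun Y => ?_⟩
  · unfold bundleLoad outerLoad
    rw [← Finset.sum_div, ← add_div, div_le_one hΔ',
      Finset.sum_coe_sort A fun b => ((bundle G X D R a b).card : ℝ)]
    have hin := sum_card_bundle_le (G := G) (fun _ => h.card_nbrIn) a.1 A
    have hout := card_nbrIn_add_card_nbrIn_sdiff (G := G) h.core_subset a.1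
    have hle := hdeg a a.2
    exact_mod_cast (by omega : ∑ b ∈ A, (bundle G X D R a b).card +
      (nbrIn G (X \ R) a).card ≤ Δ)
  · have hcut := h.outer_le_cut (Y := Y.map (Function.Embedding.subtype _)) fun a ha => by
      obtain ⟨b, -, rfl⟩ := Finset.mem_map.1 ha
      exact b.2
    rw [← map_subtype_compl] at hcut
    simp only [Finset.sum_map, Finset.card_map, Function.Embedding.coe_subtype] at hcut
    simp only [bundleLoad, outerLoad, ← Finset.sum_div]
    rw [div_le_iff₀ hΔ', add_mul, div_mul_cancel₀ _ hΔ'.ne']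
    rw [mul_right_comm]
    refine hcut.trans_eq ?_
    congr!

lemma exists_ends (h : IsReducibleCluster G X A R D K τ δ) {x : V} (hx : x ∈ R) :
    ∃ a b : A, a ≠ b ∧ nbrIn G (bigIn G X D) x = {a.1, b.1} := by
  obtain ⟨a, b, hab, hx'⟩ := Finset.card_eq_two.1 (h.card_nbrIn hx)
  have hA := h.nbrIn_subset hx
  rw [hx'] at hA
  exact ⟨⟨a, hA (by simp)⟩, ⟨b, hA (by simp)⟩, fun hab' => hab (congrArg Subtype.val hab'), hx'⟩

lemma card_core_le (h : IsReducibleCluster G X A R D K τ δ)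
    (hdeg : ∀ a ∈ A, (nbrIn G X a).card ≤ Δ) : R.card ≤ A.card * Δ := by
  refine (card_le_sum_card_nbrIn (A := A) (G := G) h.core_subset fun x hx => ?_).trans
    ((Finset.sum_le_card_nsmul _ _ _ hdeg).trans_eq (smul_eq_mul _ _))
  obtain ⟨a, b, -, hx'⟩ := h.exists_ends hx
  have ha : a.1 ∈ nbrIn G (bigIn G X D) x := by rw [hx']; simp
  exact ⟨a, a.2, (mem_nbrIn.1 ha).2.symm⟩

lemma le_card_residualList (h : IsReducibleCluster G X A R D K τ δ) (hΔ : 0 < Δ) {x : V}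
    (hx : x ∈ R) (hL : (3 / 2 + ε) * Δ + 2 * k * K ≤ (L x).card) {a b : A} (hab : a ≠ b)
    (hends : nbrIn G (bigIn G X D) x = {a.1, b.1}) :
    (3 / 2 + ε - outerLoad G X A R Δ a - outerLoad G X A R Δ b) * Δ ≤
      (residualList G k f X R D L x).card := by
  have hres := card_le_card_residualList_add (k := k) (f := f) (R := R) (L := L) x
    (h.card_smallConf_le hx)
  rw [hends, Finset.sum_pair fun hab' => hab (Subtype.ext hab')] at hres
  have hres' : ((L x).card : ℝ) ≤ (residualList G k f X R D L x).card +
      (((nbrIn G (X \ R) a).card + (nbrIn G (X \ R) b).card : ℝ) + 2 * k * K) := by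
    exact_mod_cast hres
  have hΔ' : (Δ : ℝ) ≠ 0 := by exact_mod_cast hΔ.ne'
  have hout : ∀ a, outerLoad G X A R Δ a * Δ = (nbrIn G (X \ R) a).card := fun a =>
    div_mul_cancel₀ _ hΔ'
  rw [sub_mul, sub_mul, hout, hout]
  linarith

lemma mul_card_bundle_le (h : IsReducibleCluster G X A R D K τ (ε / 3 * Δ)) (hε : 0 < ε)
    (hΔ : 0 < Δ) (hdeg : ∀ a ∈ A, (nbrIn G X a).card ≤ Δ) {x : V} (hx : x ∈ R)
    (hL : (3 / 2 + ε) * Δ + 2 * k * K ≤ (L x).card) {a b : A} (hab : a ≠ b)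
    (hends : nbrIn G (bigIn G X D) x = {a.1, b.1}) :
    (1 + ε / 4) * (bundle G X D R a b).card ≤
      clusterShare G X A R D Δ ε a b * (residualList G k f X R D L x).card := by
  have hload := h.isBalancedLoad hΔ hdeg
  have hden := hload.bundleShare_denom_pos hε a b
  have hΔ' : (Δ : ℝ) ≠ 0 := by exact_mod_cast hΔ.ne'
  calc (1 + ε / 4) * ((bundle G X D R a b).card : ℝ)
      = clusterShare G X A R D Δ ε a b *
          ((3 / 2 + ε - outerLoad G X A R Δ a - outerLoad G X A R Δ b) * Δ) := by
        rw [clusterShare, bundleShare, ← mul_assoc, div_mul_cancel₀ _ hden.ne', mul_assoc,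
          bundleLoad, div_mul_cancel₀ _ hΔ']
    _ ≤ _ := mul_le_mul_of_nonneg_left (h.le_card_residualList hΔ hx hL hab hends)
        ((hload.isEdgeWeight_bundleShare hε).nonneg a b)

lemma exists_validOn_extension (h : IsReducibleCluster G X A R D K τ δ) (hk : 1 ≤ k)
    (hf : ValidOn G k f (X \ R)) (hfL : ∀ x ∈ X \ R, f x ∈ L x) {σ : ℤ → Equiv.Perm A}
    (hσ : ∀ i, Function.Involutive (σ i))
    (hhits : ∀ x ∈ R, ∃ a b : A, nbrIn G (bigIn G X D) x = {a.1, b.1} ∧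
      (bundle G X D R a b).card + 2 * k * K + 1 ≤
        {i ∈ residualList G k f X R D L x | σ i a = b}.card) :
    ∃ F : V → ℤ, ValidOn G k F X ∧ ∀ x ∈ X, F x ∈ L x := by
  have hpartner : ∀ i x w, w ∈ nbrIn G (bigIn G X D) x →
      (∃ a b : A, nbrIn G (bigIn G X D) x = {a.1, b.1} ∧ σ i a = b) →
      ∃ hw : w ∈ A, nbrIn G (bigIn G X D) x = {w, (σ i ⟨w, hw⟩).1} := by
    rintro i x w hw ⟨a, _, hx, rfl⟩
    rw [hx, Finset.mem_insert, Finset.mem_singleton] at hw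
    obtain rfl | rfl := hw
    · exact ⟨a.2, hx⟩
    · exact ⟨(σ i a).2, by rw [hx, Subtype.coe_eta, hσ i a, Finset.pair_comm]⟩
  refine _root_.exists_validOn_extension (D := D) (K := K) hk h.core_subset hf hfL
    (fun x => {i ∈ residualList G k f X R D L x |
      ∃ a b : A, nbrIn G (bigIn G X D) x = {a.1, b.1} ∧ σ i a = b})
    (fun x _ => Finset.filter_subset _ _) ?_ (fun x hx => h.card_smallConf_le hx) ?_
  · rintro x - y - hxy ⟨w, hw, hxw, hwy⟩
    refine Finset.disjoint_left.2 fun i hi hi' => hxy ?_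
    obtain ⟨_, hx⟩ := hpartner i x w (mem_nbrIn.2 ⟨hw, hxw⟩) (Finset.mem_filter.1 hi).2
    obtain ⟨_, hy⟩ := hpartner i y w (mem_nbrIn.2 ⟨hw, hwy.symm⟩) (Finset.mem_filter.1 hi').2
    rw [hx, hy]
  · intro x hx
    obtain ⟨a, b, hends, hle⟩ := hhits x hx
    have hbundle : {y ∈ R | nbrIn G (bigIn G X D) y = nbrIn G (bigIn G X D) x} =
        bundle G X D R a b := by
      rw [bundle, ← hends]
    rw [hbundle]
    refine (Nat.lt_of_succ_le hle).trans_le (Finset.card_le_card fun i hi => ?_)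
    simp only [Finset.mem_filter] at hi ⊢
    exact ⟨hi.1, a, b, hends, hi.2⟩

lemma exists_involutive_hits (hε : 0 < ε) (hε₁ : ε ≤ 1) :
    ∃ c : ℝ, 0 < c ∧ ∀ (V : Type*) [Fintype V] (G : SimpleGraph V) (X A R : Finset V) (D K k Δ : ℕ)
      (κ : ℝ) (f : V → ℤ) (L : V → Finset ℤ), 0 < Δ → 2 * k * K + 1 ≤ ε / 8 * (κ * Δ) →
      A.card * Δ * Real.exp (-(c * (κ * Δ))) < 1 → (∀ a ∈ A, (nbrIn G X a).card ≤ Δ) →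
      IsReducibleCluster G X A R D K (κ * Δ) (ε / 3 * Δ) →
      (∀ x ∈ R, (3 / 2 + ε) * Δ + 2 * k * K ≤ (L x).card) →
      ∃ σ : ℤ → Equiv.Perm A, (∀ i, Function.Involutive (σ i)) ∧
        ∀ x ∈ R, ∃ a b : A, nbrIn G (bigIn G X D) x = {a.1, b.1} ∧
          (bundle G X D R a b).card + 2 * k * K + 1 ≤
            {i ∈ residualList G k f X R D L x | σ i a = b}.card := by
  obtain ⟨c, hc, hhits⟩ := exists_forall_involutive_many_hits (ζ := ε / 4) (by positivity)
    (by linarith)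
  refine ⟨c, hc, fun V _ G X A R D K k Δ κ f L hΔ hpad hexp hdeg h hL => ?_⟩
  choose u v huv hends using fun x : {x // x ∈ R} => h.exists_ends x.2
  have hheavy (x : {x // x ∈ R}) : κ * Δ ≤ (bundle G X D R (u x) (v x)).card :=
    h.le_card_bundle ⟨x.1, mem_bundle.2 ⟨x.2, hends x⟩⟩
  have hload := h.isBalancedLoad hΔ hdeg
  have hsum : ∑ x : {x // x ∈ R}, Real.exp (-(c * (bundle G X D R (u x) (v x)).card)) < 1 := by
    calc ∑ x : {x // x ∈ R}, Real.exp (-(c * (bundle G X D R (u x) (v x)).card))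
        ≤ ∑ _x : {x // x ∈ R}, Real.exp (-(c * (κ * Δ))) := Finset.sum_le_sum fun x _ =>
          Real.exp_le_exp.2 (neg_le_neg (mul_le_mul_of_nonneg_left (hheavy x) hc.le))
      _ = R.card * Real.exp (-(c * (κ * Δ))) := by simp
      _ ≤ A.card * Δ * Real.exp (-(c * (κ * Δ))) :=
          mul_le_mul_of_nonneg_right (by exact_mod_cast h.card_core_le hdeg) (Real.exp_nonneg _)
      _ < 1 := hexp
  obtain ⟨σ, hσ, hle⟩ := hhits A {x // x ∈ R} (clusterShare G X A R D Δ ε)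
    (hload.isEdgeWeight_bundleShare hε) (hload.sum_bundleShare_le_one hε hε₁)
    (fun _ => hload.bundleShare_odd_set hε hε₁) Finset.univ u v
    (fun x => residualList G k f X R D L x.1) (fun x => (bundle G X D R (u x) (v x)).card)
    (fun x => (bundle G X D R (u x) (v x)).card + 2 * k * K + 1) (fun x _ => huv x)
    (fun x _ => by positivity)
    (fun x _ => h.mul_card_bundle_le hε hΔ hdeg x.2 (hL x x.2) (huv x) (hends x))
    (fun x _ => by
      push_cast
      linarith [mul_le_mul_of_nonneg_left (hheavy x) (by positivity : 0 ≤ ε / 8)]) hsum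
  refine ⟨σ, hσ, fun x hx => ⟨_, _, hends ⟨x, hx⟩, ?_⟩⟩
  convert hle ⟨x, hx⟩ (Finset.mem_univ _)

end IsReducibleCluster

lemma exists_forall_mul_exp_lt (S : ℝ) {c : ℝ} (hc : 0 < c) (M : ℝ) :
    ∃ N : ℕ, ∀ n : ℕ, N ≤ n → 0 < n ∧ M ≤ n ∧ S * n * Real.exp (-(c * n)) < 1 := by
  have hlim : Filter.Tendsto (fun x : ℝ => S / c * (x ^ 1 * Real.exp (-x))) Filter.atTop
      (nhds (S / c * 0)) := (Real.tendsto_pow_mul_exp_neg_atTop_nhds_zero 1).const_mul _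
  have hmul : Filter.Tendsto (fun n : ℕ => c * (n : ℝ)) Filter.atTop Filter.atTop :=
    Filter.Tendsto.const_mul_atTop hc tendsto_natCast_atTop_atTop
  have hexp := (hlim.comp hmul).eventually (gt_mem_nhds (show S / c * 0 < 1 by simp))
  have hlarge := tendsto_natCast_atTop_atTop.eventually (Filter.eventually_ge_atTop M)
  obtain ⟨N, hN⟩ := Filter.eventually_atTop.1
    (hexp.and (hlarge.and (Filter.eventually_gt_atTop (0 : ℕ))))
  refine ⟨N, fun n hn => ?_⟩
  obtain ⟨hlt, hM, hpos⟩ := hN n hn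
  refine ⟨hpos, hM, lt_of_eq_of_lt ?_ hlt⟩
  simp only [Function.comp_apply]
  field_simp

theorem exists_cluster_threshold (hε : 0 < ε) (hε₁ : ε ≤ 1) (hκ : 0 < κ) (S K k : ℕ) (hk : 1 ≤ k) :
    ∃ N : ℕ, ∀ Δ : ℕ, N ≤ Δ → ∀ (V : Type*) [Fintype V] (G : SimpleGraph V) (X A R : Finset V)
      (D : ℕ) (L : V → Finset ℤ) (f : V → ℤ), A.card ≤ S → (∀ a ∈ A, (nbrIn G X a).card ≤ Δ) →
      IsReducibleCluster G X A R D K (κ * Δ) (ε / 3 * Δ) →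
      (∀ x ∈ R, (3 / 2 + ε) * Δ + 2 * k * K ≤ (L x).card) →
      ValidOn G k f (X \ R) → (∀ x ∈ X \ R, f x ∈ L x) →
      ∃ F : V → ℤ, ValidOn G k F X ∧ ∀ x ∈ X, F x ∈ L x := by
  obtain ⟨c, hc, hhits⟩ := IsReducibleCluster.exists_involutive_hits hε hε₁
  obtain ⟨N, hN⟩ := exists_forall_mul_exp_lt S (c := c * κ) (by positivity)
    ((2 * k * K + 1) / (ε / 8 * κ))
  refine ⟨N, fun Δ hΔN V _ G X A R D L f hA hdeg h hL hf hfL => ?_⟩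
  obtain ⟨hΔ, hpad, hexp⟩ := hN Δ hΔN
  rw [div_le_iff₀ (by positivity)] at hpad
  rw [mul_assoc] at hexp
  have hexp' : A.card * Δ * Real.exp (-(c * (κ * Δ))) < 1 := by
    rw [mul_assoc, ← mul_assoc c]
    exact hexp.trans_le' (mul_le_mul_of_nonneg_right (by exact_mod_cast hA) (by positivity))
  obtain ⟨σ, hσ, hσR⟩ := hhits V G X A R D K k Δ κ f L hΔ (by linarith) hexp' hdeg h hL
  exact h.exists_validOn_extension hk hf hfL hσ hσR

end ClusterExtension

/-! ### Clusters with a sparse boundary -/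

section DenseCluster

open scoped Classical

variable {V J : Type*} {B A Y : Finset V} {μ : V → V → ℝ} {r : V → ℝ} {l : V → J} {S : ℕ} {θ : ℝ}

/-- The excess over `θ` per vertex of the total boundary weight of `A` in `B`: the outer weights `r`
of its vertices together with the weights `μ` of the pairs leaving it. -/
noncomputable def boundaryExcess (B : Finset V) (μ : V → V → ℝ) (r : V → ℝ) (θ : ℝ)
    (A : Finset V) : ℝ :=
  ∑ a ∈ A, (r a + ∑ c ∈ B \ A, μ a c - θ)

lemma sum_boundaryExcess_fibre (B : Finset V) (μ : V → V → ℝ) (r : V → ℝ) (θ : ℝ) (l : V → J) :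
    ∑ j ∈ B.image l, boundaryExcess B μ r θ {a ∈ B | l a = j} =
      ∑ a ∈ B, r a + ∑ a ∈ B, ∑ c ∈ B, (if l a = l c then 0 else μ a c) - θ * B.card := by
  have hfib : ∑ j ∈ B.image l, boundaryExcess B μ r θ {a ∈ B | l a = j} =
      ∑ a ∈ B, (r a + ∑ c ∈ B, (if l a = l c then 0 else μ a c) - θ) := by
    rw [← Finset.sum_fiberwise_of_maps_to (g := l) (t := B.image l)
      fun a ha => Finset.mem_image_of_mem l ha]
    refine Finset.sum_congr rfl fun j _ => Finset.sum_congr rfl fun a ha => ?_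
    obtain ⟨-, rfl⟩ := Finset.mem_filter.1 ha
    rw [Finset.sum_ite, Finset.sum_const_zero, zero_add, ← Finset.filter_not]
    simp only [eq_comm]
  rw [hfib, Finset.sum_sub_distrib, Finset.sum_add_distrib, Finset.sum_const, nsmul_eq_mul,
    mul_comm θ]

lemma boundaryExcess_sdiff_add (hA : A ⊆ B) (hY : Y ⊆ A) :
    boundaryExcess B μ r θ (A \ Y) + ∑ a ∈ Y, (r a + ∑ c ∈ B \ A, μ a c) =
      boundaryExcess B μ r θ A + (∑ a ∈ Y, ∑ c ∈ A \ Y, μ c a + θ * Y.card) := by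
  have hout : B \ (A \ Y) = (B \ A) ∪ Y := by
    rw [Finset.sdiff_sdiff_eq_sdiff_union (hY.trans hA)]
  have hdisj : Disjoint (B \ A) Y := Finset.sdiff_disjoint.mono_right hY
  have hcomm : ∑ a ∈ A \ Y, ∑ c ∈ Y, μ a c = ∑ a ∈ Y, ∑ c ∈ A \ Y, μ c a := Finset.sum_comm
  unfold boundaryExcess
  rw [hout, ← Finset.sum_sdiff hY]
  simp only [Finset.sum_union hdisj, Finset.sum_sub_distrib, Finset.sum_add_distrib,
    Finset.sum_const, nsmul_eq_mul, ← hcomm]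
  ring

lemma exists_dense_subcluster (hS : ∀ j, {a ∈ B | l a = j}.card ≤ S)
    (hcost : ∑ a ∈ B, r a + ∑ a ∈ B, ∑ c ∈ B, (if l a = l c then 0 else μ a c) < θ * B.card) :
    ∃ A ⊆ B, A.Nonempty ∧ A.card ≤ S ∧ ∀ Y ⊆ A, ∑ a ∈ Y, (r a + ∑ c ∈ B \ A, μ a c) ≤
      ∑ a ∈ Y, ∑ c ∈ A \ Y, μ c a + θ * Y.card := by
  obtain ⟨j, -, hj⟩ : ∃ j ∈ B.image l, boundaryExcess B μ r θ {a ∈ B | l a = j} < 0 := by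
    by_contra! hno
    have hsum := Finset.sum_nonneg hno
    rw [sum_boundaryExcess_fibre] at hsum
    linarith
  obtain ⟨A, hA, hmin⟩ := Finset.exists_min_image {a ∈ B | l a = j}.powerset
    (boundaryExcess B μ r θ) ⟨_, Finset.mem_powerset_self _⟩
  rw [Finset.mem_powerset] at hA
  have hAneg := (hmin _ (Finset.mem_powerset_self _)).trans_lt hj
  have hAB : A ⊆ B := hA.trans (Finset.filter_subset _ _)
  refine ⟨A, hAB, ?_, (Finset.card_le_card hA).trans (hS j), fun Y hY => ?_⟩
  · rw [Finset.nonempty_iff_ne_empty]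
    rintro rfl
    simp [boundaryExcess] at hAneg
  · have hle := hmin (A \ Y) (Finset.mem_powerset.2 (Finset.sdiff_subset.trans hA))
    linarith [boundaryExcess_sdiff_add (μ := μ) (r := r) (θ := θ) hAB hY]

lemma exists_label_extension {J : Type v} {S : ℕ} {l : B → J}
    (hl : ∀ j, ({a | l a = j} : Finset B).card ≤ S) :
    ∃ (J' : Type v) (l' : V → J'), (∀ a c : B, l' a = l' c ↔ l a = l c) ∧
      ∀ j, {a ∈ B | l' a = j}.card ≤ S := by
  let l' (v : V) : Option J := if h : v ∈ B then some (l ⟨v, h⟩) else none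
  have hl' (a : B) : l' a = some (l a) := dif_pos a.2
  refine ⟨Option J, l', fun a c => by rw [hl', hl', Option.some_inj], fun j => ?_⟩
  refine (Finset.card_le_card (t := ({a | some (l a) = j} : Finset B).image Subtype.val)
    fun a ha => ?_).trans (Finset.card_image_le.trans ?_)
  · simp only [Finset.mem_filter] at ha
    obtain ⟨ha, haj⟩ := ha
    exact Finset.mem_image.2 ⟨⟨a, ha⟩, by simpa [← hl' ⟨a, ha⟩] using haj, rfl⟩
  cases j with
  | none => simp
  | some j => simpa only [Option.some_inj] using hl j

end DenseCluster

section BundleGraph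

open scoped Classical

variable {V : Type u} [Fintype V] {G : SimpleGraph V} {X R B : Finset V} {D C Δ : ℕ} {τ : ℝ}

/-- The *bundle graph* on `B`, joining the ends of the bundles with at least `τ` vertices. -/
def bundleGraph (G : SimpleGraph V) (X : Finset V) (D : ℕ) (R : Finset V) (τ : ℝ) (B : Finset V) :
    SimpleGraph B where
  Adj a c := a ≠ c ∧ τ ≤ (bundle G X D R a c).card
  symm := ⟨fun a c h => ⟨h.1.symm, bundle_comm (G := G) (R := R) a.1 c.1 ▸ h.2⟩⟩
  loopless := ⟨fun _ h => h.1 rfl⟩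

lemma exists_mem_map_iff_mem_nbrIn (hτ : 0 < τ) {e : Sym2 B}
    (he : e ∈ (bundleGraph G X D R τ B).edgeSet) :
    ∃ x ∈ R, ∀ v, v ∈ e.map Subtype.val ↔ v ∈ nbrIn G (bigIn G X D) x := by
  induction e with | h a c => ?_
  obtain ⟨x, hx⟩ : (bundle G X D R a c).Nonempty := by
    rw [← Finset.card_pos]
    exact_mod_cast hτ.trans_le ((mem_edgeSet _).1 he).2
  obtain ⟨hx, hxac⟩ := mem_bundle.1 hx
  exact ⟨x, hx, fun v => by simp [hxac]⟩

lemma isMinor_bundleGraph (hτ : 0 < τ) (hB : B ⊆ bigIn G X D) (hR : ∀ x ∈ R, x ∉ bigIn G X D) :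
    IsMinor (bundleGraph G X D R τ B) G := by
  have hmid (e : Sym2 B) : ∃ x, e ∈ (bundleGraph G X D R τ B).edgeSet →
      x ∈ R ∧ ∀ v, v ∈ e.map Subtype.val ↔ v ∈ nbrIn G (bigIn G X D) x := by
    by_cases he : e ∈ (bundleGraph G X D R τ B).edgeSet
    · obtain ⟨x, hx⟩ := exists_mem_map_iff_mem_nbrIn hτ he
      exact ⟨x, fun _ => hx⟩
    · exact ⟨(Quot.out e).1, fun he' => absurd he' he⟩
  choose w hw using hmid
  refine SubdividesIn.isMinor (f := Subtype.val) (w := w) ⟨Subtype.val_injective, ?_, ?_, ?_⟩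
  · intro e he e' he' hee'
    refine Sym2.map.injective Subtype.val_injective (Sym2.ext fun v => ?_)
    rw [(hw e he).2, (hw e' he').2, hee']
  · rintro e he ⟨a, ha⟩
    exact hR _ (hw e he).1 (ha ▸ hB a.2)
  · intro e he a ha
    exact (mem_nbrIn.1 (((hw e he).2 a).1 (Sym2.mem_map.2 ⟨a, ha, rfl⟩))).2

lemma card_bundle_pairs_le (hG : MinorSparse C G) (hB : B ⊆ bigIn G X D)
    (hR : ∀ x ∈ R, x ∉ bigIn G X D) (hcard : ∀ x ∈ R, (nbrIn G (bigIn G X D) x).card = 2) :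
    {p ∈ B ×ˢ B | (bundle G X D R p.1 p.2).Nonempty}.card ≤ C * B.card := by
  have h := (hG.of_isMinor (isMinor_bundleGraph one_pos hB hR)).sum_card_nbrIn_self_le Finset.univ
  rw [Finset.card_univ, Fintype.card_coe] at h
  refine h.trans' ?_
  rw [Finset.card_filter, Finset.sum_product, ← Finset.sum_coe_sort B]
  refine Finset.sum_le_sum fun a _ => ?_
  rw [← Finset.sum_coe_sort B, ← Finset.card_filter]
  refine Finset.card_le_card fun c hc => mem_nbrIn.2 ⟨Finset.mem_univ c, ?_⟩
  obtain ⟨x, hx⟩ : (bundle G X D R a c).Nonempty := (Finset.mem_filter.1 hc).2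
  exact ⟨fun hac => ne_of_mem_bundle hcard hx (congrArg Subtype.val hac),
    by exact_mod_cast Finset.card_pos.2 ⟨x, hx⟩⟩

/-- The size of the bundle between `a` and `c` if it is at least `τ`, and zero otherwise. -/
noncomputable def heavyWeight (G : SimpleGraph V) (X : Finset V) (D : ℕ) (R : Finset V) (τ : ℝ)
    (a c : V) : ℝ :=
  if τ ≤ (bundle G X D R a c).card then ((bundle G X D R a c).card : ℝ) else 0

lemma heavyWeight_nonneg (a c : V) : 0 ≤ heavyWeight G X D R τ a c := by
  unfold heavyWeight
  split_ifs <;> positivity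

lemma heavyWeight_le (a c : V) : heavyWeight G X D R τ a c ≤ (bundle G X D R a c).card := by
  unfold heavyWeight
  split_ifs <;> simp

lemma isEdgeWeight_heavyWeight (hcard : ∀ x ∈ R, (nbrIn G (bigIn G X D) x).card = 2) :
    IsEdgeWeight (bundleGraph G X D R τ B) fun a c => heavyWeight G X D R τ a c where
  nonneg a c := heavyWeight_nonneg a.1 c.1
  symm a c := by simp only [heavyWeight, bundle_comm a.1 c.1]
  eq_zero {a c} hac := by
    by_cases h : a = c
    · simp [heavyWeight, h, bundle_self_eq_empty hcard]
    · exact if_neg fun hτ => hac ⟨h, hτ⟩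

lemma sum_bundle_sub_heavyWeight_le (hG : MinorSparse C G) (hB : B ⊆ bigIn G X D)
    (hR : ∀ x ∈ R, x ∉ bigIn G X D) (hcard : ∀ x ∈ R, (nbrIn G (bigIn G X D) x).card = 2)
    (hτ : 0 ≤ τ) :
    ∑ a ∈ B, ∑ c ∈ B, ((bundle G X D R a c).card - heavyWeight G X D R τ a c) ≤
      C * τ * B.card := by
  have hlight (a c : V) : (bundle G X D R a c).card - heavyWeight G X D R τ a c ≤
      if (bundle G X D R a c).Nonempty then τ else 0 := by
    unfold heavyWeight
    split_ifs with hheavy hne hne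
    · simpa using hτ
    · simp
    · simpa using (not_le.1 hheavy).le
    · simp [Finset.not_nonempty_iff_eq_empty.1 hne]
  calc ∑ a ∈ B, ∑ c ∈ B, ((bundle G X D R a c).card - heavyWeight G X D R τ a c)
      ≤ ∑ a ∈ B, ∑ c ∈ B, (if (bundle G X D R a c).Nonempty then τ else 0) :=
        Finset.sum_le_sum fun a _ => Finset.sum_le_sum fun c _ => hlight a c
    _ = {p ∈ B ×ˢ B | (bundle G X D R p.1 p.2).Nonempty}.card * τ := by
        rw [← Finset.sum_product', ← Finset.sum_filter, Finset.sum_const, nsmul_eq_mul]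
    _ ≤ (C * B.card : ℕ) * τ :=
        mul_le_mul_of_nonneg_right (by exact_mod_cast card_bundle_pairs_le hG hB hR hcard) hτ
    _ = C * τ * B.card := by push_cast; ring

lemma card_bundleGraph_adj_mul_le (hcard : ∀ x ∈ R, (nbrIn G (bigIn G X D) x).card = 2) (a : B) :
    ({c | (bundleGraph G X D R τ B).Adj a c} : Finset B).card * τ ≤ (nbrIn G R a).card := by
  rw [← nsmul_eq_mul]
  refine (Finset.card_nsmul_le_sum _ _ _ fun c hc => (Finset.mem_filter.1 hc).2.2).trans ?_
  refine (Finset.sum_le_sum_of_subset_of_nonneg (Finset.subset_univ _)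
    fun _ _ _ => by positivity).trans ?_
  rw [Finset.sum_coe_sort B fun c => ((bundle G X D R a c).card : ℝ)]
  exact_mod_cast sum_card_bundle_le hcard a.1 B

theorem exists_bundle_clusters (C : ℕ) (hC : 0 < C) {κ η : ℝ} (hκ : 0 < κ) (hη : 0 < η) :
    ∃ S : ℕ, ∀ (Δ : ℕ), 0 < Δ → ∀ (V : Type u) [Fintype V] (G : SimpleGraph V) (X R B : Finset V)
      (D : ℕ), MinorSparse C G → B ⊆ bigIn G X D → (∀ x ∈ R, x ∉ bigIn G X D) →
      (∀ x ∈ R, (nbrIn G (bigIn G X D) x).card = 2) → (∀ a ∈ B, (nbrIn G R a).card ≤ Δ) →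
      ∃ (J : Type u) (l : V → J), (∀ j, {a ∈ B | l a = j}.card ≤ S) ∧
        ∑ a ∈ B, ∑ c ∈ B, (if l a = l c then 0 else heavyWeight G X D R (κ * Δ) a c) ≤
          η * Δ * B.card := by
  obtain ⟨S, hS⟩ := exists_bounded_clusters C ⌈1 / κ⌉₊ hC hη
  refine ⟨S, fun Δ hΔ V _ G X R B D hG hB hR hcard hdeg => ?_⟩
  have hΔ' : (0 : ℝ) < Δ := by exact_mod_cast hΔ
  have hFdeg (a : B) :
      ({c | (bundleGraph G X D R (κ * Δ) B).Adj a c} : Finset B).card ≤ ⌈1 / κ⌉₊ := by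
    have hle := (card_bundleGraph_adj_mul_le (τ := κ * Δ) hcard a).trans
      (Nat.cast_le.2 (hdeg a.1 a.2))
    rw [← mul_assoc, mul_le_iff_le_one_left hΔ', ← le_div_iff₀ hκ] at hle
    exact_mod_cast hle.trans (Nat.le_ceil _)
  obtain ⟨J, _, l, hl, hcut⟩ := hS B _
    (hG.of_isMinor (isMinor_bundleGraph (by positivity) hB hR)) hFdeg _
    (isEdgeWeight_heavyWeight hcard)
  obtain ⟨J', l', hl', hfib⟩ := exists_label_extension hl
  refine ⟨J', l', hfib, ?_⟩
  calc ∑ a ∈ B, ∑ c ∈ B, (if l' a = l' c then 0 else heavyWeight G X D R (κ * Δ) a c)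
      = cutWeight (fun a c : B => heavyWeight G X D R (κ * Δ) a c) l := by
        simp only [cutWeight, ← Finset.sum_coe_sort B, hl']
    _ ≤ η * ∑ a : B, ∑ c : B, heavyWeight G X D R (κ * Δ) a c := hcut
    _ ≤ η * ∑ _a : B, (Δ : ℝ) := by
        refine mul_le_mul_of_nonneg_left (Finset.sum_le_sum fun a _ => ?_) hη.le
        refine (Finset.sum_le_sum fun c _ => heavyWeight_le a.1 c.1).trans ?_
        rw [Finset.sum_coe_sort B fun c => ((bundle G X D R a c).card : ℝ)]
        exact_mod_cast (sum_card_bundle_le hcard a.1 B).trans (hdeg a a.2)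
    _ = η * Δ * B.card := by
        rw [Finset.sum_const, Finset.card_univ, Fintype.card_coe, nsmul_eq_mul]
        ring

end BundleGraph

section ClusterCore

open scoped Classical

variable {V : Type*} [Fintype V] {G : SimpleGraph V} {X A B R : Finset V} {D : ℕ} {τ : ℝ}
  {a c x : V}

/-- The vertices of `R` lying in a bundle of `R` with at least `τ` vertices and both ends in `A`. -/
noncomputable def clusterCore (G : SimpleGraph V) (X : Finset V) (D : ℕ) (R : Finset V) (τ : ℝ)
    (A : Finset V) : Finset V :=
  {x ∈ R | ∃ a ∈ A, ∃ c ∈ A, nbrIn G (bigIn G X D) x = {a, c} ∧ τ ≤ (bundle G X D R a c).card}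

lemma clusterCore_subset : clusterCore G X D R τ A ⊆ R :=
  Finset.filter_subset _ _

lemma nbrIn_subset_of_mem_clusterCore (hx : x ∈ clusterCore G X D R τ A) :
    nbrIn G (bigIn G X D) x ⊆ A := by
  obtain ⟨-, a, ha, c, hc, hxac, -⟩ := Finset.mem_filter.1 hx
  rw [hxac]
  exact Finset.insert_subset ha (Finset.singleton_subset_iff.2 hc)

lemma mem_bundle_clusterCore : x ∈ bundle G X D (clusterCore G X D R τ A) a c ↔
    a ∈ A ∧ c ∈ A ∧ τ ≤ (bundle G X D R a c).card ∧ x ∈ bundle G X D R a c := by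
  constructor
  · intro hx
    obtain ⟨hx, hxac⟩ := mem_bundle.1 hx
    have hA := nbrIn_subset_of_mem_clusterCore hx
    obtain ⟨hx, a', -, c', -, hxac', hτ⟩ := Finset.mem_filter.1 hx
    rw [hxac] at hA
    refine ⟨hA (by simp), hA (by simp), ?_, mem_bundle.2 ⟨hx, hxac⟩⟩
    rwa [bundle, ← hxac, hxac', ← bundle]
  · rintro ⟨ha, hc, hτ, hx⟩
    obtain ⟨hx, hxac⟩ := mem_bundle.1 hx
    exact mem_bundle.2 ⟨Finset.mem_filter.2 ⟨hx, a, ha, c, hc, hxac, hτ⟩, hxac⟩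

lemma card_bundle_clusterCore (ha : a ∈ A) (hc : c ∈ A) :
    ((bundle G X D (clusterCore G X D R τ A) a c).card : ℝ) = heavyWeight G X D R τ a c := by
  unfold heavyWeight
  split_ifs with hτ
  · congr 2
    ext x
    simp [mem_bundle_clusterCore, ha, hc, hτ]
  · rw [Nat.cast_eq_zero, Finset.card_eq_zero]
    exact Finset.eq_empty_of_forall_notMem fun x hx => hτ (mem_bundle_clusterCore.1 hx).2.2.1

lemma le_card_bundle_clusterCore (h : (bundle G X D (clusterCore G X D R τ A) a c).Nonempty) :
    τ ≤ (bundle G X D (clusterCore G X D R τ A) a c).card := by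
  obtain ⟨x, hx⟩ := h
  obtain ⟨ha, hc, hτ, -⟩ := mem_bundle_clusterCore.1 hx
  rwa [card_bundle_clusterCore ha hc, heavyWeight, if_pos hτ]

lemma card_nbrIn_le_sum_card_bundle (ha : a ∈ bigIn G X D)
    (hcard : ∀ x ∈ R, (nbrIn G (bigIn G X D) x).card = 2)
    (hB : ∀ x ∈ R, nbrIn G (bigIn G X D) x ⊆ B) :
    (nbrIn G R a).card ≤ ∑ c ∈ B, (bundle G X D R a c).card := by
  refine (Finset.card_le_card fun x hx => ?_).trans Finset.card_biUnion_le
  obtain ⟨hxR, hax⟩ := mem_nbrIn.1 hx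
  have hmem : a ∈ nbrIn G (bigIn G X D) x := mem_nbrIn.2 ⟨ha, hax.symm⟩
  obtain ⟨c, hc⟩ : ∃ c, nbrIn G (bigIn G X D) x = {a, c} := by
    obtain ⟨b, c, -, hbc⟩ := Finset.card_eq_two.1 (hcard x hxR)
    rw [hbc, Finset.mem_insert, Finset.mem_singleton] at hmem
    obtain rfl | rfl := hmem
    · exact ⟨c, hbc⟩
    · exact ⟨b, hbc.trans (Finset.pair_comm _ _)⟩
  exact Finset.mem_biUnion.2 ⟨c, hB x hxR (by simp [hc]), mem_bundle.2 ⟨hxR, hc⟩⟩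

lemma card_nbrIn_sdiff_clusterCore_le (hR : R ⊆ X) (hA : A ⊆ B) (haA : a ∈ A)
    (ha : a ∈ bigIn G X D) (hcard : ∀ x ∈ R, (nbrIn G (bigIn G X D) x).card = 2)
    (hB : ∀ x ∈ R, nbrIn G (bigIn G X D) x ⊆ B) :
    ((nbrIn G (X \ clusterCore G X D R τ A) a).card : ℝ) ≤ (nbrIn G (X \ R) a).card +
      ∑ c ∈ B, ((bundle G X D R a c).card - heavyWeight G X D R τ a c) +
      ∑ c ∈ B \ A, heavyWeight G X D R τ a c := by
  have hsplit : ((nbrIn G (clusterCore G X D R τ A) a).card : ℝ) +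
      (nbrIn G (X \ clusterCore G X D R τ A) a).card =
      (nbrIn G R a).card + (nbrIn G (X \ R) a).card := by
    exact_mod_cast (card_nbrIn_add_card_nbrIn_sdiff (clusterCore_subset.trans hR) a).trans
      (card_nbrIn_add_card_nbrIn_sdiff hR a).symm
  have hall : ((nbrIn G R a).card : ℝ) ≤ ∑ c ∈ B, ((bundle G X D R a c).card : ℝ) := by
    exact_mod_cast card_nbrIn_le_sum_card_bundle ha hcard hB
  have hcore : ∑ c ∈ A, heavyWeight G X D R τ a c ≤
      (nbrIn G (clusterCore G X D R τ A) a).card := by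
    rw [← Finset.sum_congr rfl fun c hc => card_bundle_clusterCore haA hc]
    exact_mod_cast sum_card_bundle_le (fun x hx => hcard x (clusterCore_subset hx)) a A
  rw [Finset.sum_sub_distrib]
  linarith [Finset.sum_sdiff (f := heavyWeight G X D R τ a) hA]

end ClusterCore

/-! ### Existence of reducible configurations -/

section ReducibleConfiguration

open scoped Classical

lemma card_eq_two_of_lt_sum {V : Type*} {s : Finset V} {d : V → ℕ} {Δ : ℕ} (hs : s.card ≤ 2)
    (hd : ∀ w, d w ≤ Δ) (hsum : 3 / 2 * (Δ : ℝ) < ∑ w ∈ s, (d w : ℝ)) :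
    s.card = 2 ∧ ∀ w ∈ s, Δ < 2 * d w := by
  have hsum' : 3 * Δ < 2 * ∑ w ∈ s, d w := by
    have h : (3 : ℝ) * Δ < 2 * ∑ w ∈ s, (d w : ℝ) := by linarith
    exact_mod_cast h
  have hle := Finset.sum_le_card_nsmul s d Δ fun w _ => hd w
  rw [smul_eq_mul] at hle
  have hcard : s.card = 2 := le_antisymm hs (by nlinarith)
  refine ⟨hcard, fun w hw => ?_⟩
  have hrest := Finset.sum_le_card_nsmul (s.erase w) (fun v => d v) Δ fun v _ => hd v
  rw [smul_eq_mul, Finset.card_erase_of_mem hw, hcard] at hrest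
  rw [← Finset.add_sum_erase s d hw] at hsum'
  omega

variable {V : Type u} [Fintype V] {G : SimpleGraph V} {X A B R : Finset V} {C D K Δ : ℕ}
  {δ ε τ : ℝ}

omit [Fintype V] in
lemma card_le_two_mul_of_card_sdiff_le (hR : R ⊆ X) (hB : ∀ x ∈ R, ∃ a ∈ B, G.Adj a x)
    (hdeg : ∀ w, (nbrIn G X w).card ≤ Δ) (hδ : δ ≤ 1 / 2)
    (hbad : ((X \ R).card : ℝ) ≤ δ * X.card) : (X.card : ℝ) ≤ 2 * (Δ * B.card) := by
  have hRcard := (card_le_sum_card_nbrIn hR hB).trans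
    (Finset.sum_le_card_nsmul _ _ Δ fun w _ => hdeg w)
  rw [smul_eq_mul, mul_comm] at hRcard
  have hRcard' : (R.card : ℝ) ≤ Δ * B.card := by exact_mod_cast hRcard
  have hsplit : ((X \ R).card : ℝ) + R.card = X.card := by
    exact_mod_cast Finset.card_sdiff_add_card_eq_card hR
  have hhalf : δ * X.card ≤ 1 / 2 * X.card := mul_le_mul_of_nonneg_right hδ (by positivity)
  linarith

omit [Fintype V] in
lemma sum_card_nbrIn_sdiff_le (hG : MinorSparse C G) (hδ : 0 ≤ δ) (hδΔ : 1 ≤ δ * Δ)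
    (hX : (X.card : ℝ) ≤ 2 * (Δ * B.card)) (hbad : ((X \ R).card : ℝ) ≤ δ * X.card) :
    ∑ a ∈ B, ((nbrIn G (X \ R) a).card : ℝ) ≤ 3 * (C * δ) * Δ * B.card :=
  calc ∑ a ∈ B, ((nbrIn G (X \ R) a).card : ℝ)
      ≤ C * (B.card + (X \ R).card) := by exact_mod_cast hG.sum_card_nbrIn_le (X \ R) B
    _ ≤ C * (δ * Δ * B.card + δ * (2 * (Δ * B.card))) := by
        refine mul_le_mul_of_nonneg_left (add_le_add ?_ ?_) (Nat.cast_nonneg C)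
        · exact le_mul_of_one_le_left (Nat.cast_nonneg _) hδΔ
        · exact hbad.trans (mul_le_mul_of_nonneg_left hX hδ)
    _ = 3 * (C * δ) * Δ * B.card := by ring

lemma exists_dense_bundle_cluster (C : ℕ) (hC : 0 < C) (hε : 0 < ε) :
    ∃ S : ℕ, ∀ Δ : ℕ, 0 < Δ → ∀ (V : Type u) [Fintype V] (G : SimpleGraph V) (X R B : Finset V)
      (D : ℕ), MinorSparse C G → R ⊆ X → B.Nonempty → B ⊆ bigIn G X D →
      (∀ x ∈ R, x ∉ bigIn G X D) → (∀ x ∈ R, (nbrIn G (bigIn G X D) x).card = 2) →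
      (∀ x ∈ R, nbrIn G (bigIn G X D) x ⊆ B) → (∀ w, (nbrIn G X w).card ≤ Δ) →
      ∑ a ∈ B, ((nbrIn G (X \ R) a).card : ℝ) ≤ ε / 12 * Δ * B.card →
      ∃ A ⊆ B, A.Nonempty ∧ A.card ≤ S ∧ ∀ Y ⊆ A,
        ∑ a ∈ Y, ((nbrIn G (X \ clusterCore G X D R (ε / (12 * C) * Δ) A) a).card : ℝ) ≤
          ∑ a ∈ Y, ∑ c ∈ A \ Y,
            ((bundle G X D (clusterCore G X D R (ε / (12 * C) * Δ) A) a c).card : ℝ) +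
          ε / 3 * Δ * Y.card := by
  have hκ : 0 < ε / (12 * C) := by positivity
  obtain ⟨S, hS⟩ := exists_bundle_clusters C hC hκ (η := ε / 12) (by positivity)
  refine ⟨S, fun Δ hΔ V _ G X R B D hG hR hBne hB hRbig hcard hRB hdeg hexc => ?_⟩
  have hlight := sum_bundle_sub_heavyWeight_le hG hB hRbig hcard
    (τ := ε / (12 * C) * Δ) (by positivity)
  have hCκ : C * (ε / (12 * C) * Δ) = ε / 12 * Δ := by field_simp
  rw [hCκ] at hlight
  obtain ⟨J, l, hl, hcut⟩ := hS Δ hΔ V G X R B D hG hB hRbig hcard fun a _ =>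
    (Finset.card_le_card (Finset.filter_subset_filter _ hR)).trans (hdeg a)
  obtain ⟨A, hAB, hAne, hAS, hA⟩ := exists_dense_subcluster (θ := ε / 3 * Δ)
    (μ := heavyWeight G X D R (ε / (12 * C) * Δ))
    (r := fun a => (nbrIn G (X \ R) a).card + ∑ c ∈ B, ((bundle G X D R a c).card -
      heavyWeight G X D R (ε / (12 * C) * Δ) a c)) hl (by
    rw [Finset.sum_add_distrib]
    have : 0 < ε / 12 * Δ * B.card := by
      have := hBne.card_pos
      positivity
    linarith)
  refine ⟨A, hAB, hAne, hAS, fun Y hY => ?_⟩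
  refine (Finset.sum_le_sum fun a ha => card_nbrIn_sdiff_clusterCore_le hR hAB (hY ha)
    (hB (hAB (hY ha))) hcard hRB).trans ((hA Y hY).trans_eq ?_)
  congr 1
  refine Finset.sum_congr rfl fun a ha => Finset.sum_congr rfl fun c hc => ?_
  rw [bundle_comm, card_bundle_clusterCore (Finset.mem_sdiff.1 hc).1 (hY ha)]

lemma isReducibleCluster_clusterCore (hR : ∀ x ∈ R, IsGood G X D K x)
    (hcard : ∀ x ∈ R, (nbrIn G (bigIn G X D) x).card = 2)
    (hA : ∀ Y ⊆ A, ∑ a ∈ Y, ((nbrIn G (X \ clusterCore G X D R τ A) a).card : ℝ) ≤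
      ∑ a ∈ Y, ∑ c ∈ A \ Y, ((bundle G X D (clusterCore G X D R τ A) a c).card : ℝ) +
        δ * Y.card) :
    IsReducibleCluster G X A (clusterCore G X D R τ A) D K τ δ where
  core_subset _ hx := (hR _ (clusterCore_subset hx)).1
  nbrIn_subset := nbrIn_subset_of_mem_clusterCore
  card_nbrIn hx := hcard _ (clusterCore_subset hx)
  card_smallConf_le hx := (hR _ (clusterCore_subset hx)).2.2.1
  le_card_bundle := le_card_bundle_clusterCore
  outer_le_cut := hA _

lemma IsReducibleCluster.core_nonempty (h : IsReducibleCluster G X A R D K τ δ)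
    (hA : A.Nonempty) (hdeg : ∀ a ∈ A, δ < (nbrIn G X a).card) : R.Nonempty := by
  rw [Finset.nonempty_iff_ne_empty]
  rintro rfl
  have hcut := h.outer_le_cut Finset.Subset.rfl
  have hlt := Finset.sum_lt_sum_of_nonempty hA hdeg
  simp only [Finset.sdiff_empty, Finset.sdiff_self, Finset.sum_empty, Finset.sum_const_zero,
    zero_add] at hcut
  rw [Finset.sum_const, nsmul_eq_mul] at hlt
  linarith

lemma exists_isReducibleCluster (C : ℕ) (hC : 0 < C) (hε : 0 < ε) (hε₁ : ε ≤ 1) :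
    ∃ S : ℕ, ∀ Δ : ℕ, 0 < Δ → ∀ (V : Type u) [Fintype V] (G : SimpleGraph V) (X R B : Finset V)
      (D K : ℕ), MinorSparse C G → (∀ x ∈ R, IsGood G X D K x) → B.Nonempty → B ⊆ bigIn G X D →
      (∀ x ∈ R, (nbrIn G (bigIn G X D) x).card = 2) →
      (∀ x ∈ R, nbrIn G (bigIn G X D) x ⊆ B) → (∀ w, (nbrIn G X w).card ≤ Δ) →
      (∀ a ∈ B, Δ < 2 * (nbrIn G X a).card) →
      ∑ a ∈ B, ((nbrIn G (X \ R) a).card : ℝ) ≤ ε / 12 * Δ * B.card →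
      ∃ A R' : Finset V, R'.Nonempty ∧ A.card ≤ S ∧
        IsReducibleCluster G X A R' D K (ε / (12 * C) * Δ) (ε / 3 * Δ) := by
  obtain ⟨S, hS⟩ := exists_dense_bundle_cluster C hC hε
  refine ⟨S, fun Δ hΔ V _ G X R B D K hG hgood hB hBbig hcard hRB hdeg hhalf hexc => ?_⟩
  obtain ⟨A, hAB, hA, hAS, hcut⟩ := hS Δ hΔ V G X R B D hG (fun x hx => (hgood x hx).1) hB hBbig
    (fun x hx => (hgood x hx).2.1) hcard hRB hdeg hexc
  have hred := isReducibleCluster_clusterCore hgood hcard hcut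
  refine ⟨A, _, hred.core_nonempty hA fun a ha => ?_, hAS, hred⟩
  have hlt : (Δ : ℝ) < 2 * (nbrIn G X a).card := by exact_mod_cast hhalf a (hAB ha)
  have hle := mul_le_mul_of_nonneg_right hε₁ (Nat.cast_nonneg (α := ℝ) Δ)
  linarith

theorem exists_good_vertex_or_isReducibleCluster (C : ℕ) (hC : 0 < C) (hε : 0 < ε) (hε₁ : ε ≤ 1) :
    ∃ (D K S N : ℕ) (κ : ℝ), 0 < κ ∧ ∀ Δ : ℕ, N ≤ Δ → ∀ (V : Type u) [Fintype V]
      (G : SimpleGraph V), MinorSparse C G →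
      ¬ IsMinor (completeBipartiteGraph (Fin 3) (Fin 3)) G → ∀ X : Finset V, X.Nonempty →
      (∀ w, (nbrIn G X w).card ≤ Δ) →
      (∃ x, IsGood G X D K x ∧
        ∑ w ∈ nbrIn G (bigIn G X D) x, ((nbrIn G X w).card : ℝ) ≤ 3 / 2 * Δ) ∨
      ∃ A R : Finset V, R.Nonempty ∧ A.card ≤ S ∧
        IsReducibleCluster G X A R D K (κ * Δ) (ε / 3 * Δ) := by
  have hC' : (1 : ℝ) ≤ C := by exact_mod_cast hC
  have hδ : 0 < ε / (36 * C) := by positivity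
  have hδ₂ : ε / (36 * C) ≤ 1 / 2 := by
    rw [div_le_iff₀ (by positivity)]
    linarith
  obtain ⟨D, K, hbad⟩ := exists_card_not_isGood_le C hδ
  obtain ⟨S, hS⟩ := exists_isReducibleCluster C hC hε hε₁
  refine ⟨D, K, S, ⌈1 / (ε / (36 * C))⌉₊ + 1, ε / (12 * C), by positivity,
    fun Δ hΔ V _ G hG hK33 X hX hdeg => or_iff_not_imp_left.2 fun hno => ?_⟩
  push Not at hno
  have hδΔ : 1 ≤ ε / (36 * C) * Δ := by
    have hle := (Nat.le_ceil (1 / (ε / (36 * C)))).trans (Nat.cast_le.2 (by omega : _ ≤ Δ))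
    rwa [div_le_iff₀ hδ, mul_comm] at hle
  set R : Finset V := {x ∈ X | IsGood G X D K x}
  set B : Finset V := {w ∈ bigIn G X D | Δ < 2 * (nbrIn G X w).card}
  have hgood (x : V) (hx : x ∈ R) : IsGood G X D K x := (Finset.mem_filter.1 hx).2
  have htwo (x : V) (hx : x ∈ R) : (nbrIn G (bigIn G X D) x).card = 2 ∧
      ∀ w ∈ nbrIn G (bigIn G X D) x, Δ < 2 * (nbrIn G X w).card :=
    card_eq_two_of_lt_sum (hgood x hx).2.2.2 hdeg (hno x (hgood x hx))
  have hRB (x : V) (hx : x ∈ R) : nbrIn G (bigIn G X D) x ⊆ B := fun w hw =>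
    Finset.mem_filter.2 ⟨(mem_nbrIn.1 hw).1, (htwo x hx).2 w hw⟩
  have hXR : ((X \ R).card : ℝ) ≤ ε / (36 * C) * X.card := by
    rw [← Finset.filter_not]
    exact hbad V G hG hK33 X
  have hXcard := card_le_two_mul_of_card_sdiff_le (Finset.filter_subset _ _) (fun x hx => by
    obtain ⟨a, ha⟩ := Finset.card_pos.1 (two_pos.trans_eq (htwo x hx).1.symm)
    exact ⟨a, hRB x hx ha, (mem_nbrIn.1 ha).2.symm⟩) hdeg hδ₂ hXR
  have hB : B.Nonempty := by
    by_contra hB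
    simp [Finset.not_nonempty_iff_eq_empty.1 hB, hX.ne_empty] at hXcard
  have hexc := sum_card_nbrIn_sdiff_le hG hδ.le hδΔ hXcard hXR
  have h3δ : 3 * (C * (ε / (36 * C))) = ε / 12 := by field_simp; norm_num
  rw [h3δ] at hexc
  exact hS Δ (by omega) V G X R B D K hG hgood hB (Finset.filter_subset _ _)
    (fun x hx => (htwo x hx).1) hRB hdeg (fun a ha => (Finset.mem_filter.1 ha).2) hexc

end ReducibleConfiguration

/-! ### Labelling the whole graph -/

section Labelling

variable {V : Type u} {G : SimpleGraph V} {k : ℕ} {ε : ℝ}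

lemma ValidOn.isLpqLabelling [Fintype V] {f : V → ℤ} (hf : ValidOn G k f Finset.univ) :
    G.IsLpqLabelling k 1 f := by
  have hf' {u v : V} (huv : u ≠ v) : LabelsCompatible G k u v (f u) (f v) :=
    hf (Finset.mem_coe.2 (Finset.mem_univ u)) (Finset.mem_coe.2 (Finset.mem_univ v)) huv
  refine ⟨fun u v huv => (hf' huv.ne).1 huv, fun u v huv _ hw => ?_⟩
  exact Int.one_le_abs (sub_ne_zero.2 ((hf' huv).2 hw))

theorem exists_validOn_threshold (hε : 0 < ε) (hε₁ : ε ≤ 1) (hk : 1 ≤ k) :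
    ∃ N : ℕ, ∀ Δ : ℕ, N ≤ Δ → ∀ (V : Type u) [Fintype V] (G : SimpleGraph V),
      ¬ IsMinor (completeBipartiteGraph (Fin 3) (Fin 3)) G →
      (∀ (X : Finset V) w, (nbrIn G X w).card ≤ Δ) → ∀ L : V → Finset ℤ,
      (∀ v, (3 / 2 + 2 * ε) * Δ - 1 ≤ (L v).card) →
      ∀ X : Finset V, ∃ f : V → ℤ, ValidOn G k f X ∧ ∀ x ∈ X, f x ∈ L x := by
  classical
  obtain ⟨C, hC, hsparse⟩ := exists_minorSparse_of_not_isMinor_K33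
  obtain ⟨D, K, S, N, κ, hκ, hred⟩ := exists_good_vertex_or_isReducibleCluster C hC hε hε₁
  obtain ⟨M, hM⟩ := exists_cluster_threshold hε hε₁ hκ S K k hk
  obtain ⟨T, hT⟩ := exists_nat_ge ((4 * k * K + 3) / ε)
  refine ⟨max N (max M T), fun Δ hΔ V _ G hK33 hdeg L hL X => ?_⟩
  obtain ⟨hN, hMT⟩ := max_le_iff.1 hΔ
  obtain ⟨hMΔ, hTΔ⟩ := max_le_iff.1 hMT
  have hslack : (4 * k * K + 3 : ℝ) ≤ ε * Δ := by
    rw [mul_comm ε, ← div_le_iff₀ hε]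
    exact hT.trans (Nat.cast_le.2 hTΔ)
  have hkK : (0 : ℝ) ≤ k * K := by positivity
  induction X using Finset.strongInduction with
  | H X ih =>
    rcases X.eq_empty_or_nonempty with rfl | hX
    · exact ⟨0, by simp [ValidOn], by simp⟩
    rcases hred Δ hN V G (hsparse V G hK33) hK33 X hX (hdeg X) with
      ⟨x, hx, hsum⟩ | ⟨A, R, hR, hA, hcluster⟩
    · obtain ⟨f, hf, hfL⟩ := ih (X \ {x}) (Finset.sdiff_ssubset
        (Finset.singleton_subset_iff.2 hx.1) (Finset.singleton_nonempty x))
      have hlist : ∑ w ∈ nbrIn G (bigIn G X D) x, ((nbrIn G X w).card : ℝ) + 4 * k * K + 1 <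
          (L x).card := by linarith [hL x]
      exact exists_validOn_extension_singleton hk hx.1 hf hfL hx.2.2.1 (by exact_mod_cast hlist)
    · obtain ⟨f, hf, hfL⟩ := ih (X \ R) (Finset.sdiff_ssubset hcluster.core_subset hR)
      exact hM Δ hMΔ V G X A R D L f hA (fun a _ => hdeg X a) hcluster
        (fun x _ => by linarith [hL x]) hf hfL

end Labelling

lemma card_nbrIn_le_maxDegree {V : Type*} [Fintype V] (G : SimpleGraph V) [DecidableRel G.Adj]
    (X : Finset V) (w : V) : (nbrIn G X w).card ≤ G.maxDegree :=
  (Finset.card_le_card fun x hx => (G.mem_neighborFinset w x).2 (mem_nbrIn.1 hx).2).trans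
    (G.degree_le_maxDegree w)

theorem lambdaListNumber_planar_le_general {ε : ℝ} (hε : 0 < ε) {k : ℕ} (hk : 1 ≤ k) :
    ∃ N : ℕ, ∀ (V : Type u) [Fintype V] (G : SimpleGraph V) [DecidableRel G.Adj],
      ¬ IsMinor (completeBipartiteGraph (Fin 3) (Fin 3)) G → N ≤ G.maxDegree →
      (G.lambdaListNumber k 1 : ℝ) ≤ (3 / 2 + ε) * (G.maxDegree : ℝ) := by
  obtain ⟨N, hN⟩ := exists_validOn_threshold (ε := min (ε / 2) 1)
    (lt_min (by positivity) one_pos) (min_le_right _ _) hk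
  refine ⟨N, fun V _ G _ hK33 hΔ => ?_⟩
  suffices h : G.lambdaListNumber k 1 ≤ ⌊(3 / 2 + ε) * (G.maxDegree : ℝ)⌋₊ from
    (Nat.cast_le.2 h).trans (Nat.floor_le (by positivity))
  refine Nat.sInf_le fun L hL => ?_
  have hsize (v : V) : (3 / 2 + 2 * min (ε / 2) 1) * (G.maxDegree : ℝ) - 1 ≤ (L v).card := by
    have hmin : 2 * min (ε / 2) 1 * (G.maxDegree : ℝ) ≤ ε * G.maxDegree :=
      mul_le_mul_of_nonneg_right (by linarith [min_le_left (ε / 2) 1]) (by positivity)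
    rw [hL v]
    linarith [Nat.sub_one_lt_floor ((3 / 2 + ε) * (G.maxDegree : ℝ))]
  obtain ⟨f, hf, hfL⟩ :=
    hN G.maxDegree hΔ V G hK33 (card_nbrIn_le_maxDegree G) L hsize Finset.univ
  exact ⟨f, hf.isLpqLabelling, fun v => hfL v (Finset.mem_univ v)⟩

/-- For each `ε > 0` and `k ≥ 1` there is `Δ_ε` such that every planar graph with
`Δ(G) ≥ max {Δ_ε, k⁴}` satisfies `λ^l_{k,1}(G) ≤ (3/2 + ε)Δ(G)`. -/
theorem lambdaListNumber_planar_le (ε : ℝ) (hε : 0 < ε) (k : ℕ) (hk : 1 ≤ k) :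
    ∃ Δε : ℕ, ∀ (V : Type) [Fintype V] (G : SimpleGraph V) [DecidableRel G.Adj],
      G.IsPlanar → max Δε (k ^ 4) ≤ G.maxDegree →
      (G.lambdaListNumber k 1 : ℝ) ≤ (3 / 2 + ε) * (G.maxDegree : ℝ) := by
  obtain ⟨N, hN⟩ := lambdaListNumber_planar_le_general hε hk
  exact ⟨N, fun V _ G _ hG hΔ =>
    hN V G (not_isMinor_K33_of_isPlanar hG) ((le_max_left _ _).trans hΔ)⟩
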